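/- arXiv:1305.1379 — 3 statements merged into one kernel-verified Lean document; each statement's English description precedes it below -/
import Mathlib

section
/- Every homeomorphism of the 2-sphere that is homotopic to the identity is isotopic to the identity: let S² be the unit sphere in ℝ³ and let h : S² → S² be a homeomorphism that is homotopic to the identity map (as continuous maps). Then there exists a continuous map F : [0,1] × S² → S² such that F(0,·) = h, F(1,·) = id, and F(t,·) : S² → S² is a homeomorphism for every t ∈ [0,1]. -/
open unitInterval

/-!
Complex analysis replaces surface topology. After a rotation the homeomorphism fixes a point, so
it is a homeomorphism `h` of `ℂ`. By the Riemann mapping theorem and Carathéodory's boundary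
theorem there is a homeomorphism `g` of the closed disc such that `h ∘ g` is univalent on the open
disc. Let `C` be the cone on the boundary values of `g`, and let `G` be `C⁻¹ ∘ g` on the disc and
the identity outside. Then `G` moves points by a bounded amount, hence is isotopic to the identity,
while `h ∘ C ∘ G` is univalent near `0`, hence is isotopic to the identity by zooming in on `0`.
Lifting circle homeomorphisms to `ℝ` shows that `C` is isotopic to the identity or to complex
conjugation. So every homeomorphism of the sphere is isotopic to the identity or to one fixed
reflection, and it remains to see that the reflection is not homotopic to the identity.

If it were, then every homeomorphism of the sphere would be homotopic to the identity, including the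
antipodal map. But a homotopy from the identity to the antipodal map, cut into short steps and
written in quaternions, gives a nowhere vanishing `Q` with `Q x * x = -x * Q x`, that is, a nowhere
vanishing tangent field, against the hairy ball theorem.
-/

namespace SphereIsotopy

open Set Filter Topology Metric

/-! ### The Riemann mapping theorem -/

section Hurwitz

lemma le_norm_of_forall_mem_sphere_le_norm {f : ℂ → ℂ} {c : ℂ} {r m : ℝ} (hr : 0 < r)
    (hm : 0 < m) (hf : DifferentiableOn ℂ f (closedBall c r)) (hf0 : ∀ z ∈ closedBall c r, f z ≠ 0)
    (hmf : ∀ z ∈ sphere c r, m ≤ ‖f z‖) : m ≤ ‖f c‖ := by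
  have hinv : DiffContOnCl ℂ (fun z => (f z)⁻¹) (ball c r) := by
    refine DifferentiableOn.diffContOnCl ?_
    rw [closure_ball c hr.ne']
    exact hf.inv hf0
  have hbound : ∀ z ∈ frontier (ball c r), ‖(f z)⁻¹‖ ≤ m⁻¹ := by
    intro z hz
    rw [frontier_ball c hr.ne'] at hz
    rw [norm_inv]
    exact inv_anti₀ hm (hmf z hz)
  have hc := Complex.norm_le_of_forall_mem_frontier_norm_le isBounded_ball hinv hbound
    (subset_closure (mem_ball_self hr))
  rw [norm_inv] at hc
  exact (inv_le_inv₀ (norm_pos_iff.2 (hf0 c (mem_closedBall_self hr.le))) hm).1 hc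

theorem ne_zero_of_tendstoLocallyUniformlyOn {ι : Type*} {l : Filter ι} [l.NeBot]
    {F : ι → ℂ → ℂ} {f : ℂ → ℂ} {U : Set ℂ} (hU : IsOpen U)
    (hlim : TendstoLocallyUniformlyOn F f l U) (hF : ∀ n, DifferentiableOn ℂ (F n) U)
    (hF0 : ∀ n, ∀ z ∈ U, F n z ≠ 0) {b : ℂ} (hb : b ∈ U) (hf : ¬ ∀ᶠ z in 𝓝 b, f z = 0) :
    f b ≠ 0 := by
  have hfd : DifferentiableOn ℂ f U := hlim.differentiableOn (.of_forall hF) hU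
  have hisolated : ∀ᶠ z in 𝓝 b, z ≠ b → f z ≠ 0 := eventually_nhdsWithin_iff.1 <|
    (hfd.analyticAt (hU.mem_nhds hb)).eventually_eq_zero_or_eventually_ne_zero.resolve_left hf
  obtain ⟨r, hr, hrb⟩ :=
    nhds_basis_closedBall.mem_iff.1 (inter_mem hisolated (hU.mem_nhds hb))
  have hball : closedBall b r ⊆ U := fun z hz => (hrb hz).2
  obtain ⟨z₀, hz₀, hmin⟩ := (isCompact_sphere b r).exists_isMinOn
    (NormedSpace.sphere_nonempty.2 hr.le)
    (hfd.continuousOn.mono (sphere_subset_closedBall.trans hball)).norm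
  have hm : 0 < ‖f z₀‖ :=
    norm_pos_iff.2 ((hrb (sphere_subset_closedBall hz₀)).1 (ne_of_mem_sphere hz₀ hr.ne'))
  have hunif := Metric.tendstoUniformlyOn_iff.1
    ((tendstoLocallyUniformlyOn_iff_forall_isCompact hU).1 hlim _ hball (isCompact_closedBall b r))
    _ (half_pos hm)
  have hlower : ∀ᶠ n in l, ‖f z₀‖ / 2 ≤ ‖F n b‖ := by
    filter_upwards [hunif] with n hn
    refine le_norm_of_forall_mem_sphere_le_norm hr (half_pos hm) ((hF n).mono hball)
      (fun z hz => hF0 n z (hball hz)) fun z hz => ?_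
    have hclose := hn z (sphere_subset_closedBall hz)
    rw [dist_eq_norm] at hclose
    have hfz : ‖f z₀‖ ≤ ‖f z‖ := hmin hz
    linarith [norm_sub_norm_le (f z) (F n z)]
  exact norm_pos_iff.1 ((half_pos hm).trans_le (ge_of_tendsto (hlim.tendsto_at hb).norm hlower))

end Hurwitz

section Montel

theorem exists_tendstoLocallyUniformlyOn_of_mapsTo_ball {ι : Type*} (l : Ultrafilter ι)
    {F : ι → ℂ → ℂ} {U : Set ℂ} (hU : IsOpen U) (hF : ∀ n, DifferentiableOn ℂ (F n) U)
    {C : ℝ} (hm : ∀ n, MapsTo (F n) U (ball 0 C)) :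
    ∃ f : ℂ → ℂ, TendstoLocallyUniformlyOn F f l U := by
  have hpointwise : ∀ z ∈ U, ∃ y, Tendsto (fun n => F n z) l (𝓝 y) := by
    intro z hz
    obtain ⟨y, -, hy⟩ := isCompact_iff_ultrafilter_le_nhds.1 (isCompact_closedBall (0 : ℂ) C)
      (l.map fun n => F n z) <|
      le_principal_iff.2 (mem_map.2 (univ_mem' fun n => ball_subset_closedBall (hm n hz)))
    exact ⟨y, hy⟩
  choose! f hf using hpointwise
  refine ⟨f, Metric.tendstoLocallyUniformlyOn_iff.2 fun ε hε c hc => ?_⟩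
  obtain ⟨R, hR, hRU⟩ := Metric.isOpen_iff.1 hU c hc
  have hlip : ∀ n, ∀ z ∈ ball c R, dist (F n z) (F n c) ≤ 2 * C / R * dist z c := by
    intro n z hz
    refine Complex.dist_le_div_mul_dist_of_mapsTo_ball ((hF n).mono hRU) (fun w hw => ?_) hz
    have hFw := mem_ball_zero_iff.1 (hm n (hRU hw))
    have hFc := mem_ball_zero_iff.1 (hm n hc)
    rw [mem_closedBall, dist_eq_norm]
    linarith [norm_sub_le (F n w) (F n c)]
  have hlipf : ∀ z ∈ ball c R, dist (f z) (f c) ≤ 2 * C / R * dist z c := fun z hz =>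
    le_of_tendsto ((hf z (hRU hz)).dist (hf c hc)) (.of_forall fun n => hlip n z hz)
  have hsmall : ∀ᶠ z in 𝓝 c, 2 * C / R * dist z c < ε / 3 := by
    have : Tendsto (fun z => 2 * C / R * dist z c) (𝓝 c) (𝓝 (2 * C / R * dist c c)) :=
      Continuous.tendsto (by fun_prop) c
    rw [dist_self, mul_zero] at this
    exact this.eventually_lt_const (by positivity)
  refine ⟨_, mem_nhdsWithin_of_mem_nhds (inter_mem hsmall (ball_mem_nhds c hR)), ?_⟩
  filter_upwards [Metric.tendsto_nhds.1 (hf c hc) (ε / 3) (by positivity)] with n hn z hz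
  calc dist (f z) (F n z)
      ≤ dist (f z) (f c) + dist (f c) (F n c) + dist (F n c) (F n z) := dist_triangle4 _ _ _ _
    _ < ε / 3 + ε / 3 + ε / 3 := by
        rw [dist_comm (f c), dist_comm (F n c) (F n z)]
        exact add_lt_add (add_lt_add ((hlipf z hz.2).trans_lt hz.1) hn)
          ((hlip n z hz.2).trans_lt hz.1)
    _ = ε := by ring

end Montel

section Univalent

/-- Univalent (injective holomorphic) functions on an open set `U`. That the derivative does not
vanish is a consequence of injectivity; it is included because it is needed throughout and easy
to check for the functions constructed here. -/
structure IsUnivalentOn (f : ℂ → ℂ) (U : Set ℂ) : Prop where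
  differentiableOn : DifferentiableOn ℂ f U
  injOn : InjOn f U
  deriv_ne_zero : ∀ z ∈ U, deriv f z ≠ 0

variable {f g : ℂ → ℂ} {U V : Set ℂ}

lemma IsUnivalentOn.hasDerivAt (hf : IsUnivalentOn f U) (hU : IsOpen U) {z : ℂ} (hz : z ∈ U) :
    HasDerivAt f (deriv f z) z :=
  (hf.differentiableOn.differentiableAt (hU.mem_nhds hz)).hasDerivAt

lemma isUnivalentOn_of_hasDerivAt {f' : ℂ → ℂ} (hf : ∀ z ∈ U, HasDerivAt f (f' z) z)
    (hf' : ∀ z ∈ U, f' z ≠ 0) (hinj : InjOn f U) : IsUnivalentOn f U where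
  differentiableOn z hz := (hf z hz).differentiableAt.differentiableWithinAt
  injOn := hinj
  deriv_ne_zero z hz := by rw [(hf z hz).deriv]; exact hf' z hz

lemma IsUnivalentOn.congr (hf : IsUnivalentOn f U) (hU : IsOpen U) (hfg : EqOn f g U) :
    IsUnivalentOn g U where
  differentiableOn := hf.differentiableOn.congr hfg.symm
  injOn := hf.injOn.congr hfg
  deriv_ne_zero z hz := by
    rw [← hfg.deriv hU hz]
    exact hf.deriv_ne_zero z hz

lemma IsUnivalentOn.comp (hg : IsUnivalentOn g V) (hV : IsOpen V) (hf : IsUnivalentOn f U)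
    (hU : IsOpen U) (hfUV : MapsTo f U V) : IsUnivalentOn (g ∘ f) U :=
  isUnivalentOn_of_hasDerivAt
    (fun z hz => (hg.hasDerivAt hV (hfUV hz)).comp z (hf.hasDerivAt hU hz))
    (fun z hz => mul_ne_zero (hg.deriv_ne_zero _ (hfUV hz)) (hf.deriv_ne_zero z hz))
    (hg.injOn.comp hf.injOn hfUV)

lemma IsUnivalentOn.exists_openPartialHomeomorph (hf : IsUnivalentOn f U) (hU : IsOpen U) :
    ∃ e : OpenPartialHomeomorph ℂ ℂ, e.source = U ∧ e.target = f '' U ∧ ⇑e = f := by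
  have hopen : IsOpenMap (U.domRestrict f) := by
    refine IsOpenMap.of_nhds_le fun z => ?_
    have hstrict := (hf.differentiableOn.analyticAt (hU.mem_nhds z.2)).hasStrictDerivAt
    have hmap := hstrict.map_nhds_eq (hf.deriv_ne_zero z z.2)
    rw [domRestrict_eq, ← Filter.map_map, map_nhds_subtype_coe_eq_nhds z.2 (hU.mem_nhds z.2), hmap]
    rfl
  exact ⟨.ofContinuousOpenRestrict (hf.injOn.toPartialEquiv f U)
    hf.differentiableOn.continuousOn hopen hU, rfl, rfl, rfl⟩

lemma hasDerivAt_of_sq_eq {s : ℂ → ℂ} {f' z : ℂ} (hs : ContinuousAt s z) (hsz : s z ≠ 0)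
    (hsf : ∀ᶠ y in 𝓝 z, s y ^ 2 = f y) (hf : HasDerivAt f f' z) :
    HasDerivAt s (f' / (2 * s z)) z := by
  rw [hasDerivAt_iff_tendsto_slope] at hf ⊢
  have hsum : Tendsto (fun y => s y + s z) (𝓝[≠] z) (𝓝 (2 * s z)) := by
    rw [two_mul]
    exact (hs.tendsto.mono_left nhdsWithin_le_nhds).add_const _
  have h0 : 2 * s z ≠ 0 := mul_ne_zero two_ne_zero hsz
  refine (hf.div hsum h0).congr' ?_
  filter_upwards [hsum.eventually_ne h0, hsf.filter_mono nhdsWithin_le_nhds] with y hy hfy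
  simp only [Pi.div_apply, slope_def_field]
  rw [← hfy, ← hsf.self_of_nhds, div_eq_iff hy]
  ring

lemma IsUnivalentOn.exists_sq_eq (hf : IsUnivalentOn f U) (hU : IsOpen U)
    (hUc : IsSimplyConnected U) (hf0 : ∀ z ∈ U, f z ≠ 0) :
    ∃ s, IsUnivalentOn s U ∧ ∀ z, s z ^ 2 = f z := by
  obtain ⟨s, hsc, hs⟩ := Complex.exists_continuousOn_pow_eq hUc hU
    hf.differentiableOn.continuousOn (fun ⟨z, hz, h⟩ => hf0 z hz h) two_ne_zero
  have hs0 : ∀ z ∈ U, s z ≠ 0 := fun z hz h => hf0 z hz (by rw [← hs z, h, sq, mul_zero])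
  refine ⟨s, isUnivalentOn_of_hasDerivAt (f' := fun z => deriv f z / (2 * s z))
    (fun z hz => ?_) (fun z hz => ?_) ?_, hs⟩
  · exact hasDerivAt_of_sq_eq (hsc.continuousAt (hU.mem_nhds hz)) (hs0 z hz)
      (.of_forall hs) (hf.hasDerivAt hU hz)
  · exact div_ne_zero (hf.deriv_ne_zero z hz) (mul_ne_zero two_ne_zero (hs0 z hz))
  · intro x hx y hy hxy
    exact hf.injOn hx hy (by rw [← hs x, ← hs y, hxy])

lemma deriv_eq_zero_of_eqOn_const (hU : IsOpen U) {w u : ℂ} (hu : u ∈ U)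
    (hf : ∀ z ∈ U, f z = w) : deriv f u = 0 := by
  have h : f =ᶠ[𝓝 u] fun _ => w := eventually_of_mem (hU.mem_nhds hu) hf
  rw [h.deriv_eq, deriv_const]

lemma isUnivalentOn_of_tendstoLocallyUniformlyOn {ι : Type*} {l : Filter ι} [l.NeBot]
    {F : ι → ℂ → ℂ} (hU : IsOpen U) (hUc : IsPreconnected U)
    (hF : ∀ n, IsUnivalentOn (F n) U) (hlim : TendstoLocallyUniformlyOn F f l U)
    {u : ℂ} (hu : u ∈ U) (hfu : deriv f u ≠ 0) : IsUnivalentOn f U := by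
  have hFd : ∀ n, DifferentiableOn ℂ (F n) U := fun n => (hF n).differentiableOn
  have hfd : DifferentiableOn ℂ f U := hlim.differentiableOn (.of_forall hFd) hU
  have hfa : AnalyticOnNhd ℂ f U := hfd.analyticOnNhd hU
  refine ⟨hfd, fun a ha b hb hab => ?_, fun b hb => ?_⟩
  · by_contra hne
    have hconst : TendstoLocallyUniformlyOn (fun n (_ : ℂ) => F n a) (fun _ => f a) l (U \ {a}) :=
      TendstoUniformlyOn.tendstoLocallyUniformlyOn <| Metric.tendstoUniformlyOn_iff.2 fun ε hε => by
        filter_upwards [Metric.tendsto_nhds.1 (hlim.tendsto_at ha) ε hε] with n hn z _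
        rwa [dist_comm]
    refine ne_zero_of_tendstoLocallyUniformlyOn (hU.sdiff isClosed_singleton)
      ((hlim.mono sdiff_subset).sub hconst) (fun n => ((hFd n).mono sdiff_subset).sub_const _)
      (fun n z hz h => hz.2 ((hF n).injOn hz.1 ha (sub_eq_zero.1 h)))
      (show b ∈ U \ {a} from ⟨hb, Ne.symm hne⟩) (fun h => ?_) (sub_eq_zero.2 hab.symm)
    have hfa_const : f =ᶠ[𝓝 b] fun _ => f a := h.mono fun z => sub_eq_zero.1
    exact hfu (deriv_eq_zero_of_eqOn_const hU hu
      (hfa.eqOn_of_preconnected_of_eventuallyEq analyticOnNhd_const hUc hb hfa_const))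
  · exact ne_zero_of_tendstoLocallyUniformlyOn hU (hlim.deriv (.of_forall hFd) hU)
      (fun n => (hFd n).deriv hU) (fun n => (hF n).deriv_ne_zero) hb fun h =>
      hfu (hfa.deriv.eqOn_zero_of_preconnected_of_eventuallyEq_zero hUc hb h hu)

lemma mapsTo_ball_of_mapsTo_closedBall (hU : IsOpen U) (hUc : IsPreconnected U)
    (hf : DifferentiableOn ℂ f U) {C : ℝ} (hfb : MapsTo f U (closedBall 0 C)) {u : ℂ} (hu : u ∈ U)
    (hfu : deriv f u ≠ 0) : MapsTo f U (ball 0 C) := by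
  rcases (hf.analyticOnNhd hU).is_constant_or_isOpen hUc with ⟨w, hw⟩ | hopen
  · exact absurd (deriv_eq_zero_of_eqOn_const hU hu hw) hfu
  · have hsub : f '' U ⊆ interior (closedBall 0 C) :=
      (hopen U subset_rfl hU).subset_interior_iff.2 hfb.image_subset
    rw [interior_closedBall'] at hsub
    exact mapsTo_iff_image_subset.2 hsub

end Univalent

section Moebius

open ComplexConjugate

/-- The automorphism `z ↦ (z - w) / (1 - w̄ z)` of the unit disc, which moves `w` to `0`. -/
noncomputable def moebius (w z : ℂ) : ℂ := (z - w) / (1 - conj w * z)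

variable {w z : ℂ}

lemma moebius_self (w : ℂ) : moebius w w = 0 := by simp [moebius]

lemma moebius_zero (w : ℂ) : moebius w 0 = -w := by simp [moebius]

lemma one_sub_conj_mul_ne_zero (hw : w ∈ ball (0 : ℂ) 1) (hz : z ∈ ball (0 : ℂ) 1) :
    1 - conj w * z ≠ 0 := by
  rw [mem_ball_zero_iff] at hw hz
  intro h
  have hnorm := congrArg norm (sub_eq_zero.1 h)
  rw [norm_one, norm_mul, RCLike.norm_conj] at hnorm
  nlinarith [norm_nonneg w, norm_nonneg z]

lemma moebius_mapsTo (hw : w ∈ ball (0 : ℂ) 1) : MapsTo (moebius w) (ball 0 1) (ball 0 1) := by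
  intro z hz
  have hden := one_sub_conj_mul_ne_zero hw hz
  have hidentity : ‖1 - conj w * z‖ ^ 2 - ‖z - w‖ ^ 2 = (1 - ‖w‖ ^ 2) * (1 - ‖z‖ ^ 2) := by
    simp only [← Complex.normSq_eq_norm_sq, Complex.normSq_apply]
    simp
    ring
  rw [mem_ball_zero_iff] at hw hz ⊢
  rw [moebius, norm_div, div_lt_one (norm_pos_iff.2 hden),
    ← sq_lt_sq₀ (norm_nonneg _) (norm_nonneg _)]
  have hpos : 0 < (1 - ‖w‖ ^ 2) * (1 - ‖z‖ ^ 2) :=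
    mul_pos (by nlinarith [norm_nonneg w]) (by nlinarith [norm_nonneg z])
  linarith

lemma hasDerivAt_moebius (hw : w ∈ ball (0 : ℂ) 1) (hz : z ∈ ball (0 : ℂ) 1) :
    HasDerivAt (moebius w) ((1 - conj w * w) / (1 - conj w * z) ^ 2) z := by
  have hnum : HasDerivAt (fun z : ℂ => z - w) 1 z := (hasDerivAt_id z).sub_const w
  have hden : HasDerivAt (fun z : ℂ => 1 - conj w * z) (-conj w) z := by
    simpa using ((hasDerivAt_id z).const_mul (conj w)).const_sub 1
  convert! hnum.div hden (one_sub_conj_mul_ne_zero hw hz) using 2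
  ring

lemma isUnivalentOn_moebius (hw : w ∈ ball (0 : ℂ) 1) :
    IsUnivalentOn (moebius w) (ball 0 1) := by
  refine isUnivalentOn_of_hasDerivAt (fun z hz => hasDerivAt_moebius hw hz)
    (fun z hz => div_ne_zero (one_sub_conj_mul_ne_zero hw hw)
      (pow_ne_zero _ (one_sub_conj_mul_ne_zero hw hz))) fun z hz z' hz' h => ?_
  rw [moebius, moebius, div_eq_div_iff (one_sub_conj_mul_ne_zero hw hz)
    (one_sub_conj_mul_ne_zero hw hz')] at h
  refine sub_eq_zero.1 ((mul_eq_zero.1 ?_).resolve_left (one_sub_conj_mul_ne_zero hw hw))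
  linear_combination h

lemma norm_one_sub_conj_mul_self (hw : w ∈ ball (0 : ℂ) 1) : ‖1 - conj w * w‖ = 1 - ‖w‖ ^ 2 := by
  rw [mem_ball_zero_iff] at hw
  rw [mul_comm, Complex.mul_conj, Complex.normSq_eq_norm_sq, ← Complex.ofReal_one,
    ← Complex.ofReal_sub, Complex.norm_real, Real.norm_of_nonneg]
  nlinarith [norm_nonneg w]

lemma norm_deriv_moebius_zero (hw : w ∈ ball (0 : ℂ) 1) :
    ‖deriv (moebius w) 0‖ = 1 - ‖w‖ ^ 2 := by
  rw [(hasDerivAt_moebius hw (mem_ball_self one_pos)).deriv]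
  simp [norm_one_sub_conj_mul_self hw]

lemma norm_deriv_moebius_self (hw : w ∈ ball (0 : ℂ) 1) :
    ‖deriv (moebius w) w‖ = (1 - ‖w‖ ^ 2)⁻¹ := by
  rw [(hasDerivAt_moebius hw hw).deriv, sq, div_mul_cancel_left₀ (one_sub_conj_mul_ne_zero hw hw),
    norm_inv, norm_one_sub_conj_mul_self hw]

end Moebius

section RiemannMapping

/-- The competitors in the extremal problem behind the Riemann mapping theorem: univalent functions
from `U` into the unit disc that map `u` to `0`. -/
structure IsDiscEmbedding (U : Set ℂ) (u : ℂ) (f : ℂ → ℂ) : Prop where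
  isUnivalentOn : IsUnivalentOn f U
  mapsTo : MapsTo f U (ball 0 1)
  map_base : f u = 0

variable {U : Set ℂ} {u : ℂ} {f : ℂ → ℂ}

-- Koebe's square root trick.
lemma IsDiscEmbedding.exists_norm_deriv_lt (hU : IsOpen U) (hUc : IsSimplyConnected U) (hu : u ∈ U)
    (hf : IsDiscEmbedding U u f) {w : ℂ} (hw : w ∈ ball (0 : ℂ) 1) (hwf : w ∉ f '' U) :
    ∃ g, IsDiscEmbedding U u g ∧ ‖deriv f u‖ < ‖deriv g u‖ := by
  have hmob := isUnivalentOn_moebius hw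
  have hwf_maps : MapsTo (moebius w ∘ f) U (ball 0 1) := (moebius_mapsTo hw).comp hf.mapsTo
  have hwf_univ := hmob.comp isOpen_ball hf.isUnivalentOn hU hf.mapsTo
  obtain ⟨s, hs, hsq⟩ := hwf_univ.exists_sq_eq hU hUc fun z hz h =>
    hwf ⟨z, hz, hmob.injOn (hf.mapsTo hz) hw (h.trans (moebius_self w).symm)⟩
  have hs_maps : MapsTo s U (ball 0 1) := fun z hz => by
    have h := hwf_maps hz
    rw [← hsq z, mem_ball_zero_iff, norm_pow] at h
    exact mem_ball_zero_iff.2 (lt_of_pow_lt_pow_left₀ 2 zero_le_one (by rwa [one_pow]))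
  have hβ := hs_maps hu
  have hβw : s u ^ 2 = -w := by
    rw [hsq u, Function.comp_apply, hf.map_base, moebius_zero]
  refine ⟨moebius (s u) ∘ s, ⟨(isUnivalentOn_moebius hβ).comp isOpen_ball hs hU hs_maps,
    (moebius_mapsTo hβ).comp hs_maps, moebius_self _⟩, ?_⟩
  have hderiv_wf : ‖deriv (moebius w ∘ f) u‖ = (1 - ‖w‖ ^ 2) * ‖deriv f u‖ := by
    rw [((hmob.hasDerivAt isOpen_ball (hf.mapsTo hu)).comp u
      (hf.isUnivalentOn.hasDerivAt hU hu)).deriv, hf.map_base, norm_mul,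
      norm_deriv_moebius_zero hw]
  have hderiv_sq : ‖deriv (moebius w ∘ f) u‖ = 2 * ‖s u‖ * ‖deriv s u‖ := by
    have h := ((hs.hasDerivAt hU hu).pow 2).deriv
    rw [show s ^ 2 = moebius w ∘ f from funext hsq] at h
    rw [h]
    simp
  have hderiv_g : ‖deriv (moebius (s u) ∘ s) u‖ = (1 - ‖s u‖ ^ 2)⁻¹ * ‖deriv s u‖ := by
    rw [(((isUnivalentOn_moebius hβ).hasDerivAt isOpen_ball hβ).comp u
      (hs.hasDerivAt hU hu)).deriv, norm_mul, norm_deriv_moebius_self hβ]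
  have hwβ : ‖w‖ = ‖s u‖ ^ 2 := by rw [← norm_pow, hβw, norm_neg]
  have hβ1 : ‖s u‖ < 1 := mem_ball_zero_iff.1 hβ
  have hpos : 0 < 1 - ‖s u‖ ^ 2 := by nlinarith [norm_nonneg (s u)]
  have hs' : 0 < ‖deriv s u‖ := norm_pos_iff.2 (hs.deriv_ne_zero u hu)
  rw [hderiv_g, inv_mul_eq_div, lt_div_iff₀ hpos]
  have hrel : ‖deriv f u‖ * (1 - ‖s u‖ ^ 2) * (1 + ‖s u‖ ^ 2) = 2 * ‖s u‖ * ‖deriv s u‖ := by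
    rw [← hderiv_sq, hderiv_wf, hwβ]
    ring
  nlinarith [mul_pos (pow_pos (sub_pos.2 hβ1) 2) hs']

theorem IsDiscEmbedding.exists_isMaxOn_norm_deriv (hU : IsOpen U) (hUc : IsPreconnected U)
    (hu : u ∈ U) {f₀ : ℂ → ℂ} (hf₀ : IsDiscEmbedding U u f₀) :
    ∃ f, IsDiscEmbedding U u f ∧ ∀ g, IsDiscEmbedding U u g → ‖deriv g u‖ ≤ ‖deriv f u‖ := by
  set S : Set ℝ := (fun f : ℂ → ℂ => ‖deriv f u‖) '' {f | IsDiscEmbedding U u f}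
  have hbdd : BddAbove S := by
    obtain ⟨R, hR, hRU⟩ := Metric.isOpen_iff.1 hU u hu
    refine ⟨1 / R, ?_⟩
    rintro _ ⟨f, hf, rfl⟩
    refine Complex.norm_deriv_le_div_of_mapsTo_ball
      (hf.isUnivalentOn.differentiableOn.mono hRU) ?_ hR
    rw [hf.map_base]
    exact fun z hz => ball_subset_closedBall (hf.mapsTo (hRU hz))
  obtain ⟨v, -, hv, hvS⟩ := exists_seq_tendsto_sSup (S := S) ⟨_, f₀, hf₀, rfl⟩ hbdd
  choose F hF hFv using hvS
  have hFd : ∀ n, DifferentiableOn ℂ (F n) U := fun n => (hF n).isUnivalentOn.differentiableOn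
  obtain ⟨f, hf⟩ := exists_tendstoLocallyUniformlyOn_of_mapsTo_ball (hyperfilter ℕ) hU hFd
    fun n => (hF n).mapsTo
  have hfu_norm : ‖deriv f u‖ = sSup S := by
    refine tendsto_nhds_unique ((hf.deriv (.of_forall hFd) hU).tendsto_at hu).norm
      ((hv.mono_left Nat.hyperfilter_le_atTop).congr fun n => (hFv n).symm)
  have hfu : deriv f u ≠ 0 := by
    rw [← norm_pos_iff, hfu_norm]
    exact (norm_pos_iff.2 (hf₀.isUnivalentOn.deriv_ne_zero u hu)).trans_le
      (le_csSup hbdd ⟨f₀, hf₀, rfl⟩)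
  have hf_univ := isUnivalentOn_of_tendstoLocallyUniformlyOn hU hUc
    (fun n => (hF n).isUnivalentOn) hf hu hfu
  refine ⟨f, ⟨hf_univ, ?_, ?_⟩, fun g hg => ?_⟩
  · refine mapsTo_ball_of_mapsTo_closedBall hU hUc hf_univ.differentiableOn (fun z hz => ?_) hu hfu
    exact isClosed_closedBall.mem_of_tendsto (hf.tendsto_at hz)
      (.of_forall fun n => ball_subset_closedBall ((hF n).mapsTo hz))
  · exact tendsto_nhds_unique (hf.tendsto_at hu)
      (tendsto_const_nhds.congr fun n => (hF n).map_base.symm)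
  · rw [hfu_norm]
    exact le_csSup hbdd ⟨g, hg, rfl⟩

-- A branch `s` of `√(z - a)` with `a ∉ U` never takes two opposite values, so its image omits
-- the disc opposite to one that it contains.
lemma exists_isUnivalentOn_forall_le_norm_add (hU : IsOpen U) (hUc : IsSimplyConnected U)
    (hne : U ≠ univ) (hu : u ∈ U) :
    ∃ s, IsUnivalentOn s U ∧ ∃ r > 0, ∀ z ∈ U, r ≤ ‖s z + s u‖ := by
  obtain ⟨a, ha⟩ := (ne_univ_iff_exists_notMem U).1 hne
  have hsub : IsUnivalentOn (fun z => z - a) U := isUnivalentOn_of_hasDerivAt (f' := fun _ => 1)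
    (fun z _ => (hasDerivAt_id z).sub_const a) (fun _ _ => one_ne_zero) sub_left_injective.injOn
  obtain ⟨s, hs, hsq⟩ := hsub.exists_sq_eq hU hUc fun z hz h => ha (sub_eq_zero.1 h ▸ hz)
  obtain ⟨e, -, he, -⟩ := hs.exists_openPartialHomeomorph hU
  obtain ⟨r, hr, hrs⟩ := Metric.isOpen_iff.1 (he ▸ e.open_target) (s u) (mem_image_of_mem s hu)
  refine ⟨s, hs, r, hr, fun z hz => ?_⟩
  by_contra! hlt
  obtain ⟨y, -, hyz⟩ : -s z ∈ s '' U := hrs <| by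
    rwa [mem_ball, dist_eq_norm, ← norm_neg, neg_sub, sub_neg_eq_add, add_comm]
  have hyz_eq : y = z := by
    have h := hsq y
    rw [hyz, neg_sq, hsq z] at h
    exact (sub_left_injective h).symm
  have hsz : s z = 0 := self_eq_neg.1 (hyz_eq ▸ hyz)
  have hza := hsq z
  rw [hsz, zero_pow two_ne_zero] at hza
  exact ha (sub_eq_zero.1 hza.symm ▸ hz)

lemma exists_isDiscEmbedding (hU : IsOpen U) (hUc : IsSimplyConnected U) (hne : U ≠ univ)
    (hu : u ∈ U) : ∃ f, IsDiscEmbedding U u f := by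
  obtain ⟨s, hs, r, hr, hrs⟩ := exists_isUnivalentOn_forall_le_norm_add hU hUc hne hu
  have hden : ∀ z ∈ U, s z + s u ≠ 0 := fun z hz => norm_pos_iff.1 (hr.trans_le (hrs z hz))
  have hr2 : ((r / 2 : ℝ) : ℂ) ≠ 0 := Complex.ofReal_ne_zero.2 (half_pos hr).ne'
  set f : ℂ → ℂ := fun z => ((r / 2 : ℝ) : ℂ) * (s z + s u)⁻¹
  have hf_univ : IsUnivalentOn f U := by
    refine isUnivalentOn_of_hasDerivAt
      (fun z hz => (((hs.hasDerivAt hU hz).add_const _).inv (hden z hz)).const_mul _)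
      (fun z hz => mul_ne_zero hr2 (div_ne_zero (neg_ne_zero.2 (hs.deriv_ne_zero z hz))
        (pow_ne_zero 2 (hden z hz)))) fun x hx y hy hxy => hs.injOn hx hy ?_
    exact add_right_cancel (inv_injective (mul_left_cancel₀ hr2 hxy))
  have hf_maps : MapsTo f U (ball 0 1) := by
    intro z hz
    rw [mem_ball_zero_iff, norm_mul, norm_inv, Complex.norm_real,
      Real.norm_of_nonneg (by positivity), ← div_eq_mul_inv, div_lt_one (hr.trans_le (hrs z hz))]
    exact (half_lt_self hr).trans_le (hrs z hz)
  exact ⟨moebius (f u) ∘ f,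
    (isUnivalentOn_moebius (hf_maps hu)).comp isOpen_ball hf_univ hU hf_maps,
    (moebius_mapsTo (hf_maps hu)).comp hf_maps, moebius_self _⟩

theorem riemann_mapping (hU : IsOpen U) (hUc : IsSimplyConnected U) (hne : U ≠ univ) :
    ∃ φ : OpenPartialHomeomorph ℂ ℂ, φ.source = ball 0 1 ∧ φ.target = U ∧
      IsUnivalentOn φ (ball 0 1) := by
  obtain ⟨u, hu⟩ := hUc.nonempty
  obtain ⟨f₀, hf₀⟩ := exists_isDiscEmbedding hU hUc hne hu
  obtain ⟨f, hf, hmax⟩ := hf₀.exists_isMaxOn_norm_deriv hU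
    hUc.isPathConnected.isConnected.isPreconnected hu
  have hsurj : f '' U = ball 0 1 := by
    refine hf.mapsTo.image_subset.antisymm fun w hw => ?_
    by_contra hwf
    obtain ⟨g, hg, hlt⟩ := hf.exists_norm_deriv_lt hU hUc hu hw hwf
    exact (hmax g hg).not_gt hlt
  obtain ⟨e, hsource, htarget, hef⟩ := hf.isUnivalentOn.exists_openPartialHomeomorph hU
  rw [hsurj] at htarget
  refine ⟨e.symm, htarget, hsource, isUnivalentOn_of_hasDerivAt
    (f' := fun z => (deriv f (e.symm z))⁻¹) (fun z hz => ?_) (fun z hz => ?_) ?_⟩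
  · have hz' : e.symm z ∈ U := hsource ▸ e.map_target (htarget ▸ hz)
    exact e.hasDerivAt_symm (htarget ▸ hz) (hf.isUnivalentOn.deriv_ne_zero _ hz')
      (hef ▸ hf.isUnivalentOn.hasDerivAt hU hz')
  · exact inv_ne_zero (hf.isUnivalentOn.deriv_ne_zero _ (hsource ▸ e.map_target (htarget ▸ hz)))
  · exact htarget ▸ e.symm.injOn

end RiemannMapping

/-! ### Short crosscuts of the disc -/

section LengthArea

open MeasureTheory
open scoped ENNReal

variable {f : ℂ → ℂ}

lemma lintegral_enorm_deriv_sq {U : Set ℂ} (hU : IsOpen U) (hf : DifferentiableOn ℂ f U)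
    (hinj : InjOn f U) : ∫⁻ z in U, ‖deriv f z‖ₑ ^ 2 = volume (f '' U) := by
  have hderiv : ∀ z ∈ U, HasFDerivWithinAt f
      ((ContinuousLinearMap.mul ℂ ℂ (deriv f z)).restrictScalars ℝ) U z := fun z hz ↦ by
    have hz' := ((hf z hz).differentiableAt (hU.mem_nhds hz)).hasDerivAt.hasFDerivAt
    convert! (hz'.restrictScalars ℝ).hasFDerivWithinAt (s := U) using 1
    ext
    simp [mul_comm]
  rw [← lintegral_abs_det_fderiv_eq_addHaar_image volume hU.measurableSet hderiv hinj]
  refine lintegral_congr fun z ↦ ?_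
  have hdet : ((ContinuousLinearMap.mul ℂ ℂ (deriv f z)).restrictScalars ℝ).det =
      Complex.normSq (deriv f z) := by
    rw [← Algebra.norm_complex_apply, Algebra.norm_apply]
    rfl
  rw [hdet, abs_of_nonneg (Complex.normSq_nonneg _), Complex.normSq_eq_norm_sq,
    ENNReal.ofReal_pow (norm_nonneg _), ofReal_norm]

lemma setLIntegral_preimage_im {u : ℂ → ℝ≥0∞} (hu : Measurable u) (T : Set ℝ) :
    ∫⁻ z in Complex.im ⁻¹' T, u z = ∫⁻ x : ℝ, ∫⁻ y in T, u (x + y * Complex.I) := by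
  rw [← Complex.volume_preserving_equiv_real_prod.symm.setLIntegral_comp_preimage_emb
    (MeasurableEquiv.measurableEmbedding _)]
  have hpre : Complex.measurableEquivRealProd.symm ⁻¹' (Complex.im ⁻¹' T) = univ ×ˢ T := by
    ext
    simp
  rw [hpre, Measure.volume_eq_prod, setLIntegral_prod _ (by fun_prop), Measure.restrict_univ]
  refine lintegral_congr fun x ↦ lintegral_congr fun y ↦ congrArg u ?_
  apply Complex.ext <;> simp

lemma exists_lt_le_of_lintegral_ne_top {u : ℝ → ℝ≥0∞} (hu : ∫⁻ x, u x ≠ ∞) (X : ℝ) {ε : ℝ≥0∞}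
    (hε : ε ≠ 0) : ∃ x < X, u x ≤ ε := by
  by_contra! hlt
  refine hu (top_le_iff.1 ?_)
  calc ∞ = ∫⁻ _ in Iio X, ε := by simp [ENNReal.mul_top hε]
    _ ≤ ∫⁻ x in Iio X, u x := setLIntegral_mono' measurableSet_Iio fun x hx ↦ (hlt x hx).le
    _ ≤ ∫⁻ x, u x := setLIntegral_le_lintegral _ _

lemma sq_lintegral_le_measure_univ_mul {α : Type*} [MeasurableSpace α] (μ : Measure α)
    {u : α → ℝ≥0∞} (hu : AEMeasurable u μ) : (∫⁻ x, u x ∂μ) ^ 2 ≤ μ univ * ∫⁻ x, u x ^ 2 ∂μ := by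
  have h := ENNReal.lintegral_mul_le_Lp_mul_Lq μ Real.HolderConjugate.two_two
    (aemeasurable_const (b := 1)) hu
  simp only [Pi.mul_apply, one_mul, lintegral_const, ENNReal.rpow_two, one_pow] at h
  refine (pow_le_pow_left' h 2).trans_eq ?_
  rw [mul_pow]
  simp only [← ENNReal.rpow_two, ← ENNReal.rpow_mul]
  norm_num

lemma edist_vertical_le_setLIntegral_enorm_deriv {a b x : ℝ}
    (hf : DifferentiableOn ℂ f (Complex.im ⁻¹' Ioo a b)) {s t : ℝ} (hs : s ∈ Ioo a b)
    (ht : t ∈ Ioo a b) : edist (f (x + s * Complex.I)) (f (x + t * Complex.I)) ≤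
      ∫⁻ y in Ioo a b, ‖deriv f (x + y * Complex.I)‖ₑ := by
  wlog hst : s ≤ t generalizing s t
  · rw [edist_comm]
    exact this ht hs (le_of_not_ge hst)
  have hsub : Icc s t ⊆ Ioo a b := fun y hy ↦ ⟨hs.1.trans_le hy.1, hy.2.trans_lt ht.2⟩
  have hopen : IsOpen (Complex.im ⁻¹' Ioo a b) := isOpen_Ioo.preimage Complex.continuous_im
  have hline : ContDiff ℝ 1 fun y : ℝ ↦ (x + y * Complex.I : ℂ) :=
    contDiff_const.add (Complex.ofRealCLM.contDiff.mul contDiff_const)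
  have hmaps : MapsTo (fun y : ℝ ↦ (x + y * Complex.I : ℂ)) (Icc s t) (Complex.im ⁻¹' Ioo a b) :=
    fun y hy ↦ by simpa using hsub hy
  have hderiv : ∀ y ∈ Icc s t, ‖deriv (fun y : ℝ ↦ f (x + y * Complex.I)) y‖ₑ =
      ‖deriv f (x + y * Complex.I)‖ₑ := fun y hy ↦ by
    have hy' : HasDerivAt (fun y : ℝ ↦ (x + y * Complex.I : ℂ)) Complex.I y := by
      simpa using ((Complex.ofRealCLM.hasDerivAt (x := y)).mul_const Complex.I).const_add (x : ℂ)
    have hcomp := (hf.differentiableAt (hopen.mem_nhds (hmaps hy))).hasDerivAt.comp y hy'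
    rw [show (fun y : ℝ ↦ f (x + y * Complex.I)) = f ∘ fun y : ℝ ↦ (x + y * Complex.I : ℂ) from rfl,
      hcomp.deriv, enorm_mul, ← ofReal_norm Complex.I]
    simp
  rw [edist_comm, edist_eq_enorm_sub]
  calc _ ≤ ∫⁻ y in Icc s t, ‖deriv (fun y : ℝ ↦ f (x + y * Complex.I)) y‖ₑ :=
        enorm_sub_le_lintegral_deriv_of_contDiffOn_Icc
          (((hf.contDiffOn hopen).restrict_scalars ℝ).comp hline.contDiffOn hmaps) hst
    _ = ∫⁻ y in Icc s t, ‖deriv f (x + y * Complex.I)‖ₑ :=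
        setLIntegral_congr_fun measurableSet_Icc hderiv
    _ ≤ _ := lintegral_mono_set hsub

-- The image has finite area, and Cauchy-Schwarz turns area into squared length.
theorem exists_edist_vertical_le {a b : ℝ} (hf : DifferentiableOn ℂ f (Complex.im ⁻¹' Ioo a b))
    (hinj : InjOn f (Complex.im ⁻¹' Ioo a b))
    (hbdd : Bornology.IsBounded (f '' (Complex.im ⁻¹' Ioo a b))) (X : ℝ) {ε : ℝ≥0∞} (hε : ε ≠ 0) :
    ∃ x < X, ∀ s ∈ Ioo a b, ∀ t ∈ Ioo a b,
      edist (f (x + s * Complex.I)) (f (x + t * Complex.I)) ≤ ε := by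
  have := measurable_deriv f
  have harea : ∫⁻ x : ℝ, ∫⁻ y in Ioo a b, ‖deriv f (x + y * Complex.I)‖ₑ ^ 2 ≠ ∞ := by
    rw [← setLIntegral_preimage_im (u := fun z ↦ ‖deriv f z‖ₑ ^ 2) (by fun_prop),
      lintegral_enorm_deriv_sq (isOpen_Ioo.preimage Complex.continuous_im) hf hinj]
    exact hbdd.measure_lt_top.ne
  obtain ⟨x, hx, hle⟩ := exists_lt_le_of_lintegral_ne_top
    (u := fun x : ℝ ↦ volume (Ioo a b) * ∫⁻ y in Ioo a b, ‖deriv f (x + y * Complex.I)‖ₑ ^ 2)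
    (by rw [lintegral_const_mul' _ _ measure_Ioo_lt_top.ne]
        exact ENNReal.mul_ne_top measure_Ioo_lt_top.ne harea) X (pow_ne_zero 2 hε)
  refine ⟨x, hx, fun s hs t ht ↦ (edist_vertical_le_setLIntegral_enorm_deriv hf hs ht).trans ?_⟩
  refine (ENNReal.pow_le_pow_left_iff two_ne_zero).1
    ((sq_lintegral_le_measure_univ_mul _ ?_).trans ?_)
  · fun_prop
  · rwa [Measure.restrict_apply_univ]

end LengthArea

section Crosscut

/-- The points of the open unit disc on the Apollonius circle `‖z - ζ‖ = ρ ‖z + ζ‖`. For `‖ζ‖ = 1`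
and small `ρ` this is a circular arc cutting off a small neighbourhood of the boundary point `ζ`. -/
def crosscut (ζ : ℂ) (ρ : ℝ) : Set ℂ := {z ∈ ball 0 1 | ‖z - ζ‖ = ρ * ‖z + ζ‖}

/-- The conformal map of the upper half plane onto the unit disc taking `0` to `ζ`, where `‖ζ‖ = 1`.
It takes the half circle of radius `ρ` around `0` to `crosscut ζ ρ`. -/
noncomputable def discOfHalfPlane (ζ v : ℂ) : ℂ := ζ * (1 + Complex.I * v) / (1 - Complex.I * v)

variable {ζ v : ℂ}

lemma one_sub_I_mul_ne_zero (hv : 0 < v.im) : 1 - Complex.I * v ≠ 0 := fun h ↦ by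
  have hre := congrArg Complex.re h
  simp at hre
  linarith

lemma discOfHalfPlane_mem_ball (hζ : ‖ζ‖ = 1) (hv : 0 < v.im) :
    discOfHalfPlane ζ v ∈ ball 0 1 := by
  rw [mem_ball_zero_iff, discOfHalfPlane, norm_div, norm_mul, hζ, one_mul,
    div_lt_one (norm_pos_iff.2 (one_sub_I_mul_ne_zero hv)),
    ← sq_lt_sq₀ (norm_nonneg _) (norm_nonneg _), ← Complex.normSq_eq_norm_sq,
    ← Complex.normSq_eq_norm_sq, Complex.normSq_apply, Complex.normSq_apply]
  simp
  nlinarith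

lemma differentiableAt_discOfHalfPlane (hv : 0 < v.im) :
    DifferentiableAt ℂ (discOfHalfPlane ζ) v :=
  DifferentiableAt.div (by fun_prop) (by fun_prop) (one_sub_I_mul_ne_zero hv)

lemma injOn_discOfHalfPlane (hζ : ζ ≠ 0) : InjOn (discOfHalfPlane ζ) {v | 0 < v.im} := by
  intro v hv w hw h
  rw [discOfHalfPlane, discOfHalfPlane,
    div_eq_div_iff (one_sub_I_mul_ne_zero hv) (one_sub_I_mul_ne_zero hw)] at h
  have hmul : 2 * ζ * Complex.I * (v - w) = 0 := by linear_combination h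
  simpa [hζ, sub_eq_zero] using hmul

lemma exists_discOfHalfPlane_eq (hζ : ‖ζ‖ = 1) {ρ : ℝ} {z : ℂ} (hz : z ∈ crosscut ζ ρ) :
    ∃ v : ℂ, 0 < v.im ∧ ‖v‖ = ρ ∧ discOfHalfPlane ζ v = z := by
  obtain ⟨hz1, hzρ⟩ := hz
  rw [mem_ball_zero_iff] at hz1
  have hζ0 : ζ ≠ 0 := norm_ne_zero_iff.1 (by simp [hζ])
  have hsum : z + ζ ≠ 0 := fun h ↦ by
    rw [eq_neg_of_add_eq_zero_left h, norm_neg, hζ] at hz1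
    exact lt_irrefl _ hz1
  refine ⟨-Complex.I * ((z - ζ) / (z + ζ)), ?_, ?_, ?_⟩
  · have hre : ((z - ζ) / (z + ζ)).re < 0 := by
      rw [Complex.div_re, ← add_div]
      refine div_neg_of_neg_of_pos ?_ (Complex.normSq_pos.2 hsum)
      have hz2 : Complex.normSq z < 1 := by
        rw [Complex.normSq_eq_norm_sq]
        nlinarith [norm_nonneg z]
      have hζ2 : Complex.normSq ζ = 1 := by rw [Complex.normSq_eq_norm_sq, hζ, one_pow]
      rw [Complex.normSq_apply] at hz2 hζ2
      simp
      nlinarith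
    simpa using hre
  · rw [norm_mul, norm_neg, Complex.norm_I, one_mul, norm_div, hzρ,
      mul_div_cancel_right₀ _ (norm_ne_zero_iff.2 hsum)]
  · have hI : Complex.I * (-Complex.I * ((z - ζ) / (z + ζ))) = (z - ζ) / (z + ζ) := by
      rw [← mul_assoc]
      simp
    have hnum : 1 + (z - ζ) / (z + ζ) = 2 * z / (z + ζ) := by field_simp; ring
    have hden : 1 - (z - ζ) / (z + ζ) = 2 * ζ / (z + ζ) := by field_simp; ring
    rw [discOfHalfPlane, hI, hnum, hden]
    field_simp

lemma exp_im_pos {w : ℂ} (hw : w.im ∈ Ioo 0 Real.pi) : 0 < (Complex.exp w).im := by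
  rw [Complex.exp_im]
  exact mul_pos (Real.exp_pos _) (Real.sin_pos_of_mem_Ioo hw)

lemma log_im_mem_Ioo (hv : 0 < v.im) : (Complex.log v).im ∈ Ioo 0 Real.pi := by
  rw [Complex.log_im]
  refine ⟨(Complex.arg_nonneg_iff.2 hv.le).lt_of_ne' fun h ↦ ?_,
    (Complex.arg_le_pi v).lt_of_ne fun h ↦ ?_⟩
  · exact hv.ne' (Complex.arg_eq_zero_iff.1 h).2
  · exact hv.ne' (Complex.arg_eq_pi_iff.1 h).2

lemma injOn_exp_im_Ioo : InjOn Complex.exp (Complex.im ⁻¹' Ioo 0 Real.pi) := fun _ hw _ hw' h ↦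
  Complex.exp_inj_of_neg_pi_lt_of_le_pi ((neg_lt_zero.2 Real.pi_pos).trans hw.1) hw.2.le
    ((neg_lt_zero.2 Real.pi_pos).trans hw'.1) hw'.2.le h

/-- Arbitrarily small crosscuts at the boundary point `ζ` of the unit disc have arbitrarily short
images under `f`. -/
def HasShortCrosscuts (f : ℂ → ℂ) (ζ : ℂ) : Prop :=
  ∀ ε > 0, ∀ r > 0, ∃ ρ ∈ Ioo 0 r, ∀ z ∈ crosscut ζ ρ, ∀ z' ∈ crosscut ζ ρ, dist (f z) (f z') ≤ ε

theorem hasShortCrosscuts_of_injOn {φ : ℂ → ℂ} (hd : DifferentiableOn ℂ φ (ball 0 1))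
    (hinj : InjOn φ (ball 0 1)) (hbdd : Bornology.IsBounded (φ '' ball 0 1)) (hζ : ‖ζ‖ = 1) :
    HasShortCrosscuts φ ζ := by
  intro ε hε r hr
  let M : ℂ → ℂ := discOfHalfPlane ζ ∘ Complex.exp
  have hM : MapsTo M (Complex.im ⁻¹' Ioo 0 Real.pi) (ball 0 1) := fun w hw ↦
    discOfHalfPlane_mem_ball hζ (exp_im_pos hw)
  have hMd : DifferentiableOn ℂ M (Complex.im ⁻¹' Ioo 0 Real.pi) := fun w hw ↦
    ((differentiableAt_discOfHalfPlane (exp_im_pos hw)).comp w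
      Complex.differentiableAt_exp).differentiableWithinAt
  have hMi : InjOn M (Complex.im ⁻¹' Ioo 0 Real.pi) :=
    (injOn_discOfHalfPlane (norm_ne_zero_iff.1 (by simp [hζ]))).comp injOn_exp_im_Ioo
      fun w hw ↦ exp_im_pos hw
  obtain ⟨x, hx, hle⟩ := exists_edist_vertical_le (hd.comp hMd hM) (hinj.comp hMi hM)
    (hbdd.subset (by rw [image_comp]; exact image_mono hM.image_subset)) (Real.log r)
    (ENNReal.ofReal_pos.2 hε).ne'
  have hpar : ∀ z ∈ crosscut ζ (Real.exp x), ∃ θ ∈ Ioo 0 Real.pi, M (x + θ * Complex.I) = z := by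
    intro z hz
    obtain ⟨v, hv, hvx, hvz⟩ := exists_discOfHalfPlane_eq hζ hz
    have hv0 : v ≠ 0 := norm_ne_zero_iff.1 (hvx.trans_ne (Real.exp_ne_zero x))
    have hlog : (x + (Complex.log v).im * Complex.I : ℂ) = Complex.log v := by
      rw [← Real.log_exp x, ← hvx, ← Complex.log_re, Complex.re_add_im]
    exact ⟨_, log_im_mem_Ioo hv, by
      simp only [M, hlog, Function.comp_apply, Complex.exp_log hv0, hvz]⟩
  refine ⟨Real.exp x, ⟨Real.exp_pos x, (Real.lt_log_iff_exp_lt hr).1 hx⟩, fun z hz z' hz' ↦ ?_⟩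
  obtain ⟨θ, hθ, rfl⟩ := hpar z hz
  obtain ⟨θ', hθ', rfl⟩ := hpar z' hz'
  exact (edist_le_ofReal hε.le).1 (hle θ hθ θ' hθ')

lemma HasShortCrosscuts.comp {f g : ℂ → ℂ} {K : Set ℂ} (hf : HasShortCrosscuts f ζ)
    (hfK : MapsTo f (ball 0 1) K) (hg : UniformContinuousOn g K) : HasShortCrosscuts (g ∘ f) ζ := by
  intro ε hε r hr
  obtain ⟨δ, hδ, hgδ⟩ := Metric.uniformContinuousOn_iff_le.1 hg ε hε
  obtain ⟨ρ, hρ, hle⟩ := hf δ hδ r hr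
  exact ⟨ρ, hρ, fun z hz z' hz' ↦ hgδ _ (hfK hz.1) _ (hfK hz'.1) (hle z hz z' hz')⟩

lemma discOfHalfPlane_mem_crosscut (hζ : ‖ζ‖ = 1) (hv : 0 < v.im) :
    discOfHalfPlane ζ v ∈ crosscut ζ ‖v‖ := by
  refine ⟨discOfHalfPlane_mem_ball hζ hv, ?_⟩
  have hden := one_sub_I_mul_ne_zero hv
  have hsub : discOfHalfPlane ζ v - ζ = 2 * ζ * Complex.I * v / (1 - Complex.I * v) := by
    rw [discOfHalfPlane, div_sub' hden]
    ring
  have hadd : discOfHalfPlane ζ v + ζ = 2 * ζ / (1 - Complex.I * v) := by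
    rw [discOfHalfPlane, div_add' _ _ _ hden]
    ring
  rw [hsub, hadd, norm_div, norm_div, norm_mul, norm_mul, Complex.norm_I, mul_one]
  ring

lemma crosscut_nonempty (hζ : ‖ζ‖ = 1) {ρ : ℝ} (hρ : 0 < ρ) : (crosscut ζ ρ).Nonempty := by
  have hv : 0 < (ρ * Complex.I).im := by simpa
  refine ⟨discOfHalfPlane ζ (ρ * Complex.I), ?_⟩
  simpa [abs_of_pos hρ] using discOfHalfPlane_mem_crosscut hζ hv

lemma one_sub_two_mul_lt_norm (hζ : ‖ζ‖ = 1) {ρ : ℝ} (hρ : 0 < ρ) {z : ℂ} (hz : z ∈ crosscut ζ ρ) :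
    1 - 2 * ρ < ‖z‖ := by
  obtain ⟨hz1, hzρ⟩ := hz
  rw [mem_ball_zero_iff] at hz1
  have hsub := norm_sub_norm_le ζ (ζ - z)
  have hadd := norm_add_le z ζ
  rw [sub_sub_cancel, norm_sub_rev ζ z] at hsub
  nlinarith

end Crosscut

/-! ### Boundary values of homeomorphisms of the disc -/

section BoundaryLimit

open scoped RealInnerProductSpace

variable {e : OpenPartialHomeomorph ℂ ℂ} {ζ : ℂ}

lemma exists_lt_one_forall_lt_norm (hs : e.source = ball 0 1) (ht : e.target = ball 0 1) {r : ℝ}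
    (hr : r < 1) : ∃ s < 1, ∀ z ∈ ball (0 : ℂ) 1, s < ‖z‖ → r < ‖e z‖ := by
  have hcompact : IsCompact (e.symm '' closedBall 0 r) :=
    (isCompact_closedBall 0 r).image_of_continuousOn
      (e.continuousOn_symm.mono (ht ▸ closedBall_subset_ball hr))
  have hsub : e.symm '' closedBall 0 r ⊆ ball 0 1 := image_subset_iff.2 fun w hw ↦ by
    simpa [hs] using e.map_target (ht ▸ closedBall_subset_ball hr hw)
  obtain ⟨s, hs1, hsub'⟩ := exists_lt_subset_ball hcompact.isClosed hsub
  refine ⟨s, hs1, fun z hz hsz ↦ ?_⟩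
  by_contra! hle
  have hz' := hsub' (mem_image_of_mem e.symm (mem_closedBall_zero_iff.2 hle))
  rw [e.left_inv (hs ▸ hz), mem_ball_zero_iff] at hz'
  exact hsz.not_gt hz'

lemma norm_sub_sq_lt_of_lt_inner {E : Type*} [NormedAddCommGroup E] [InnerProductSpace ℝ E]
    {n w : E} {η : ℝ} (hn : ‖n‖ = 1) (hw : ‖w‖ < 1) (h : 1 - 2 * η < ⟪w, n⟫) :
    ‖w - n‖ ^ 2 < 4 * η := by
  rw [norm_sub_sq_real, hn]
  nlinarith [norm_nonneg w]

lemma notMem_of_forall_crosscut_notMem (hs : e.source = ball 0 1) {E : Set ℂ}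
    (hE : IsPreconnected E) (hEt : E ⊆ e.target) (h0 : e 0 ∈ E) (hζ : ‖ζ‖ = 1) {ρ : ℝ} (hρ : ρ < 1)
    (hcut : ∀ z ∈ crosscut ζ ρ, e z ∉ E) {z : ℂ} (hz : z ∈ ball (0 : ℂ) 1) (hzζ : ‖z - ζ‖ < ρ) :
    e z ∉ E := fun hzE ↦ by
  have hpre := hE.image e.symm (e.continuousOn_symm.mono hEt)
  have hmem : ∀ u ∈ ball (0 : ℂ) 1, e u ∈ E → u ∈ e.symm '' E := fun u hu huE ↦
    ⟨e u, huE, e.left_inv (hs ▸ hu)⟩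
  have hsum : 1 ≤ ‖z + ζ‖ := by
    have h := norm_sub_le (z + ζ) (z - ζ)
    rw [add_sub_sub_cancel, ← two_mul, norm_mul, hζ, Complex.norm_two] at h
    linarith
  obtain ⟨_, ⟨w, hw, rfl⟩, hwρ⟩ := hpre.intermediate_value
    (hmem z hz hzE) (hmem 0 (mem_ball_self one_pos) h0)
    (f := fun u ↦ ‖u - ζ‖ - ρ * ‖u + ζ‖) (by fun_prop)
    (show (0 : ℝ) ∈ Icc _ _ from ⟨by nlinarith [norm_nonneg (z - ζ)], by simpa [hζ] using hρ.le⟩)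
  have hwt : e.symm w ∈ ball 0 1 := hs ▸ e.map_target (hEt hw)
  exact hcut _ ⟨hwt, sub_eq_zero.1 hwρ⟩ (by rwa [e.right_inv (hEt hw)])

-- A short crosscut close to `ζ` has its image in a small cap cut off the disc by a line. The rest
-- of the disc is connected, so the points separated from `0` by the crosscut are mapped into the
-- cap.
lemma HasShortCrosscuts.exists_eventually_lt_inner (he : HasShortCrosscuts e ζ)
    (hs : e.source = ball 0 1) (ht : e.target = ball 0 1) (hζ : ‖ζ‖ = 1) {η : ℝ} (hη : 0 < η)
    (hη0 : ‖e 0‖ ≤ 1 - 2 * η) : ∃ n, ‖n‖ = 1 ∧ ∀ᶠ z in 𝓝[ball 0 1] ζ, 1 - 2 * η < ⟪e z, n⟫ := by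
  obtain ⟨s, hs1, hes⟩ := exists_lt_one_forall_lt_norm hs ht (sub_lt_self 1 hη)
  obtain ⟨ρ, ⟨hρ, hρs⟩, hdist⟩ := he η hη (min ((1 - s) / 2) 1) (lt_min (by linarith) one_pos)
  rw [lt_min_iff] at hρs
  obtain ⟨z₀, hz₀⟩ := crosscut_nonempty hζ hρ
  have hp : 1 - η < ‖e z₀‖ := hes z₀ hz₀.1 (by linarith [one_sub_two_mul_lt_norm hζ hρ hz₀])
  have hp0 : 0 < ‖e z₀‖ := by linarith [norm_nonneg (e 0)]
  set n : ℂ := ‖e z₀‖⁻¹ • e z₀ with hn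
  have hn1 : ‖n‖ = 1 := by rw [hn, norm_smul, norm_inv, norm_norm, inv_mul_cancel₀ hp0.ne']
  have hle : ∀ w : ℂ, ⟪w, n⟫ ≤ ‖w‖ := fun w ↦ by simpa [hn1] using real_inner_le_norm w n
  have hpn : ⟪e z₀, n⟫ = ‖e z₀‖ := by
    rw [hn, real_inner_smul_right, real_inner_self_eq_norm_sq]
    field_simp
  have hconv : Convex ℝ (ball 0 1 ∩ {w : ℂ | ⟪w, n⟫ ≤ 1 - 2 * η}) :=
    (convex_ball 0 1).inter (convex_halfSpace_le
      ⟨fun _ _ ↦ inner_add_left _ _ _, fun _ _ ↦ real_inner_smul_left _ _ _⟩ _)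
  have hcut : ∀ z ∈ crosscut ζ ρ, e z ∉ ball 0 1 ∩ {w : ℂ | ⟪w, n⟫ ≤ 1 - 2 * η} := by
    rintro z hz ⟨-, hzn⟩
    have hsub := (hle (e z₀ - e z)).trans ((dist_eq_norm _ _).symm.trans_le (hdist z₀ hz₀ z hz))
    rw [inner_sub_left, hpn] at hsub
    linarith [show ⟪e z, n⟫ ≤ 1 - 2 * η from hzn]
  have hmaps : MapsTo e (ball 0 1) (ball 0 1) := by simpa [hs, ht] using e.mapsTo
  have hzero : e 0 ∈ ball 0 1 ∩ {w : ℂ | ⟪w, n⟫ ≤ 1 - 2 * η} :=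
    ⟨hmaps (mem_ball_self one_pos), (hle _).trans hη0⟩
  refine ⟨n, hn1, eventually_nhdsWithin_iff.2 ?_⟩
  filter_upwards [ball_mem_nhds ζ hρ] with z hzζ hz
  have hznot := notMem_of_forall_crosscut_notMem hs hconv.isPreconnected
    (ht ▸ inter_subset_left) hzero hζ hρs.2 hcut hz (by rwa [← dist_eq_norm])
  exact not_le.1 fun h ↦ hznot ⟨hmaps hz, h⟩

theorem HasShortCrosscuts.exists_tendsto (he : HasShortCrosscuts e ζ)
    (hs : e.source = ball 0 1) (ht : e.target = ball 0 1) (hζ : ‖ζ‖ = 1) :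
    ∃ q, Tendsto e (𝓝[ball 0 1] ζ) (𝓝 q) := by
  have hmaps : MapsTo e (ball 0 1) (ball 0 1) := by simpa [hs, ht] using e.mapsTo
  have hne : (𝓝[ball 0 1] ζ).NeBot := by
    rw [← mem_closure_iff_nhdsWithin_neBot, closure_ball _ one_ne_zero]
    simp [hζ]
  refine cauchy_map_iff_exists_tendsto.1 (Metric.cauchy_iff.2 ⟨hne.map e, fun ε hε ↦ ?_⟩)
  have he0 : ‖e 0‖ < 1 := by simpa using hmaps (mem_ball_self one_pos)
  have hη : 0 < min ((1 - ‖e 0‖) / 2) (ε ^ 2 / 16) := lt_min (by linarith) (by positivity)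
  obtain ⟨n, hn, hcap⟩ := he.exists_eventually_lt_inner hs ht hζ hη
    (by linarith [min_le_left ((1 - ‖e 0‖) / 2) (ε ^ 2 / 16)])
  refine ⟨ball n (ε / 2), ?_, fun x hx y hy ↦ (dist_triangle_right x y n).trans_lt ?_⟩
  · rw [mem_map]
    filter_upwards [hcap, self_mem_nhdsWithin] with z hz hz1
    have hlt := norm_sub_sq_lt_of_lt_inner hn (mem_ball_zero_iff.1 (hmaps hz1)) hz
    rw [mem_preimage, mem_ball_iff_norm]
    refine lt_of_pow_lt_pow_left₀ 2 (by positivity) (hlt.trans_le ?_)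
    linarith [min_le_right ((1 - ‖e 0‖) / 2) (ε ^ 2 / 16)]
  · linarith [mem_ball.1 hx, mem_ball.1 hy]

end BoundaryLimit

section Caratheodory

/-- `g` is a continuous extension to the closed unit disc of the self-homeomorphism `e` of the open
unit disc. -/
structure IsClosedDiscExtension (g : ℂ → ℂ) (e : OpenPartialHomeomorph ℂ ℂ) : Prop where
  source_eq : e.source = ball 0 1
  target_eq : e.target = ball 0 1
  continuousOn : ContinuousOn g (closedBall 0 1)
  eqOn : EqOn g e (ball 0 1)

variable {e : OpenPartialHomeomorph ℂ ℂ} {g : ℂ → ℂ}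

theorem exists_isClosedDiscExtension (hs : e.source = ball 0 1) (ht : e.target = ball 0 1)
    (he : ∀ ζ ∈ sphere (0 : ℂ) 1, HasShortCrosscuts e ζ) : ∃ g, IsClosedDiscExtension g e := by
  refine ⟨extendFrom (ball 0 1) e, hs, ht, ?_, fun z hz ↦
    extendFrom_eq (subset_closure hz) (hs ▸ e.continuousOn z (hs ▸ hz))⟩
  refine continuousOn_extendFrom (closure_ball _ one_ne_zero).ge fun z hz ↦ ?_
  rcases ball_union_sphere (x := (0 : ℂ)).ge hz with hz | hz
  · exact ⟨e z, (e.continuousAt (hs ▸ hz)).mono_left nhdsWithin_le_nhds⟩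
  · exact (he z hz).exists_tendsto hs ht (mem_sphere_zero_iff_norm.1 hz)

namespace IsClosedDiscExtension

lemma bijOn_ball (hg : IsClosedDiscExtension g e) : BijOn g (ball 0 1) (ball 0 1) :=
  (by simpa only [hg.source_eq, hg.target_eq] using e.bijOn : BijOn e _ _).congr hg.eqOn.symm

lemma nhdsWithin_ball_neBot {ζ : ℂ} (hζ : ζ ∈ closedBall (0 : ℂ) 1) : (𝓝[ball 0 1] ζ).NeBot := by
  rwa [← mem_closure_iff_nhdsWithin_neBot, closure_ball _ one_ne_zero]

lemma tendsto (hg : IsClosedDiscExtension g e) {z : ℂ} (hz : z ∈ closedBall 0 1) :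
    Tendsto g (𝓝[ball 0 1] z) (𝓝 (g z)) :=
  (hg.continuousOn z hz).mono_left (nhdsWithin_mono _ ball_subset_closedBall)

lemma mapsTo_sphere (hg : IsClosedDiscExtension g e) : MapsTo g (sphere 0 1) (sphere 0 1) := by
  intro ζ hζ
  have hζ' := sphere_subset_closedBall hζ
  have := nhdsWithin_ball_neBot hζ'
  have hlim := (hg.tendsto hζ').norm
  rw [mem_sphere_zero_iff_norm] at hζ ⊢
  refine le_antisymm (le_of_tendsto hlim ?_) (le_of_forall_lt_imp_le_of_dense fun r hr ↦ ?_)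
  · filter_upwards [self_mem_nhdsWithin] with z hz
    exact (mem_ball_zero_iff.1 (hg.bijOn_ball.mapsTo hz)).le
  · obtain ⟨s, hs, hsr⟩ := exists_lt_one_forall_lt_norm hg.source_eq hg.target_eq hr
    refine ge_of_tendsto hlim ?_
    filter_upwards [self_mem_nhdsWithin, nhdsWithin_le_nhds
      (continuous_norm.continuousAt.eventually_const_lt (hs.trans_eq hζ.symm))] with z hz hsz
    rw [hg.eqOn hz]
    exact (hsr z hz hsz).le

lemma surjOn (hg : IsClosedDiscExtension g e) :
    SurjOn g (closedBall 0 1) (closedBall 0 1) := by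
  rw [SurjOn, ← closure_ball _ one_ne_zero]
  refine closure_minimal (hg.bijOn_ball.surjOn.trans (image_mono subset_closure)) ?_
  rw [closure_ball _ one_ne_zero]
  exact ((isCompact_closedBall 0 1).image_of_continuousOn hg.continuousOn).isClosed

lemma exists_mem_image_symm_ball (hg : IsClosedDiscExtension g e) {ζ : ℂ}
    (hζ : ζ ∈ sphere (0 : ℂ) 1) {W : Set ℂ} (hW : W ∈ 𝓝 ζ) {r : ℝ} (hr : 0 < r) :
    ∃ z ∈ e.symm '' (ball (g ζ) r ∩ ball 0 1), z ∈ W := by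
  have hζ' := sphere_subset_closedBall hζ
  have := nhdsWithin_ball_neBot hζ'
  obtain ⟨z, ⟨hzr, hzW⟩, hz⟩ := (((hg.tendsto hζ').eventually_mem (ball_mem_nhds _ hr)).and
    (mem_nhdsWithin_of_mem_nhds hW)).and self_mem_nhdsWithin |>.exists
  rw [hg.eqOn hz] at hzr
  exact ⟨z, ⟨e z, ⟨hzr, hg.eqOn hz ▸ hg.bijOn_ball.mapsTo hz⟩,
    e.left_inv (hg.source_eq ▸ hz)⟩, hzW⟩

-- For every `r` the preimage of `ball q r`, where `q = g ζ₁ = g ζ₂`, is connected and comes close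
-- to both `ζ₁` and `ζ₂`, so it meets the zero set of `ℓ`.
lemma exists_mem_sphere_eq_zero (hg : IsClosedDiscExtension g e) {ζ₁ ζ₂ : ℂ}
    (h₁ : ζ₁ ∈ sphere (0 : ℂ) 1) (h₂ : ζ₂ ∈ sphere (0 : ℂ) 1) (heq : g ζ₁ = g ζ₂) {ℓ : ℂ → ℝ}
    (hℓ : Continuous ℓ) (hneg : ℓ ζ₁ < 0) (hpos : 0 < ℓ ζ₂) :
    ∃ ξ ∈ sphere (0 : ℂ) 1, ℓ ξ = 0 ∧ g ξ = g ζ₁ := by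
  have hcompact : IsCompact (closedBall (0 : ℂ) 1 ∩ ℓ ⁻¹' {0}) :=
    (isCompact_closedBall 0 1).inter_right (isClosed_singleton.preimage hℓ)
  have hclosure : g ζ₁ ∈ closure (g '' (closedBall 0 1 ∩ ℓ ⁻¹' {0})) := by
    refine Metric.mem_closure_iff.2 fun r hr ↦ ?_
    obtain ⟨w₁, hw₁, hℓ₁⟩ := hg.exists_mem_image_symm_ball h₁
      (hℓ.continuousAt.eventually_lt_const hneg) hr
    obtain ⟨w₂, hw₂, hℓ₂⟩ := hg.exists_mem_image_symm_ball h₂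
      (hℓ.continuousAt.eventually_const_lt hpos) hr
    have hpre := (((convex_ball (g ζ₁) r).inter (convex_ball 0 1)).isPreconnected).image e.symm
      (e.continuousOn_symm.mono (hg.target_eq ▸ inter_subset_right))
    obtain ⟨_, ⟨w, ⟨hwr, hw⟩, rfl⟩, hw0⟩ := hpre.intermediate_value hw₁ (heq ▸ hw₂)
      hℓ.continuousOn (show (0 : ℝ) ∈ Icc _ _ from ⟨le_of_lt hℓ₁, le_of_lt hℓ₂⟩)
    have hwe : e.symm w ∈ ball 0 1 := hg.source_eq ▸ e.map_target (hg.target_eq ▸ hw)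
    refine ⟨w, ⟨e.symm w, ⟨ball_subset_closedBall hwe, hw0⟩, ?_⟩, mem_ball'.1 hwr⟩
    rw [hg.eqOn hwe, e.right_inv (hg.target_eq ▸ hw)]
  rw [(hcompact.image_of_continuousOn
    (hg.continuousOn.mono inter_subset_left)).isClosed.closure_eq] at hclosure
  obtain ⟨ξ, ⟨hξ, hξ0⟩, hξq⟩ := hclosure
  refine ⟨ξ, (ball_union_sphere.ge hξ).resolve_left fun hξb ↦ ?_, hξ0, hξq⟩
  exact (mem_sphere.1 (hg.mapsTo_sphere h₁)).not_lt (hξq ▸ hg.bijOn_ball.mapsTo hξb)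

end IsClosedDiscExtension

-- Finitely many rotations of an arc cover the circle, so the product of the corresponding rotations
-- of `F` vanishes on the whole circle.
lemma eq_zero_of_eventually_eq_zero_nhdsWithin_sphere {F : ℂ → ℂ} (hF : DiffContOnCl ℂ F (ball 0 1))
    {ξ : ℂ} (hξ : ξ ∈ sphere (0 : ℂ) 1) (h0 : ∀ᶠ z in 𝓝[sphere 0 1] ξ, F z = 0) : F 0 = 0 := by
  obtain ⟨V, hV, hV0⟩ := eventually_nhdsWithin_iff.1 h0 |>.exists_mem
  rw [mem_sphere_zero_iff_norm] at hξ
  obtain ⟨t, hts, ht⟩ := (isCompact_sphere (0 : ℂ) 1).elim_nhds_subcover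
    (fun η ↦ (fun z ↦ ξ / η * z) ⁻¹' V) fun η hη ↦ by
      have hη0 : η ≠ 0 := ne_of_mem_sphere hη one_ne_zero
      refine (Continuous.continuousAt (by fun_prop)).preimage_mem_nhds ?_
      rwa [div_mul_cancel₀ _ hη0]
  have hrot : ∀ η ∈ t, ∀ z, ‖ξ / η * z‖ = ‖z‖ := fun η hη z ↦ by
    rw [norm_mul, norm_div, mem_sphere_zero_iff_norm.1 (hts η hη), hξ, div_one, one_mul]
  have hcomp : ∀ η ∈ t, DiffContOnCl ℂ (fun z ↦ F (ξ / η * z)) (ball 0 1) := fun η hη ↦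
    hF.comp (Differentiable.diffContOnCl (by fun_prop)) fun z hz ↦ by
      rwa [mem_ball_zero_iff, hrot η hη, ← mem_ball_zero_iff]
  have hprod : DiffContOnCl ℂ (fun z ↦ ∏ η ∈ t, F (ξ / η * z)) (ball 0 1) :=
    ⟨.fun_finsetProd fun η hη ↦ (hcomp η hη).differentiableOn,
      continuousOn_finsetProd _ fun η hη ↦ (hcomp η hη).continuousOn⟩
  have hsphere : ∀ z ∈ frontier (ball (0 : ℂ) 1), ‖∏ η ∈ t, F (ξ / η * z)‖ ≤ 0 := fun z hz ↦ by
    rw [frontier_ball _ one_ne_zero] at hz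
    obtain ⟨η, hη, hzV⟩ := mem_iUnion₂.1 (ht hz)
    rw [norm_le_zero_iff]
    exact Finset.prod_eq_zero hη (hV0 _ hzV (by
      rwa [mem_sphere_zero_iff_norm, hrot η hη, ← mem_sphere_zero_iff_norm]))
  have hle := Complex.norm_le_of_forall_mem_frontier_norm_le isBounded_ball hprod hsphere
    (subset_closure (mem_ball_self one_pos))
  simpa using (Finset.prod_eq_zero_iff.1 (norm_le_zero_iff.1 hle)).choose_spec.2

lemma eq_or_eq_neg_of_mul_conj_im_eq_zero {ξ z : ℂ} (hξ : ‖ξ‖ = 1) (hz : ‖z‖ = 1)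
    (him : (ξ * (starRingEnd ℂ) z).im = 0) : ξ = z ∨ ξ = -z := by
  have hreal : ((ξ * (starRingEnd ℂ) z).re : ℂ) = ξ * (starRingEnd ℂ) z :=
    Complex.ext rfl him.symm
  have habs : |(ξ * (starRingEnd ℂ) z).re| = 1 := by
    rw [← Real.norm_eq_abs, ← Complex.norm_real, hreal, norm_mul, RCLike.norm_conj, hξ, hz, one_mul]
  have hmul : ξ = ((ξ * (starRingEnd ℂ) z).re : ℂ) * z := by
    rw [hreal, mul_assoc, Complex.conj_mul', hz, Complex.ofReal_one, one_pow, mul_one]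
  rcases eq_or_eq_neg_of_abs_eq habs with h | h <;> rw [h] at hmul <;> simp [hmul]

lemma exists_mem_sphere_im_mul_conj_neg_pos {ζ₁ ζ₂ : ℂ} (h₁ : ‖ζ₁‖ = 1) (h₂ : ‖ζ₂‖ = 1)
    (hne : ζ₁ ≠ ζ₂) : ∃ ξ ∈ sphere (0 : ℂ) 1,
      (ζ₁ * (starRingEnd ℂ) ξ).im < 0 ∧ 0 < (ζ₂ * (starRingEnd ℂ) ξ).im := by
  have hpos : 0 < ‖ζ₂ - ζ₁‖ := norm_pos_iff.2 (sub_ne_zero.2 hne.symm)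
  have him : ∀ ζ : ℂ, (ζ * (starRingEnd ℂ) (-Complex.I * ((ζ₂ - ζ₁) / ‖ζ₂ - ζ₁‖))).im =
      (ζ * (starRingEnd ℂ) (ζ₂ - ζ₁)).re / ‖ζ₂ - ζ₁‖ := fun ζ ↦ by
    simp only [map_mul, map_neg, Complex.conj_I, neg_neg, map_div₀, Complex.conj_ofReal]
    rw [show ζ * (Complex.I * ((starRingEnd ℂ) (ζ₂ - ζ₁) / ‖ζ₂ - ζ₁‖)) =
      Complex.I * (ζ * (starRingEnd ℂ) (ζ₂ - ζ₁) / ‖ζ₂ - ζ₁‖) by ring, Complex.I_mul_im,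
      Complex.div_ofReal_re]
  have hsq := pow_pos hpos 2
  have h₁' : Complex.normSq ζ₁ = 1 := by rw [Complex.normSq_eq_norm_sq, h₁, one_pow]
  have h₂' : Complex.normSq ζ₂ = 1 := by rw [Complex.normSq_eq_norm_sq, h₂, one_pow]
  rw [Complex.normSq_apply] at h₁' h₂'
  rw [← Complex.normSq_eq_norm_sq, Complex.normSq_apply] at hsq
  refine ⟨-Complex.I * ((ζ₂ - ζ₁) / ‖ζ₂ - ζ₁‖), by simp [hpos.ne'], ?_, ?_⟩ <;> rw [him]
  · refine div_neg_of_neg_of_pos ?_ hpos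
    simp at hsq ⊢
    nlinarith
  · refine div_pos ?_ hpos
    simp at hsq ⊢
    nlinarith

-- If `g ζ₁ = g ζ₂ = q`, every chord through `0` that separates `ζ₁` from `ζ₂` has an endpoint where
-- `g = q`. Hence `z ↦ (f (g z) - f q) * (f (g (-z)) - f q)` vanishes on an arc.
theorem IsClosedDiscExtension.injOn_sphere (hg : IsClosedDiscExtension g e) {f : ℂ → ℂ}
    (hf : Continuous f) (hinj : f.Injective) (hd : DifferentiableOn ℂ (f ∘ g) (ball 0 1)) :
    InjOn g (sphere 0 1) := by
  intro ζ₁ h₁ ζ₂ h₂ heq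
  by_contra hne
  have hcont : DiffContOnCl ℂ (f ∘ g) (ball 0 1) :=
    .mk_ball hd (hf.comp_continuousOn hg.continuousOn)
  let F : ℂ → ℂ := fun z ↦ (f (g z) - f (g ζ₁)) * (f (g (-z)) - f (g ζ₁))
  have hF : DiffContOnCl ℂ F (ball 0 1) :=
    (hcont.sub_const _).smul ((hcont.comp differentiable_neg.diffContOnCl
      fun z hz ↦ by simpa using hz).sub_const _)
  let ℓ : ℂ → ℂ → ℝ := fun z ζ ↦ (ζ * (starRingEnd ℂ) z).im
  obtain ⟨ξ, hξ, hneg, hpos⟩ := exists_mem_sphere_im_mul_conj_neg_pos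
    (mem_sphere_zero_iff_norm.1 h₁) (mem_sphere_zero_iff_norm.1 h₂) hne
  have hzero : ∀ᶠ z in 𝓝[sphere 0 1] ξ, F z = 0 := by
    have hcℓ : ∀ ζ, Continuous fun z ↦ ℓ z ζ := fun ζ ↦ by fun_prop
    filter_upwards [self_mem_nhdsWithin,
      nhdsWithin_le_nhds ((hcℓ ζ₁).continuousAt.eventually_lt_const hneg),
      nhdsWithin_le_nhds ((hcℓ ζ₂).continuousAt.eventually_const_lt hpos)] with z hz hz₁ hz₂
    obtain ⟨η, hη, hη0, hηg⟩ :=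
      hg.exists_mem_sphere_eq_zero h₁ h₂ heq (ℓ := ℓ z) (by fun_prop) hz₁ hz₂
    rw [mem_sphere_zero_iff_norm] at hη hz
    rcases eq_or_eq_neg_of_mul_conj_im_eq_zero hη hz hη0 with rfl | rfl <;> simp [F, hηg]
  have hF0 := eq_zero_of_eventually_eq_zero_nhdsWithin_sphere hF hξ hzero
  have hg0 : g 0 = g ζ₁ := by simpa [F, sub_eq_zero, hinj.eq_iff] using hF0
  exact (mem_sphere.1 (hg.mapsTo_sphere h₁)).not_lt
    (hg0 ▸ hg.bijOn_ball.mapsTo (mem_ball_self one_pos))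

lemma IsClosedDiscExtension.bijOn_closedBall (hg : IsClosedDiscExtension g e)
    (hinj : InjOn g (sphere 0 1)) : BijOn g (closedBall 0 1) (closedBall 0 1) := by
  have hmaps : MapsTo g (closedBall 0 1) (closedBall 0 1) := by
    rw [← ball_union_sphere]
    exact hg.bijOn_ball.mapsTo.union_union hg.mapsTo_sphere
  refine ⟨hmaps, ?_, hg.surjOn⟩
  rw [← ball_union_sphere, injOn_union sphere_disjoint_ball.symm]
  refine ⟨hg.bijOn_ball.injOn, hinj, fun z hz w hw h ↦ ?_⟩
  exact sphere_disjoint_ball.le_bot ⟨hg.mapsTo_sphere hw, h ▸ hg.bijOn_ball.mapsTo hz⟩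

theorem exists_conformal_parametrization_closedBall (h : ℂ ≃ₜ ℂ) : ∃ g : ℂ → ℂ,
    ContinuousOn g (closedBall 0 1) ∧ BijOn g (closedBall 0 1) (closedBall 0 1) ∧
    MapsTo g (sphere 0 1) (sphere 0 1) ∧ MapsTo g (ball 0 1) (ball 0 1) ∧
    IsUnivalentOn (h ∘ g) (ball 0 1) := by
  let U := h '' ball 0 1
  have hUo : IsOpen U := h.isOpenMap _ isOpen_ball
  have hUc : IsSimplyConnected U := by
    rw [Homeomorph.isSimplyConnected_image]
    have := (convex_ball (0 : ℂ) 1).contractibleSpace ⟨0, mem_ball_self one_pos⟩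
    exact (inferInstance : SimplyConnectedSpace (ball (0 : ℂ) 1))
  have hK : IsCompact (h '' closedBall 0 1) := (isCompact_closedBall 0 1).image h.continuous
  have hUK : U ⊆ h '' closedBall 0 1 := image_mono ball_subset_closedBall
  have hUb : Bornology.IsBounded U := hK.isBounded.subset hUK
  have hUne : U ≠ univ := fun hU ↦ NormedSpace.unbounded_univ ℂ ℂ (hU ▸ hUb)
  obtain ⟨φ, hφs, hφt, hφ⟩ := riemann_mapping hUo hUc hUne
  let e : OpenPartialHomeomorph ℂ ℂ := φ.transHomeomorph h.symm
  have hes : e.source = ball 0 1 := hφs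
  have het : e.target = ball 0 1 := by simp [e, hφt, U]
  have hmaps : MapsTo φ (ball 0 1) U := hφs ▸ hφt ▸ φ.mapsTo
  have hshort : ∀ ζ ∈ sphere (0 : ℂ) 1, HasShortCrosscuts e ζ := fun ζ hζ ↦
    (hasShortCrosscuts_of_injOn hφ.differentiableOn hφ.injOn (hUb.subset hmaps.image_subset)
      (mem_sphere_zero_iff_norm.1 hζ)).comp (hmaps.mono_right hUK)
      (hK.uniformContinuousOn_of_continuous h.symm.continuous.continuousOn)
  obtain ⟨g, hg⟩ := exists_isClosedDiscExtension hes het hshort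
  have hu : IsUnivalentOn (h ∘ g) (ball 0 1) :=
    hφ.congr isOpen_ball fun z hz ↦ by simp [hg.eqOn hz, e]
  exact ⟨g, hg.continuousOn, hg.bijOn_closedBall
    (hg.injOn_sphere h.continuous h.injective hu.differentiableOn),
    hg.mapsTo_sphere, hg.bijOn_ball.mapsTo, hu⟩

end Caratheodory

/-! ### Isotopies -/

section Isotopy

variable {X Y : Type*} [TopologicalSpace X] [TopologicalSpace Y] {f f' g g' k : X ≃ₜ X}

/-- Two self-homeomorphisms of `X` are isotopic if they are homotopic through homeomorphisms. -/
def Isotopic (f g : X ≃ₜ X) : Prop :=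
  ContinuousMap.HomotopicWith (f : C(X, X)) (g : C(X, X)) fun φ => IsHomeomorph φ

theorem isotopic_iff_exists_family :
    Isotopic f g ↔
      ∃ F : I → X ≃ₜ X, Continuous (fun p : I × X => F p.1 p.2) ∧ F 0 = f ∧ F 1 = g := by
  constructor
  · rintro ⟨F⟩
    exact ⟨fun t => (F.prop t).homeomorph, F.continuous,
      Homeomorph.ext F.apply_zero, Homeomorph.ext F.apply_one⟩
  · rintro ⟨F, hF, rfl, rfl⟩
    exact ⟨⟨⟨⟨fun p => F p.1 p.2, hF⟩, fun _ => rfl, fun _ => rfl⟩, fun t => (F t).isHomeomorph⟩⟩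

theorem Isotopic.refl (f : X ≃ₜ X) : Isotopic f f :=
  ContinuousMap.HomotopicWith.refl _ f.isHomeomorph

theorem Isotopic.symm (h : Isotopic f g) : Isotopic g f :=
  ContinuousMap.HomotopicWith.symm h

theorem Isotopic.trans (h₁ : Isotopic f g) (h₂ : Isotopic g k) : Isotopic f k :=
  ContinuousMap.HomotopicWith.trans h₁ h₂

theorem Isotopic.homotopic (h : Isotopic f g) :
    ContinuousMap.Homotopic (f : C(X, X)) (g : C(X, X)) :=
  h.map fun F => F.toHomotopy

theorem Isotopic.mul (h₁ : Isotopic f f') (h₂ : Isotopic g g') :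
    Isotopic (f * g) (f' * g') := by
  obtain ⟨F, hF, rfl, rfl⟩ := isotopic_iff_exists_family.1 h₁
  obtain ⟨G, hG, rfl, rfl⟩ := isotopic_iff_exists_family.1 h₂
  exact isotopic_iff_exists_family.2
    ⟨fun t => F t * G t, hF.comp (continuous_fst.prodMk hG), rfl, rfl⟩

theorem Isotopic.conj (h : Isotopic f g) (e : X ≃ₜ Y) :
    Isotopic (e.symm.trans (f.trans e)) (e.symm.trans (g.trans e)) := by
  obtain ⟨F, hF, rfl, rfl⟩ := isotopic_iff_exists_family.1 h
  refine isotopic_iff_exists_family.2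
    ⟨fun t => e.symm.trans ((F t).trans e), ?_, rfl, rfl⟩
  exact e.continuous.comp (hF.comp (continuous_fst.prodMk (e.symm.continuous.comp continuous_snd)))

end Isotopy

section OnePointIsotopy

variable {X : Type*} [TopologicalSpace X] {f f' g g' k : X ≃ₜ X}

theorem onePointCongr_mul (f g : X ≃ₜ X) :
    (f * g).onePointCongr = f.onePointCongr * g.onePointCongr := by
  ext x
  induction x using OnePoint.rec <;> rfl

theorem onePointCongr_one : (1 : X ≃ₜ X).onePointCongr = 1 := by
  ext x
  induction x using OnePoint.rec <;> rfl

theorem exists_onePointCongr_eq (φ : OnePoint X ≃ₜ OnePoint X)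
    (hφ : φ OnePoint.infty = OnePoint.infty) : ∃ f : X ≃ₜ X, f.onePointCongr = φ := by
  have exists_restriction (ψ : OnePoint X ≃ₜ OnePoint X) (hψ : ψ OnePoint.infty = OnePoint.infty) :
      ∃ f : X → X, Continuous f ∧ ∀ x : X, (f x : OnePoint X) = ψ x := by
    have ne_infty (x : X) : ψ x ≠ OnePoint.infty :=
      hψ ▸ ψ.injective.ne (OnePoint.coe_ne_infty x)
    choose f hf using fun x => OnePoint.ne_infty_iff_exists.1 (ne_infty x)
    refine ⟨f, OnePoint.isOpenEmbedding_coe.isInducing.continuous_iff.2 ?_, hf⟩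
    exact (ψ.continuous.comp OnePoint.continuous_coe).congr fun x => (hf x).symm
  obtain ⟨f, hfc, hf⟩ := exists_restriction φ hφ
  obtain ⟨g, hgc, hg⟩ := exists_restriction φ.symm (φ.symm_apply_eq.2 hφ.symm)
  refine ⟨⟨⟨f, g, fun x => ?_, fun x => ?_⟩, hfc, hgc⟩, ?_⟩
  · exact OnePoint.coe_injective (by rw [hg, hf, φ.symm_apply_apply])
  · exact OnePoint.coe_injective (by rw [hf, hg, φ.apply_symm_apply])
  · ext x
    induction x using OnePoint.rec with
    | infty => exact hφ.symm
    | coe x => exact hf x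

/-- The extensions of `f` and `g` to the one-point compactification of `X` are isotopic, by an
isotopy that need not fix the point at infinity. -/
def IsotopicOnePoint (f g : X ≃ₜ X) : Prop :=
  Isotopic f.onePointCongr g.onePointCongr

theorem IsotopicOnePoint.refl (f : X ≃ₜ X) : IsotopicOnePoint f f :=
  Isotopic.refl _

theorem IsotopicOnePoint.symm (h : IsotopicOnePoint f g) : IsotopicOnePoint g f :=
  Isotopic.symm h

theorem IsotopicOnePoint.trans (h₁ : IsotopicOnePoint f g) (h₂ : IsotopicOnePoint g k) :
    IsotopicOnePoint f k :=
  Isotopic.trans h₁ h₂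

theorem IsotopicOnePoint.mul (h₁ : IsotopicOnePoint f f') (h₂ : IsotopicOnePoint g g') :
    IsotopicOnePoint (f * g) (f' * g') := by
  rw [IsotopicOnePoint, onePointCongr_mul, onePointCongr_mul]
  exact Isotopic.mul h₁ h₂

theorem continuous_onePointMap_family [T2Space X] {F : I × X → X} (hF : Continuous F)
    (hF_proper : Tendsto F (comap Prod.snd (cocompact X)) (cocompact X)) :
    Continuous fun p : I × OnePoint X => OnePoint.map (fun x => F (p.1, x)) p.2 := by
  rw [continuous_iff_continuousAt]
  rintro ⟨t, x⟩
  induction x using OnePoint.rec with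
  | infty =>
    rw [ContinuousAt, nhds_prod_eq, OnePoint.nhds_infty_eq, prod_sup, tendsto_sup,
      coclosedCompact_eq_cocompact]
    constructor
    · rw [← map_id (f := 𝓝 t), prod_map_map_eq, tendsto_map'_iff]
      refine OnePoint.tendsto_coe_infty.comp ?_
      rw [coclosedCompact_eq_cocompact]
      exact hF_proper.mono_left (tendsto_snd.le_comap)
    · refine tendsto_nhds_of_eventually_eq ?_
      filter_upwards [prod_mem_prod univ_mem (mem_pure.2 (mem_singleton OnePoint.infty))] with p hp
      rw [show p.2 = OnePoint.infty from hp.2]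
      rfl
  | coe x =>
    have hcoe : IsOpenEmbedding (Prod.map id ((↑) : X → OnePoint X) : I × X → I × OnePoint X) :=
      IsOpenEmbedding.id.prodMap OnePoint.isOpenEmbedding_coe
    exact (hcoe.continuousAt_iff (x := (t, x))).1 (OnePoint.continuous_coe.comp hF).continuousAt

theorem isotopicOnePoint_of_family [T2Space X] (F : I → X ≃ₜ X)
    (hF : Continuous fun p : I × X => F p.1 p.2)
    (hF_proper : Tendsto (fun p : I × X => F p.1 p.2) (comap Prod.snd (cocompact X))
      (cocompact X)) :
    IsotopicOnePoint (F 0) (F 1) :=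
  isotopic_iff_exists_family.2 ⟨fun t => (F t).onePointCongr,
    continuous_onePointMap_family hF hF_proper, rfl, rfl⟩

end OnePointIsotopy

section PlaneIsotopy

theorem tendsto_cocompact_of_norm_le {E T : Type*} [NormedAddCommGroup E] [ProperSpace E]
    {F : T × E → E} (hF : ∀ R : ℝ, ∃ M : ℝ, ∀ t z, M ≤ ‖z‖ → R ≤ ‖F (t, z)‖) :
    Tendsto F (comap Prod.snd (cocompact E)) (cocompact E) := by
  rw [← cobounded_eq_cocompact, ← tendsto_norm_atTop_iff_cobounded,
    Filter.tendsto_atTop]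
  intro R
  obtain ⟨M, hM⟩ := hF R
  filter_upwards [(tendsto_norm_cobounded_atTop.eventually_ge_atTop M).comap Prod.snd] with p hp
  exact hM p.1 p.2 hp

theorem continuous_smul_comp_inv_smul {E : Type*} [NormedAddCommGroup E] [NormedSpace ℝ E]
    {u : E → E} (hu : Continuous u) {C : ℝ} (hC : ∀ z, ‖u z‖ ≤ C) :
    Continuous fun p : I × E => (p.1 : ℝ) • u ((p.1 : ℝ)⁻¹ • p.2) := by
  rw [continuous_iff_continuousAt]
  rintro ⟨t, z⟩
  rcases eq_or_ne t 0 with rfl | ht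
  · have norm_le (p : I × E) : ‖(p.1 : ℝ) • u ((p.1 : ℝ)⁻¹ • p.2)‖ ≤ p.1 * C := by
      rw [norm_smul, Real.norm_of_nonneg p.1.2.1]
      exact mul_le_mul_of_nonneg_left (hC _) p.1.2.1
    have bound_tendsto : Tendsto (fun p : I × E => (p.1 : ℝ) * C) (𝓝 (0, z)) (𝓝 0) := by
      have : Continuous fun p : I × E => (p.1 : ℝ) * C := by fun_prop
      simpa using this.tendsto (0, z)
    simpa [ContinuousAt] using squeeze_zero_norm norm_le bound_tendsto
  · have hinv : ContinuousAt (fun p : I × E => (p.1 : ℝ)⁻¹ • p.2) (t, z) :=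
      ContinuousAt.smul (ContinuousAt.inv₀ (by fun_prop) (by simpa using ht)) continuousAt_snd
    exact ContinuousAt.smul (by fun_prop) (hu.continuousAt.comp hinv)

theorem isotopicOnePoint_one_of_norm_sub_le {E : Type*} [NormedAddCommGroup E]
    [NormedSpace ℝ E] [ProperSpace E] (k : E ≃ₜ E) {C : ℝ} (hC : ∀ z, ‖k z - z‖ ≤ C) :
    IsotopicOnePoint k 1 := by
  let F (t : I) : E ≃ₜ E :=
    if ht : (t : ℝ) = 0 then 1
    else Homeomorph.smulOfNeZero _ ht * k * (Homeomorph.smulOfNeZero _ ht)⁻¹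
  let u (z : E) : E := k z - z
  have F_apply (t : I) (z : E) : F t z = z + (t : ℝ) • u ((t : ℝ)⁻¹ • z) := by
    by_cases ht : (t : ℝ) = 0
    · simp only [F, ht, dite_true, Homeomorph.one_apply, zero_smul, add_zero]
    · calc F t z = (t : ℝ) • k ((t : ℝ)⁻¹ • z) := by
            simp only [F, ht, dite_false]
            rfl
        _ = z + (t : ℝ) • u ((t : ℝ)⁻¹ • z) := by
          rw [smul_sub, smul_inv_smul₀ ht, add_sub_cancel]
  have displacement_le (t : I) (z : E) : ‖F t z - z‖ ≤ C := by
    rw [F_apply, add_sub_cancel_left, norm_smul, Real.norm_of_nonneg t.2.1]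
    exact (mul_le_of_le_one_left (norm_nonneg _) t.2.2).trans (hC _)
  have hF : IsotopicOnePoint (F 0) (F 1) := by
    refine isotopicOnePoint_of_family F ?_
      (tendsto_cocompact_of_norm_le fun R => ⟨R + C, fun t z hz => ?_⟩)
    · simp only [F_apply]
      exact continuous_snd.add (continuous_smul_comp_inv_smul (by fun_prop) hC)
    · linarith [norm_le_norm_add_norm_sub (F t z) z, displacement_le t z]
  have F_zero : F 0 = 1 := Homeomorph.ext fun z => by simp [F_apply]
  have F_one : F 1 = k := Homeomorph.ext fun z => by simp [F_apply, u]
  exact (F_one ▸ F_zero ▸ hF).symm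

theorem isotopicOnePoint_mulLeft₀_one {c : ℂ} (hc : c ≠ 0) :
    IsotopicOnePoint (Homeomorph.mulLeft₀ c hc) 1 := by
  let a (t : I) : ℂ := Complex.exp ((t : ℝ) * Complex.log c)
  have ha_continuous : Continuous a := by fun_prop
  have ha (t : I) : a t ≠ 0 := Complex.exp_ne_zero _
  obtain ⟨t₀, ht₀⟩ : ∃ t₀, ∀ t, ‖a t₀‖ ≤ ‖a t‖ := by
    obtain ⟨t₀, -, ht₀⟩ := isCompact_univ.exists_isMinOn univ_nonempty
      ha_continuous.norm.continuousOn
    exact ⟨t₀, fun t => ht₀ (mem_univ t)⟩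
  let F (t : I) : ℂ ≃ₜ ℂ := Homeomorph.mulLeft₀ (a t) (ha t)
  have hF : IsotopicOnePoint (F 0) (F 1) := by
    refine isotopicOnePoint_of_family F
      ((ha_continuous.comp continuous_fst).mul continuous_snd)
      (tendsto_cocompact_of_norm_le fun R => ⟨R / ‖a t₀‖, fun t z hz => ?_⟩)
    calc R ≤ ‖z‖ * ‖a t₀‖ := (div_le_iff₀ (norm_pos_iff.2 (ha t₀))).1 hz
      _ ≤ ‖z‖ * ‖a t‖ := by gcongr; exact ht₀ t
      _ = ‖a t * z‖ := by rw [norm_mul, mul_comm]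
  have F_zero : F 0 = 1 := Homeomorph.ext fun z => by simp [F, a]
  have F_one : F 1 = Homeomorph.mulLeft₀ c hc :=
    Homeomorph.ext fun z => by simp [F, a, Complex.exp_log hc]
  exact (F_zero ▸ F_one ▸ hF).symm

section Slope

variable {𝕜 E : Type*} [NontriviallyNormedField 𝕜] [NormedAddCommGroup E] [NormedSpace 𝕜 E]
  {f : 𝕜 → E} {a : 𝕜}

theorem continuous_dslope (hf : Continuous f) (ha : DifferentiableAt 𝕜 f a) :
    Continuous (dslope f a) := by
  rw [← continuousOn_univ, continuousOn_dslope univ_mem]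
  exact ⟨hf.continuousOn, ha⟩

theorem dslope_ne_zero (hf : Function.Injective f) (ha : deriv f a ≠ 0) (w : 𝕜) :
    dslope f a w ≠ 0 := by
  rcases eq_or_ne w a with rfl | hw
  · rwa [dslope_same]
  · rw [dslope_of_ne _ hw]
    exact slope_eq_zero_iff.not.2 (hf.ne hw.symm)

theorem eq_smul_dslope (hf₀ : f 0 = 0) (w : 𝕜) : f w = w • dslope f 0 w := by
  simpa [hf₀] using (sub_smul_dslope f 0 w).symm

end Slope

theorem complex_coe_ne_zero {t : I} (ht : t ≠ 0) : ((t : ℝ) : ℂ) ≠ 0 := by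
  simpa using ht

/-- The linearization `f (t z) / t` of `f` at the origin is proper uniformly in `t`: where `t z`
stays in a fixed compact set, the slope of `f` is bounded below, and elsewhere `f (t z)` itself
is large. -/
theorem exists_le_norm_dslope_mul (f : ℂ ≃ₜ ℂ) (hf₀ : f 0 = 0) (hf : deriv f 0 ≠ 0) (R : ℝ) :
    ∃ M : ℝ, ∀ (t : I) (z : ℂ), M ≤ ‖z‖ → R ≤ ‖dslope f 0 ((t : ℝ) * z) * z‖ := by
  have hq : Continuous (dslope f 0) :=
    continuous_dslope f.continuous (differentiableAt_of_deriv_ne_zero hf)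
  have hK : IsCompact (f ⁻¹' closedBall 0 |R|) :=
    f.isCompact_preimage.2 (isCompact_closedBall 0 |R|)
  obtain ⟨w, -, hw⟩ := hK.exists_isMinOn ⟨0, by simp [hf₀]⟩ hq.norm.continuousOn
  have hw_pos : 0 < ‖dslope f 0 w‖ := norm_pos_iff.2 (dslope_ne_zero f.injective hf w)
  refine ⟨R / ‖dslope f 0 w‖, fun t z hz => ?_⟩
  by_cases hin : f ((t : ℝ) * z) ∈ closedBall (0 : ℂ) |R|
  · calc R ≤ ‖z‖ * ‖dslope f 0 w‖ := (div_le_iff₀ hw_pos).1 hz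
      _ ≤ ‖z‖ * ‖dslope f 0 ((t : ℝ) * z)‖ := by gcongr; exact hw hin
      _ = _ := by rw [norm_mul, mul_comm]
  · have hf_mul : f ((t : ℝ) * z) = (t : ℝ) * (dslope f 0 ((t : ℝ) * z) * z) := by
      rw [eq_smul_dslope hf₀, smul_eq_mul, mul_right_comm, mul_assoc]
    calc R ≤ ‖f ((t : ℝ) * z)‖ := (le_abs_self R).trans (le_of_lt (by simpa using hin))
      _ = t * ‖dslope f 0 ((t : ℝ) * z) * z‖ := by
        rw [hf_mul, norm_mul, Complex.norm_of_nonneg t.2.1]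
      _ ≤ _ := mul_le_of_le_one_left (norm_nonneg _) t.2.2

theorem isotopicOnePoint_mulLeft₀_deriv (f : ℂ ≃ₜ ℂ) (hf₀ : f 0 = 0) (hf : deriv f 0 ≠ 0) :
    IsotopicOnePoint f (Homeomorph.mulLeft₀ (deriv f 0) hf) := by
  let F (t : I) : ℂ ≃ₜ ℂ :=
    if ht : t = 0 then Homeomorph.mulLeft₀ (deriv f 0) hf
    else
      let D := Homeomorph.mulLeft₀ ((t : ℝ) : ℂ) (complex_coe_ne_zero ht)
      D⁻¹ * f * D
  have F_apply (t : I) (z : ℂ) : F t z = dslope f 0 ((t : ℝ) * z) * z := by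
    rcases eq_or_ne t 0 with rfl | ht
    · simp [F]
    · have ht' := complex_coe_ne_zero ht
      calc F t z = ((t : ℝ) : ℂ)⁻¹ * f ((t : ℝ) * z) := by simp [F, ht]
        _ = dslope f 0 ((t : ℝ) * z) * z := by
          rw [eq_smul_dslope hf₀, smul_eq_mul, mul_assoc, inv_mul_cancel_left₀ ht', mul_comm]
  have hq : Continuous (dslope f 0) :=
    continuous_dslope f.continuous (differentiableAt_of_deriv_ne_zero hf)
  have hF : IsotopicOnePoint (F 0) (F 1) := by
    refine isotopicOnePoint_of_family F ?_ (tendsto_cocompact_of_norm_le fun R => ?_)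
    · simp only [F_apply]
      fun_prop
    · simpa only [F_apply] using exists_le_norm_dslope_mul f hf₀ hf R
  have F_zero : F 0 = Homeomorph.mulLeft₀ (deriv f 0) hf := by simp [F]
  have F_one : F 1 = f := Homeomorph.ext fun z => by simp [F]
  exact (F_zero ▸ F_one ▸ hF).symm

theorem isotopicOnePoint_one_of_deriv_ne_zero (f : ℂ ≃ₜ ℂ) (hf : deriv f 0 ≠ 0) :
    IsotopicOnePoint f 1 := by
  let T : ℂ ≃ₜ ℂ := Homeomorph.subRight (f 0)
  have hT : IsotopicOnePoint T 1 :=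
    isotopicOnePoint_one_of_norm_sub_le T (C := ‖f 0‖) fun z => by simp [T]
  have deriv_eq : deriv (T * f) 0 = deriv f 0 := deriv_sub_const (f := f) (f 0)
  have hTf : IsotopicOnePoint (T * f) 1 :=
    (isotopicOnePoint_mulLeft₀_deriv (T * f) (sub_self (f 0)) (deriv_eq ▸ hf)).trans
      (isotopicOnePoint_mulLeft₀_one _)
  exact (hT.mul (.refl f)).symm.trans hTf

end PlaneIsotopy

/-! ### Homeomorphisms of the circle -/

section CircleLift

open Real

theorem exists_continuousMap_circleExp_eq {E : Type*} [NormedAddCommGroup E] [NormedSpace ℝ E]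
    (f : C(E, Circle)) : ∃ F : C(E, ℝ), ∀ x, Circle.exp (F x) = f x := by
  obtain ⟨a, ha⟩ := Circle.exp_surjective (f 0)
  obtain ⟨F, ⟨-, hF⟩, -⟩ := Circle.isCoveringMap_exp.existsUnique_continuousMap_lifts f 0 a ha
  exact ⟨F, congrFun hF⟩

theorem exists_eq_add_int_mul_two_pi {X : Type*} [TopologicalSpace X] [ConnectedSpace X]
    {f g : X → ℝ} (hf : Continuous f) (hg : Continuous g)
    (h : ∀ x, Circle.exp (f x) = Circle.exp (g x)) : ∃ n : ℤ, ∀ x, f x = g x + n * (2 * π) := by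
  obtain ⟨a⟩ : Nonempty X := inferInstance
  obtain ⟨n, hn⟩ := Circle.exp_eq_exp.1 (h a)
  refine ⟨n, congrFun (Circle.isCoveringMap_exp.eq_of_comp_eq hf (by fun_prop) ?_ a hn)⟩
  ext x
  simp [Circle.exp_add, h]

theorem add_two_pi_le_of_lift {γ : Circle → Circle} {G : ℝ → ℝ} (hG : StrictMono G)
    (hγ : ∀ x, Circle.exp (G x) = γ (Circle.exp x)) (x : ℝ) : G x + 2 * π ≤ G (x + 2 * π) := by
  obtain ⟨m, hm⟩ : ∃ m : ℤ, G (x + 2 * π) = G x + m * (2 * π) :=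
    Circle.exp_eq_exp.1 (by rw [hγ, hγ, Circle.exp_add_two_pi])
  have hm_pos : (0 : ℝ) < m :=
    pos_of_mul_pos_left (by linarith [hG (lt_add_of_pos_right x two_pi_pos)]) two_pi_pos.le
  have one_le : (1 : ℝ) ≤ m := by exact_mod_cast hm_pos
  rw [hm]
  exact add_le_add_right (le_mul_of_one_le_left two_pi_pos.le one_le) _

theorem map_add_two_pi_of_lift {γ : Circle ≃ Circle} {G : ℝ ≃o ℝ}
    (hγ : ∀ x, Circle.exp (G x) = γ (Circle.exp x)) (x : ℝ) : G (x + 2 * π) = G x + 2 * π := by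
  refine le_antisymm ?_ (add_two_pi_le_of_lift G.strictMono hγ x)
  have hγ_symm (y : ℝ) : Circle.exp (G.symm y) = γ.symm (Circle.exp y) := by
    rw [Equiv.eq_symm_apply, ← hγ, G.apply_symm_apply]
  simpa [← G.le_symm_apply] using add_two_pi_le_of_lift G.symm.strictMono hγ_symm (G x)

theorem bijective_of_lift {γ : Circle ≃ₜ Circle} {G : ℝ → ℝ} (hG : Continuous G)
    (hγ : ∀ x, Circle.exp (G x) = γ (Circle.exp x)) : Function.Bijective G := by
  obtain ⟨K, hK⟩ := exists_continuousMap_circleExp_eq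
    ⟨fun x => γ.symm (Circle.exp x), by fun_prop⟩
  replace hK (x : ℝ) : Circle.exp (K x) = γ.symm (Circle.exp x) := hK x
  obtain ⟨n, hn⟩ := exists_eq_add_int_mul_two_pi (K.continuous.comp hG) continuous_id
    fun x => by simp [hK, hγ]
  obtain ⟨m, hm⟩ := exists_eq_add_int_mul_two_pi (hG.comp K.continuous) continuous_id
    fun x => by simp [hK, hγ]
  refine ⟨fun x y hxy => ?_, fun y => ⟨K (y - m * (2 * π)), ?_⟩⟩
  · have := hn x
    simp only [Function.comp_apply, id_eq, hxy] at this
    exact add_right_cancel (this.symm.trans (hn y))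
  · simpa using hm (y - m * (2 * π))

theorem exists_orderIso_lift (γ : Circle ≃ₜ Circle) :
    ∃ G : ℝ ≃o ℝ, (∀ x, G (x + 2 * π) = G x + 2 * π) ∧
      ((∀ x, Circle.exp (G x) = γ (Circle.exp x)) ∨
        ∀ x, Circle.exp (G x) = (γ (Circle.exp x))⁻¹) := by
  obtain ⟨G, hG⟩ := exists_continuousMap_circleExp_eq ⟨fun x => γ (Circle.exp x), by fun_prop⟩
  replace hG (x : ℝ) : Circle.exp (G x) = γ (Circle.exp x) := hG x
  have hbij := bijective_of_lift G.continuous hG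
  rcases G.continuous.strictMono_of_inj hbij.injective with hmono | hanti
  · let K := hmono.orderIsoOfSurjective G hbij.surjective
    exact ⟨K, map_add_two_pi_of_lift (γ := γ.toEquiv) hG, Or.inl hG⟩
  · have hG_neg (x : ℝ) : Circle.exp (-G x) = (γ (Circle.exp x))⁻¹ := by rw [Circle.exp_neg, hG]
    let K := StrictMono.orderIsoOfSurjective (fun x => -G x) (fun _ _ h => neg_lt_neg (hanti h))
      (neg_surjective.comp hbij.surjective)
    exact ⟨K, map_add_two_pi_of_lift (γ := γ.toEquiv.trans (Equiv.inv Circle)) hG_neg,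
      Or.inr hG_neg⟩

theorem exists_orderIso_eq_add_mul_sub (G : ℝ ≃o ℝ) (t : I) :
    ∃ K : ℝ ≃o ℝ, ∀ x, K x = x + t * (G x - x) := by
  let k (x : ℝ) : ℝ := x + t * (G x - x)
  have k_eq (x : ℝ) : k x = (1 - (t : ℝ)) * x + t * G x := by ring
  have hmono : StrictMono k := fun x y hxy => by
    have hG := G.strictMono hxy
    rw [k_eq, k_eq]
    rcases t.2.1.eq_or_lt with ht | ht
    · simpa [← ht] using hxy
    · exact add_lt_add_of_le_of_lt
        (mul_le_mul_of_nonneg_left hxy.le (sub_nonneg.2 t.2.2)) (mul_lt_mul_of_pos_left hG ht)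
  have hcont : Continuous k := by
    have := G.continuous
    fun_prop
  have h_top : Tendsto k atTop atTop := by
    refine tendsto_atTop_mono (fun x => ?_) (tendsto_inf_atTop _ tendsto_id G.tendsto_atTop)
    rw [k_eq]
    exact Convex.min_le_combo _ _ (sub_nonneg.2 t.2.2) t.2.1 (by ring)
  have h_bot : Tendsto k atBot atBot := by
    refine tendsto_atBot_mono (fun x => ?_) (tendsto_sup_atBot _ tendsto_id G.tendsto_atBot)
    rw [k_eq]
    exact Convex.combo_le_max _ _ (sub_nonneg.2 t.2.2) t.2.1 (by ring)
  exact ⟨hmono.orderIsoOfSurjective k (hcont.surjective h_top h_bot), fun x => rfl⟩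

end CircleLift

section AngularMap

open Real

theorem exists_eq_mul_circleExp (z : ℂ) : ∃ r : ℝ, 0 ≤ r ∧ ∃ x : ℝ, z = r * Circle.exp x :=
  ⟨‖z‖, norm_nonneg z, z.arg, (Complex.norm_mul_exp_arg_mul_I z).symm⟩

/-- The self-map of the plane that preserves circles centred at the origin and acts on the
argument by `G`; it is a homeomorphism if `G` lifts a homeomorphism of the circle. -/
noncomputable def angularMap (G : ℝ → ℝ) (z : ℂ) : ℂ :=
  Circle.exp (G z.arg - z.arg) * z

theorem norm_angularMap (G : ℝ → ℝ) (z : ℂ) : ‖angularMap G z‖ = ‖z‖ := by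
  simp [angularMap]

theorem angularMap_mul_circleExp {G : ℝ → ℝ} (hG : ∀ x, G (x + 2 * π) = G x + 2 * π) {r : ℝ}
    (hr : 0 ≤ r) (x : ℝ) : angularMap G (r * Circle.exp x) = r * Circle.exp (G x) := by
  rcases hr.eq_or_lt with rfl | hr
  · simp [angularMap]
  have hper : Function.Periodic (fun x => G x - x) (2 * π) := fun x => by simp [hG]
  obtain ⟨m, hm⟩ := Circle.exp_eq_exp.1 (Circle.exp_arg (Circle.exp x))
  have h_arg : G ((r : ℂ) * Circle.exp x).arg - ((r : ℂ) * Circle.exp x).arg = G x - x := by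
    rw [Complex.arg_real_mul _ hr, hm]
    exact hper.int_mul m x
  rw [angularMap, h_arg, mul_left_comm, ← Circle.coe_mul, ← Circle.exp_add, sub_add_cancel]

theorem continuousAt_comp_arg {X : Type*} [TopologicalSpace X] {v : ℝ → X} (hv : Continuous v)
    (hper : Function.Periodic v (2 * π)) {z : ℂ} (hz : z ≠ 0) :
    ContinuousAt (fun z : ℂ => v z.arg) z := by
  have hlift : Continuous (hper.lift : Real.Angle → X) :=
    (QuotientAddGroup.isQuotientMap_mk _).continuous_iff.2 hv
  exact hlift.continuousAt.comp (Complex.continuousAt_arg_coe_angle hz)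

theorem continuous_circleExp_mul_comp_arg {v : ℝ → ℝ} (hv : Continuous v)
    (hper : Function.Periodic v (2 * π)) :
    Continuous fun p : ℝ × ℂ => (Circle.exp (p.1 * v p.2.arg) : ℂ) * p.2 := by
  rw [continuous_iff_continuousAt]
  rintro ⟨t, z⟩
  rcases eq_or_ne z 0 with rfl | hz
  · have h_norm : Tendsto (fun p : ℝ × ℂ => ‖p.2‖) (𝓝 (t, 0)) (𝓝 0) := by
      simpa using (continuous_snd (X := ℝ) (Y := ℂ)).norm.tendsto (t, 0)
    have norm_eq (p : ℝ × ℂ) : ‖(Circle.exp (p.1 * v p.2.arg) : ℂ) * p.2‖ = ‖p.2‖ := by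
      rw [norm_mul, Circle.norm_coe, one_mul]
    simpa only [ContinuousAt, mul_zero] using squeeze_zero_norm (fun p => (norm_eq p).le) h_norm
  · have h_arg : ContinuousAt (fun p : ℝ × ℂ => v p.2.arg) (t, z) :=
      ContinuousAt.comp (g := fun w : ℂ => v w.arg) (continuousAt_comp_arg hv hper hz)
        continuousAt_snd
    have h_exp : Continuous fun x : ℝ => (Circle.exp x : ℂ) := by fun_prop
    exact (h_exp.continuousAt.comp (continuousAt_fst.mul h_arg)).mul continuousAt_snd

variable (G : ℝ ≃o ℝ) (hG : ∀ x, G (x + 2 * π) = G x + 2 * π)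
include hG

theorem continuous_angularMap_family :
    Continuous fun p : I × ℂ => angularMap (fun x => x + p.1 * (G x - x)) p.2 := by
  have := continuous_circleExp_mul_comp_arg (G.continuous.sub continuous_id) fun x => by
    simp [hG]
  simp only [angularMap, add_sub_cancel_left]
  exact this.comp (continuous_subtype_val.prodMap continuous_id)

theorem continuous_angularMap : Continuous (angularMap G) := by
  have := (continuous_angularMap_family G hG).comp (Continuous.prodMk_right (1 : I))
  exact this.congr fun z => by simp

theorem symm_add_two_pi (y : ℝ) : G.symm (y + 2 * π) = G.symm y + 2 * π := by
  rw [G.symm_apply_eq, hG, G.apply_symm_apply]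

/-- The homeomorphism of the plane that acts on arguments by `G`. -/
noncomputable def angularHomeomorph : ℂ ≃ₜ ℂ where
  toFun := angularMap G
  invFun := angularMap G.symm
  left_inv z := by
    obtain ⟨r, hr, x, rfl⟩ := exists_eq_mul_circleExp z
    rw [angularMap_mul_circleExp hG hr, angularMap_mul_circleExp (symm_add_two_pi G hG) hr,
      G.symm_apply_apply]
  right_inv z := by
    obtain ⟨r, hr, x, rfl⟩ := exists_eq_mul_circleExp z
    rw [angularMap_mul_circleExp (symm_add_two_pi G hG) hr, angularMap_mul_circleExp hG hr,
      G.apply_symm_apply]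
  continuous_toFun := continuous_angularMap G hG
  continuous_invFun := continuous_angularMap G.symm (symm_add_two_pi G hG)

theorem isotopicOnePoint_angularHomeomorph_one : IsotopicOnePoint (angularHomeomorph G hG) 1 := by
  choose K hK using exists_orderIso_eq_add_mul_sub G
  have hK_per (t : I) (x : ℝ) : K t (x + 2 * π) = K t x + 2 * π := by
    rw [hK, hK, hG]
    ring
  let F (t : I) : ℂ ≃ₜ ℂ := angularHomeomorph (K t) (hK_per t)
  have F_apply (t : I) (z : ℂ) : F t z = angularMap (fun x => x + t * (G x - x)) z :=
    congrArg (angularMap · z) (funext (hK t))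
  have hF : IsotopicOnePoint (F 0) (F 1) := by
    refine isotopicOnePoint_of_family F ?_ (tendsto_cocompact_of_norm_le fun R => ⟨R, ?_⟩)
    · simpa only [F_apply] using continuous_angularMap_family G hG
    · simp [F_apply, norm_angularMap]
  have F_zero : F 0 = 1 := Homeomorph.ext fun z => by simp [F_apply, angularMap]
  have F_one : F 1 = angularHomeomorph G hG := Homeomorph.ext fun z => by
    simp [F_apply, angularHomeomorph]
  exact (F_zero ▸ F_one ▸ hF).symm

end AngularMap

theorem exists_homeomorph_extending_circle (γ : Circle ≃ₜ Circle) :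
    ∃ C : ℂ ≃ₜ ℂ, (∀ z, ‖C z‖ = ‖z‖) ∧ (∀ z : Circle, C z = γ z) ∧
      (IsotopicOnePoint C 1 ∨ IsotopicOnePoint C Complex.conjLIE.toHomeomorph) := by
  obtain ⟨G, hG, hγ⟩ := exists_orderIso_lift γ
  let A := angularHomeomorph G hG
  have A_norm : ∀ z, ‖A z‖ = ‖z‖ := norm_angularMap G
  have A_exp (x : ℝ) : A (Circle.exp x) = Circle.exp (G x) := by
    have := angularMap_mul_circleExp hG zero_le_one x
    rwa [Complex.ofReal_one, one_mul, one_mul] at this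
  have hA : IsotopicOnePoint A 1 := isotopicOnePoint_angularHomeomorph_one G hG
  rcases hγ with hγ | hγ
  · refine ⟨A, A_norm, fun z => ?_, Or.inl hA⟩
    obtain ⟨x, rfl⟩ := Circle.exp_surjective z
    rw [A_exp, hγ]
  · let conj := Complex.conjLIE.toHomeomorph
    refine ⟨conj * A, fun z => by simp [conj, A_norm], fun z => ?_,
      Or.inr ((IsotopicOnePoint.refl conj).mul hA)⟩
    obtain ⟨x, rfl⟩ := Circle.exp_surjective z
    calc conj (A (Circle.exp x)) = starRingEnd ℂ (Circle.exp (G x)) := by rw [A_exp]; rfl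
      _ = γ (Circle.exp x) := by rw [← Circle.coe_inv_eq_conj, hγ, inv_inv]

/-! ### Homeomorphisms of the plane -/

theorem exists_homeomorph_eqOn_eqOn_compl {X : Type*} [TopologicalSpace X] [T2Space X] {K : Set X}
    (hK : IsCompact K) {g : X → X} (hg : ContinuousOn g K) (hbij : BijOn g K K)
    (hfr : EqOn g id (frontier K)) : ∃ e : X ≃ₜ X, EqOn e g K ∧ EqOn e id Kᶜ := by
  classical
  let f : X → X := K.piecewise g id
  have f_eq : EqOn f g K := piecewise_eqOn K g id
  have f_eq_compl : EqOn f id Kᶜ := piecewise_eqOn_compl K g id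
  have f_eq_closure : EqOn f id (closure Kᶜ) := fun x hx => by
    by_cases hxK : x ∈ K
    · exact (f_eq hxK).trans (hfr ⟨subset_closure hxK, by rwa [closure_compl] at hx⟩)
    · exact f_eq_compl hxK
  have hf : Continuous f :=
    continuous_piecewise hfr (hK.isClosed.closure_eq.symm ▸ hg) continuousOn_id
  have hf_bij : Function.Bijective f := by
    rw [← bijOn_univ, ← union_compl_self K]
    have hK_bij : BijOn f K K := hbij.congr f_eq.symm
    have hKc_bij : BijOn f Kᶜ Kᶜ := (bijOn_id _).congr f_eq_compl.symm
    refine hK_bij.union hKc_bij (injOn_union disjoint_compl_right |>.2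
      ⟨hK_bij.injOn, hKc_bij.injOn, fun x hx y hy hxy => ?_⟩)
    exact hKc_bij.mapsTo hy (hxy ▸ hK_bij.mapsTo hx)
  have hf_closed : IsClosedMap f := fun S hS => by
    have union_eq_univ : K ∪ closure Kᶜ = univ :=
      compl_subset_iff_union.1 subset_closure
    have image_eq : f '' S = f '' (S ∩ K) ∪ S ∩ closure Kᶜ := by
      rw [← (f_eq_closure.mono inter_subset_right).image_eq_self, ← image_union,
        ← inter_union_distrib_left, union_eq_univ, inter_univ]
    rw [image_eq]
    exact ((hK.inter_left hS).image hf).isClosed.union (hS.inter isClosed_closure)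
  exact ⟨(Equiv.ofBijective f hf_bij).toHomeomorphOfContinuousClosed hf hf_closed, f_eq,
    f_eq_compl⟩

theorem exists_circle_homeomorph_coe_eq {g : ℂ → ℂ} (hg : ContinuousOn g (sphere 0 1))
    (hbij : BijOn g (sphere 0 1) (sphere 0 1)) :
    ∃ γ : Circle ≃ₜ Circle, ∀ z : Circle, (γ z : ℂ) = g z := by
  have mem_sphere (z : Circle) : (z : ℂ) ∈ sphere (0 : ℂ) 1 := z.2
  let f (z : Circle) : Circle := ⟨g z, hbij.mapsTo (mem_sphere z)⟩
  have hf : Continuous f :=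
    (hg.comp_continuous continuous_subtype_val mem_sphere).subtype_mk _
  have hf_bij : Function.Bijective f := by
    refine ⟨fun z w h => Circle.ext (hbij.injOn (mem_sphere z) (mem_sphere w) ?_), fun w => ?_⟩
    · exact congrArg Subtype.val h
    · obtain ⟨z, hz, hzw⟩ := hbij.surjOn (mem_sphere w)
      exact ⟨⟨z, hz⟩, Circle.ext hzw⟩
  exact ⟨hf.homeoOfEquivCompactToT2 (f := Equiv.ofBijective f hf_bij), fun z => rfl⟩

theorem bijOn_sphere_of_bijOn_closedBall {X : Type*} [PseudoMetricSpace X] {g : X → X} {x : X}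
    {r : ℝ} (hbij : BijOn g (closedBall x r) (closedBall x r))
    (hsphere : MapsTo g (sphere x r) (sphere x r)) (hball : MapsTo g (ball x r) (ball x r)) :
    BijOn g (sphere x r) (sphere x r) := by
  refine ⟨hsphere, hbij.injOn.mono sphere_subset_closedBall, fun w hw => ?_⟩
  obtain ⟨z, hz, rfl⟩ := hbij.surjOn (sphere_subset_closedBall hw)
  refine ⟨z, ?_, rfl⟩
  rw [← closedBall_sdiff_ball]
  exact ⟨hz, fun hz' => sphere_disjoint_ball.notMem_of_mem_left hw (hball hz')⟩

theorem exists_isotopicOnePoint_mul_one (h : ℂ ≃ₜ ℂ) :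
    ∃ C : ℂ ≃ₜ ℂ, (IsotopicOnePoint C 1 ∨ IsotopicOnePoint C Complex.conjLIE.toHomeomorph) ∧
      IsotopicOnePoint (h * C) 1 := by
  obtain ⟨g, hg, hbij, hsphere, hball, hhg⟩ := exists_conformal_parametrization_closedBall h
  obtain ⟨γ, hγ⟩ := exists_circle_homeomorph_coe_eq (hg.mono sphere_subset_closedBall)
    (bijOn_sphere_of_bijOn_closedBall hbij hsphere hball)
  obtain ⟨C, C_norm, hCγ, hC⟩ := exists_homeomorph_extending_circle γ
  have C_symm_norm (z : ℂ) : ‖C.symm z‖ = ‖z‖ := by rw [← C_norm, C.apply_symm_apply]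
  have C_symm_bij : BijOn C.symm (closedBall 0 1) (closedBall 0 1) := by
    exact C.symm.toEquiv.bijOn fun z => by simp [C_symm_norm]
  have C_symm_g (z : ℂ) (hz : z ∈ sphere (0 : ℂ) 1) : C.symm (g z) = z := by
    rw [C.symm_apply_eq]
    exact ((hCγ ⟨z, hz⟩).trans (hγ ⟨z, hz⟩)).symm
  obtain ⟨K, hK_ball, hK_compl⟩ := exists_homeomorph_eqOn_eqOn_compl
    (isCompact_closedBall (0 : ℂ) 1) (C.symm.continuous.comp_continuousOn hg)
    (C_symm_bij.comp hbij) (by rwa [frontier_closedBall _ one_ne_zero])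
  have hK : IsotopicOnePoint K 1 := by
    refine isotopicOnePoint_one_of_norm_sub_le K (C := 2) fun z => ?_
    by_cases hz : z ∈ closedBall (0 : ℂ) 1
    · have hKz : K z ∈ closedBall (0 : ℂ) 1 := hK_ball hz ▸ C_symm_bij.mapsTo (hbij.mapsTo hz)
      rw [mem_closedBall_zero_iff] at hz hKz
      linarith [norm_sub_le (K z) z]
    · simp [hK_compl hz]
  have hhCK : IsotopicOnePoint (h * C * K) 1 := by
    refine isotopicOnePoint_one_of_deriv_ne_zero _ ?_
    have h_eq : h * C * K =ᶠ[𝓝 0] h ∘ g := by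
      filter_upwards [closedBall_mem_nhds (0 : ℂ) one_pos] with z hz
      simp [hK_ball hz]
    rw [h_eq.deriv_eq]
    exact hhg.deriv_ne_zero 0 (mem_ball_self one_pos)
  exact ⟨C, hC, ((IsotopicOnePoint.refl (h * C)).mul hK).symm.trans hhCK⟩

theorem isotopicOnePoint_one_or_conj (h : ℂ ≃ₜ ℂ) :
    IsotopicOnePoint h 1 ∨ IsotopicOnePoint h Complex.conjLIE.toHomeomorph := by
  obtain ⟨C, hC | hC, hhC⟩ := exists_isotopicOnePoint_mul_one h
  · exact Or.inl (((IsotopicOnePoint.refl h).mul hC).symm.trans hhC)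
  · right
    let conj := Complex.conjLIE.toHomeomorph
    have hh_conj : IsotopicOnePoint (h * conj) 1 :=
      ((IsotopicOnePoint.refl h).mul hC).symm.trans hhC
    have conj_mul_conj : conj * conj = 1 := Homeomorph.ext fun z => by simp [conj]
    have := hh_conj.mul (.refl conj)
    rwa [mul_assoc, conj_mul_conj, mul_one, one_mul] at this

/-! ### Homeomorphisms of the sphere -/

open scoped Quaternion

/-- The unit sphere in `ℝ³`. -/
abbrev Sphere2 : Type := sphere (0 : EuclideanSpace ℝ (Fin 3)) 1

theorem mem_sphere2_iff {v : EuclideanSpace ℝ (Fin 3)} :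
    v ∈ sphere (0 : EuclideanSpace ℝ (Fin 3)) 1 ↔ v 0 ^ 2 + v 1 ^ 2 + v 2 ^ 2 = 1 := by
  rw [EuclideanSpace.sphere_zero_eq _ zero_le_one]
  simp [Fin.sum_univ_three]

theorem Sphere2.sum_sq_eq_one (x : Sphere2) : x.1 0 ^ 2 + x.1 1 ^ 2 + x.1 2 ^ 2 = 1 :=
  mem_sphere2_iff.1 x.2

/-- A point of the sphere regarded as a purely imaginary quaternion. Its image is the set of
quaternions of square `-1`, which makes rotations available as conjugations. -/
def Sphere2.toQuaternion (x : Sphere2) : ℍ[ℝ] := ⟨0, x.1 0, x.1 1, x.1 2⟩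

namespace Sphere2

@[simp] theorem toQuaternion_re (x : Sphere2) : x.toQuaternion.re = 0 := rfl
@[simp] theorem toQuaternion_imI (x : Sphere2) : x.toQuaternion.imI = x.1 0 := rfl
@[simp] theorem toQuaternion_imJ (x : Sphere2) : x.toQuaternion.imJ = x.1 1 := rfl
@[simp] theorem toQuaternion_imK (x : Sphere2) : x.toQuaternion.imK = x.1 2 := rfl

theorem toQuaternion_mul_self (x : Sphere2) : x.toQuaternion * x.toQuaternion = -1 := by
  have hx := x.sum_sq_eq_one
  ext <;> simp <;> linarith

theorem continuous_toQuaternion : Continuous toQuaternion := by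
  have heq : toQuaternion =
      fun x => Quaternion.linearIsometryEquivTuple.symm !₂[0, x.1 0, x.1 1, x.1 2] := by
    ext x <;> simp [Quaternion.linearIsometryEquivTuple_symm_apply]
  rw [heq]
  fun_prop

theorem toQuaternion_injective : Function.Injective toQuaternion := by
  intro x y hxy
  rw [Quaternion.ext_iff] at hxy
  ext i
  fin_cases i
  exacts [hxy.2.1, hxy.2.2.1, hxy.2.2.2]

theorem isEmbedding_toQuaternion : IsEmbedding toQuaternion :=
  (continuous_toQuaternion.isClosedEmbedding toQuaternion_injective).isEmbedding

@[simp] theorem toQuaternion_neg (x : Sphere2) : (-x).toQuaternion = -x.toQuaternion := by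
  ext <;> simp

end Sphere2

theorem re_eq_zero_of_mul_self_eq_neg_one {y : ℍ[ℝ]} (hy : y * y = -1) : y.re = 0 := by
  obtain ⟨hre, hI, hJ, hK⟩ := Quaternion.ext_iff.1 hy
  simp only [Quaternion.re_mul, Quaternion.imI_mul, Quaternion.imJ_mul, Quaternion.imK_mul,
    Quaternion.re_neg, Quaternion.imI_neg, Quaternion.imJ_neg, Quaternion.imK_neg,
    Quaternion.re_one, Quaternion.imI_one, Quaternion.imJ_one, Quaternion.imK_one] at hre hI hJ hK
  by_contra hne
  have hI₀ : y.imI = 0 := (mul_eq_zero.1 (by linarith : y.re * y.imI = 0)).resolve_left hne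
  have hJ₀ : y.imJ = 0 := (mul_eq_zero.1 (by linarith : y.re * y.imJ = 0)).resolve_left hne
  have hK₀ : y.imK = 0 := (mul_eq_zero.1 (by linarith : y.re * y.imK = 0)).resolve_left hne
  rw [hI₀, hJ₀, hK₀] at hre
  nlinarith

theorem exists_toQuaternion_eq {y : ℍ[ℝ]} (hy : y * y = -1) :
    ∃ x : Sphere2, x.toQuaternion = y := by
  have hre := re_eq_zero_of_mul_self_eq_neg_one hy
  have hsq := congrArg (fun q : ℍ[ℝ] => q.re) hy
  simp only [Quaternion.re_mul, hre, Quaternion.re_neg, Quaternion.re_one] at hsq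
  refine ⟨⟨!₂[y.imI, y.imJ, y.imK], mem_sphere2_iff.2 ?_⟩, by ext <;> simp [hre]⟩
  simp only [Matrix.cons_val]
  linarith

theorem exists_homeomorph_toQuaternion_eq {q : ℍ[ℝ]} (hq : q ≠ 0) :
    ∃ R : Sphere2 ≃ₜ Sphere2, ∀ x, (R x).toQuaternion = q * x.toQuaternion * q⁻¹ := by
  have hconj : ∀ q : ℍ[ℝ], q ≠ 0 → ∃ f : Sphere2 → Sphere2, Continuous f ∧
      ∀ x, (f x).toQuaternion = q * x.toQuaternion * q⁻¹ := fun q hq => by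
    have hsq (x : Sphere2) : q * x.toQuaternion * q⁻¹ * (q * x.toQuaternion * q⁻¹) = -1 := by
      calc q * x.toQuaternion * q⁻¹ * (q * x.toQuaternion * q⁻¹)
          = q * (x.toQuaternion * x.toQuaternion) * q⁻¹ := by simp [mul_assoc, hq]
        _ = -1 := by simp [x.toQuaternion_mul_self, hq]
    choose f hf using fun x => exists_toQuaternion_eq (hsq x)
    refine ⟨f, Sphere2.isEmbedding_toQuaternion.continuous_iff.2 ?_, hf⟩
    have hcont := Sphere2.continuous_toQuaternion
    exact (by fun_prop : Continuous fun x : Sphere2 => q * x.toQuaternion * q⁻¹).congr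
      fun x => (hf x).symm
  obtain ⟨f, hf, hfq⟩ := hconj q hq
  obtain ⟨g, hg, hgq⟩ := hconj q⁻¹ (inv_ne_zero hq)
  refine ⟨⟨⟨f, g, fun x => ?_, fun x => ?_⟩, hf, hg⟩, hfq⟩ <;>
  · apply Sphere2.toQuaternion_injective
    simp [hfq, hgq, mul_assoc, hq]

theorem semiconjBy_sub_mul_mul {R : Type*} [Ring R] {x y : R} (hx : x * x = -1)
    (hy : y * y = -1) (r : R) : SemiconjBy (r - y * r * x) x y := by
  have hyrx : y * (y * r * x) = -(r * x) := by rw [mul_assoc y r, ← mul_assoc, hy, neg_one_mul]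
  rw [SemiconjBy, sub_mul, mul_sub, mul_assoc _ x, hx, hyrx]
  noncomm_ring

theorem exists_not_commute_of_mul_self_eq_neg_one {x : ℍ[ℝ]} (hx : x * x = -1) :
    ∃ r, ¬ Commute r x := by
  by_contra! hcomm
  let i : Sphere2 := ⟨!₂[1, 0, 0], mem_sphere2_iff.2 (by simp)⟩
  let j : Sphere2 := ⟨!₂[0, 1, 0], mem_sphere2_iff.2 (by simp)⟩
  have hi := hcomm i.toQuaternion
  have hj := hcomm j.toQuaternion
  simp only [commute_iff_eq, Quaternion.ext_iff, Quaternion.re_mul, Quaternion.imI_mul,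
    Quaternion.imJ_mul, Quaternion.imK_mul, Sphere2.toQuaternion_re, Sphere2.toQuaternion_imI,
    Sphere2.toQuaternion_imJ, Sphere2.toQuaternion_imK, Matrix.cons_val, i, j] at hi hj
  have hre := congrArg (fun q : ℍ[ℝ] => q.re) hx
  have hI : x.imI = 0 := by linarith
  have hJ : x.imJ = 0 := by linarith
  have hK : x.imK = 0 := by linarith
  simp [re_eq_zero_of_mul_self_eq_neg_one hx, hI, hJ, hK] at hre

theorem exists_ne_zero_semiconjBy {x y : ℍ[ℝ]} (hx : x * x = -1) (hy : y * y = -1) :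
    ∃ q ≠ 0, SemiconjBy q x y := by
  by_contra! hne
  have hzero (r : ℍ[ℝ]) : r * x = -(y * r) := by
    have hr : r = y * r * x := by
      by_contra hr
      exact hne _ (sub_ne_zero.2 hr) (semiconjBy_sub_mul_mul hx hy r)
    calc r * x = y * r * x * x := by rw [← hr]
      _ = -(y * r) := by rw [mul_assoc, hx, mul_neg_one]
  have hxy : x = -y := by simpa using hzero 1
  obtain ⟨r, hr⟩ := exists_not_commute_of_mul_self_eq_neg_one hx
  exact hr (by rw [commute_iff_eq, hzero r, hxy, neg_mul])

theorem isPathConnected_quaternion_compl_zero : IsPathConnected ({0}ᶜ : Set ℍ[ℝ]) :=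
  isPathConnected_compl_singleton_of_one_lt_rank (by simp [Quaternion.rank_eq_four]) 0

theorem exists_isotopic_one_apply_eq (p p' : Sphere2) :
    ∃ R : Sphere2 ≃ₜ Sphere2, Isotopic 1 R ∧ R p = p' := by
  obtain ⟨q, hq, hpq⟩ := exists_ne_zero_semiconjBy p.toQuaternion_mul_self
    p'.toQuaternion_mul_self
  obtain ⟨γ, hγ⟩ := isPathConnected_quaternion_compl_zero.joinedIn 1 (by simp) q hq
  choose R hR using fun t => exists_homeomorph_toQuaternion_eq (hγ t)
  refine ⟨R 1, isotopic_iff_exists_family.2 ⟨R, ?_, ?_, rfl⟩, ?_⟩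
  · have hcont := Sphere2.continuous_toQuaternion
    have hinv : Continuous fun t => (γ t)⁻¹ := γ.continuous.inv₀ hγ
    have hconj : Continuous fun x : I × Sphere2 => γ x.1 * x.2.toQuaternion * (γ x.1)⁻¹ :=
      .mul (by fun_prop) (hinv.comp continuous_fst)
    exact Sphere2.isEmbedding_toQuaternion.continuous_iff.2
      (hconj.congr fun x => (hR x.1 x.2).symm)
  · ext1 x
    apply Sphere2.toQuaternion_injective
    simp [hR]
  · apply Sphere2.toQuaternion_injective
    rw [hR, γ.target, hpq.eq, mul_assoc, mul_inv_cancel₀ hq, mul_one]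

/-- An identification of the Riemann sphere with the unit sphere in `ℝ³`. -/
noncomputable def onePointHomeomorphSphere2 : OnePoint ℂ ≃ₜ Sphere2 :=
  onePointEquivSphereOfFinrankEq (ι := Fin 3) (V := ℂ) (by simp)

/-- Complex conjugation, extended by `∞ ↦ ∞` and transported to the sphere. -/
noncomputable def sphereReflection : Sphere2 ≃ₜ Sphere2 :=
  onePointHomeomorphSphere2.symm.trans
    (Complex.conjLIE.toHomeomorph.onePointCongr.trans onePointHomeomorphSphere2)

theorem isotopic_one_or_sphereReflection (h : Sphere2 ≃ₜ Sphere2) :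
    Isotopic h 1 ∨ Isotopic h sphereReflection := by
  let e := onePointHomeomorphSphere2
  obtain ⟨R, hR, hRh⟩ := exists_isotopic_one_apply_eq (h (e OnePoint.infty))
    (e OnePoint.infty)
  have hhRh : Isotopic h (R * h) := hR.mul (.refl h)
  obtain ⟨f, hf⟩ := exists_onePointCongr_eq (e.trans ((R * h).trans e.symm)) (by simp [hRh])
  have hRh_eq : R * h = e.symm.trans (f.onePointCongr.trans e) := by
    rw [hf]; ext1 x; simp
  rw [hRh_eq] at hhRh
  refine (isotopicOnePoint_one_or_conj f).imp (fun hf₁ => ?_) fun hf₁ => ?_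
  · have h1 := Isotopic.conj hf₁ e
    rw [onePointCongr_one] at h1
    exact hhRh.trans (by convert h1 using 1; ext1 x; simp)
  · exact hhRh.trans (Isotopic.conj hf₁ e)

/-! ### The antipodal map is not homotopic to the identity -/

open scoped ComplexConjugate

theorem exists_circle_ne_mul_zpow {n : ℤ} (hn : n ≠ 0) (W : C(ℂ, Circle)) (c : Circle) :
    ∃ z : Circle, W z ≠ c * z ^ n := by
  by_contra! hW
  obtain ⟨L, hL⟩ := exists_continuousMap_circleExp_eq W
  obtain ⟨a, rfl⟩ := Circle.exp_surjective c
  obtain ⟨k, hk⟩ := exists_eq_add_int_mul_two_pi (f := fun θ : ℝ => L (Circle.exp θ))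
    (g := fun θ => a + n * θ) (by fun_prop) (by fun_prop) fun θ => by
      rw [hL, hW, Circle.exp_add, Circle.exp_intCast_mul]
  have h₀ := hk 0
  have h₁ := hk (2 * Real.pi)
  rw [Circle.exp_two_pi, ← Circle.exp_zero, h₀] at h₁
  have hn' : (n : ℝ) * (2 * Real.pi) = 0 := by linarith
  exact mul_ne_zero (Int.cast_ne_zero.2 hn) Real.two_pi_pos.ne' hn'

theorem intUnits_coe_sq (ε : ℤˣ) : ((ε : ℤ) : ℝ) ^ 2 = 1 := by
  rcases Int.units_eq_one_or ε with rfl | rfl <;> simp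

theorem one_add_norm_sq_ne_zero (z : ℂ) : 1 + ‖z‖ ^ 2 ≠ 0 := by positivity

/-- Inverse stereographic projection from the pole `(0, 0, -ε)`. The maps for `ε = 1` and `ε = -1`
agree on the unit circle, which both send to the equator. -/
noncomputable def stereoPoint (ε : ℤˣ) (z : ℂ) : Sphere2 :=
  ⟨!₂[2 * z.re / (1 + ‖z‖ ^ 2), 2 * z.im / (1 + ‖z‖ ^ 2),
    (ε : ℤ) * (1 - ‖z‖ ^ 2) / (1 + ‖z‖ ^ 2)], mem_sphere2_iff.2 <| by
    have hz := one_add_norm_sq_ne_zero z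
    simp only [Matrix.cons_val]
    field_simp
    rw [intUnits_coe_sq, Complex.sq_norm, Complex.normSq_apply]
    ring⟩

theorem continuous_stereoPoint (ε : ℤˣ) : Continuous (stereoPoint ε) := by
  have hz := one_add_norm_sq_ne_zero
  unfold stereoPoint
  fun_prop (disch := assumption)

theorem stereoPoint_neg_one {z : ℂ} (hz : ‖z‖ = 1) : stereoPoint (-1) z = stereoPoint 1 z := by
  simp [stereoPoint, hz]

/-- The coordinate of a tangent vector `v` at `stereoPoint ε z` in the frame which stereographic
projection induces on the tangent planes (up to a positive factor depending on `z`). -/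
noncomputable def stereoCoord (ε : ℤˣ) (z : ℂ) (v : EuclideanSpace ℝ (Fin 3)) : ℂ :=
  v 0 + v 1 * Complex.I - (ε : ℤ) * v 2 * z

theorem inner_stereoPoint_eq_zero_iff {ε : ℤˣ} {z : ℂ} {v : EuclideanSpace ℝ (Fin 3)} :
    inner ℝ (stereoPoint ε z : EuclideanSpace ℝ (Fin 3)) v = 0 ↔
      2 * (z.re * v 0 + z.im * v 1) + (ε : ℤ) * (1 - ‖z‖ ^ 2) * v 2 = 0 := by
  have hz := one_add_norm_sq_ne_zero z
  simp only [PiLp.inner_apply, Fin.sum_univ_three, stereoPoint, RCLike.inner_apply, conj_trivial]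
  simp only [Matrix.cons_val]
  field_simp
  ring_nf

theorem eq_zero_of_stereoCoord_eq_zero {ε : ℤˣ} {z : ℂ} {v : EuclideanSpace ℝ (Fin 3)}
    (hv : inner ℝ (stereoPoint ε z : EuclideanSpace ℝ (Fin 3)) v = 0)
    (h : stereoCoord ε z v = 0) : v = 0 := by
  have hcoord : (v 0 : ℂ) + v 1 * Complex.I = ((ε : ℤ) * v 2 : ℝ) * z := by
    rw [stereoCoord, sub_eq_zero] at h
    rw [h]; push_cast; rfl
  have h₀ : v 0 = (ε : ℤ) * v 2 * z.re := by simpa using congrArg Complex.re hcoord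
  have h₁ : v 1 = (ε : ℤ) * v 2 * z.im := by simpa using congrArg Complex.im hcoord
  have hε : (ε : ℤ) * v 2 * (1 + ‖z‖ ^ 2) = 0 := by
    rw [inner_stereoPoint_eq_zero_iff, h₀, h₁, Complex.sq_norm, Complex.normSq_apply] at hv
    rw [Complex.sq_norm, Complex.normSq_apply]
    linear_combination hv
  have hεv : (ε : ℤ) * v 2 = 0 := (mul_eq_zero.1 hε).resolve_right (one_add_norm_sq_ne_zero z)
  have h₂ : v 2 = 0 := by simpa using hεv
  ext i
  fin_cases i
  exacts [by simp [h₀, h₂], by simp [h₁, h₂], h₂]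

theorem stereoCoord_neg_one {z : ℂ} (hz : ‖z‖ = 1) {v : EuclideanSpace ℝ (Fin 3)}
    (hv : inner ℝ (stereoPoint 1 z : EuclideanSpace ℝ (Fin 3)) v = 0) :
    stereoCoord (-1) z v = -z ^ 2 * conj (stereoCoord 1 z v) := by
  have hz₂ : z.re ^ 2 + z.im ^ 2 = 1 := by
    rw [← one_pow 2, ← hz, Complex.sq_norm, Complex.normSq_apply]; ring
  rw [inner_stereoPoint_eq_zero_iff, hz] at hv
  simp at hv
  apply Complex.ext <;> simp [stereoCoord, pow_two]
  · linear_combination 2 * z.re * hv - (v 0 + v 2 * z.re) * hz₂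
  · linear_combination 2 * z.im * hv - (v 1 + v 2 * z.im) * hz₂

theorem continuous_stereoCoord (ε : ℤˣ) :
    Continuous fun p : ℂ × EuclideanSpace ℝ (Fin 3) => stereoCoord ε p.1 p.2 := by
  unfold stereoCoord
  fun_prop

theorem conj_div_self_mul_neg_sq_mul_conj {u : ℂ} (hu : u ≠ 0) (z : Circle) :
    conj (u * (-z ^ 2 * conj u)) / (u * (-z ^ 2 * conj u)) = (z : ℂ) ^ (-4 : ℤ) := by
  have hu' : conj u ≠ 0 := by simpa using hu
  have hz := z.coe_ne_zero
  have hzz : conj (z : ℂ) = (z : ℂ)⁻¹ := by rw [← Circle.coe_inv_eq_conj, Circle.coe_inv]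
  simp only [map_mul, map_neg, map_pow, Complex.conj_conj, hzz]
  field_simp

theorem hairy_ball {V : Sphere2 → EuclideanSpace ℝ (Fin 3)} (hV : Continuous V)
    (htan : ∀ x : Sphere2, inner ℝ (x : EuclideanSpace ℝ (Fin 3)) (V x) = 0) : ∃ x, V x = 0 := by
  by_contra! hne
  let U (ε : ℤˣ) (z : ℂ) : ℂ := stereoCoord ε z (V (stereoPoint ε z))
  have hU (ε : ℤˣ) : Continuous (U ε) :=
    (continuous_stereoCoord ε).comp
      (continuous_id.prodMk (hV.comp (continuous_stereoPoint ε)))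
  have hU₀ (ε : ℤˣ) (z : ℂ) : U ε z ≠ 0 := fun h =>
    hne _ (eq_zero_of_stereoCoord_eq_zero (htan _) h)
  have hU₁ (z : Circle) : U (-1) z = -z ^ 2 * conj (U 1 z) := by
    simp only [U, stereoPoint_neg_one z.norm_coe]
    exact stereoCoord_neg_one z.norm_coe (htan _)
  let W : C(ℂ, Circle) :=
    ⟨fun z => Circle.ofConjDivSelf (U 1 z * U (-1) z) (mul_ne_zero (hU₀ 1 z) (hU₀ (-1) z)),
      Continuous.subtype_mk (by fun_prop (disch := simp [hU₀])) _⟩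
  obtain ⟨z, hz⟩ := exists_circle_ne_mul_zpow (n := -4) (by norm_num) W 1
  refine hz (Circle.ext ?_)
  rw [one_mul, Circle.coe_zpow, ← conj_div_self_mul_neg_sq_mul_conj (hU₀ 1 z) z, ← hU₁]
  rfl

/-- The maps `f, g : X → Sphere2` differ by a continuous family of rotations `x ↦ q x q⁻¹`,
parametrized by a nowhere vanishing quaternion-valued function on `X`. -/
def RotationEquivalent {X : Type*} [TopologicalSpace X] (f g : C(X, Sphere2)) : Prop :=
  ∃ Q : C(X, ℍ[ℝ]), ∀ x, Q x ≠ 0 ∧ SemiconjBy (Q x) (f x).toQuaternion (g x).toQuaternion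

section

variable {X : Type*} [TopologicalSpace X]

theorem RotationEquivalent.trans {f g k : C(X, Sphere2)} :
    RotationEquivalent f g → RotationEquivalent g k → RotationEquivalent f k := by
  rintro ⟨Q, hQ⟩ ⟨P, hP⟩
  exact ⟨P * Q, fun x => ⟨mul_ne_zero (hP x).1 (hQ x).1, (hP x).2.mul_left (hQ x).2⟩⟩

theorem dist_neg_self_sphere2 (x : Sphere2) : dist (-x) x = 2 := by
  rw [Subtype.dist_eq, dist_comm, dist_eq_norm]
  simp [← two_smul ℝ, norm_smul]

theorem rotationEquivalent_of_dist_lt_two {f g : C(X, Sphere2)} (h : ∀ x, dist (f x) (g x) < 2) :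
    RotationEquivalent f g := by
  have hcont := Sphere2.continuous_toQuaternion
  let Q : C(X, ℍ[ℝ]) := ⟨fun x => 1 - (g x).toQuaternion * 1 * (f x).toQuaternion, by fun_prop⟩
  refine ⟨Q, fun x => ⟨fun hQ => (h x).ne ?_, semiconjBy_sub_mul_mul
    (f x).toQuaternion_mul_self (g x).toQuaternion_mul_self 1⟩⟩
  have hfg : f x = -g x := Sphere2.toQuaternion_injective <| by
    have hmul : 1 = (g x).toQuaternion * (f x).toQuaternion := by simpa [Q, sub_eq_zero] using hQ
    rw [Sphere2.toQuaternion_neg]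
    calc (f x).toQuaternion
        = -((g x).toQuaternion * (g x).toQuaternion * (f x).toQuaternion) := by
          simp [Sphere2.toQuaternion_mul_self]
      _ = -(g x).toQuaternion := by rw [mul_assoc, ← hmul, mul_one]
  rw [hfg, dist_neg_self_sphere2]

theorem rotationEquivalent_of_homotopic [CompactSpace X] {f g : C(X, Sphere2)}
    (h : f.Homotopic g) : RotationEquivalent f g := by
  obtain ⟨H⟩ := h
  let r (s t : I) : Prop := RotationEquivalent (H.curry s) (H.curry t)
  have hr : IsTrans I r := ⟨fun _ _ _ => RotationEquivalent.trans⟩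
  have hloc (s : I) : ∀ᶠ t in 𝓝 s, r s t ∧ r t s := by
    filter_upwards [H.curry.continuous.tendsto s (ball_mem_nhds _ two_pos)] with t ht
    have hts (x : X) : dist (H.curry t x) (H.curry s x) < 2 :=
      (ContinuousMap.dist_apply_le_dist x).trans_lt ht
    have hst (x : X) : dist (H.curry s x) (H.curry t x) < 2 := by
      rw [dist_comm]; exact hts x
    exact ⟨rotationEquivalent_of_dist_lt_two hst, rotationEquivalent_of_dist_lt_two hts⟩
  have h01 : r 0 1 := PreconnectedSpace.induction₂' r hloc hr 0 1
  simpa only [r, ContinuousMap.Homotopy.curry_zero, ContinuousMap.Homotopy.curry_one] using h01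

end

theorem re_eq_zero_of_semiconjBy_neg {q : ℍ[ℝ]} {x : Sphere2}
    (h : SemiconjBy q x.toQuaternion (-x).toQuaternion) :
    q.re = 0 ∧ q.imI * x.1 0 + q.imJ * x.1 1 + q.imK * x.1 2 = 0 := by
  obtain ⟨hre, hI, hJ, hK⟩ := Quaternion.ext_iff.1 h.eq
  simp only [Quaternion.re_mul, Quaternion.imI_mul, Quaternion.imJ_mul, Quaternion.imK_mul,
    Sphere2.toQuaternion_neg, Quaternion.re_neg, Quaternion.imI_neg, Quaternion.imJ_neg,
    Quaternion.imK_neg, Sphere2.toQuaternion_re, Sphere2.toQuaternion_imI,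
    Sphere2.toQuaternion_imJ, Sphere2.toQuaternion_imK] at hre hI hJ hK
  refine ⟨?_, by linarith⟩
  calc q.re = q.re * (x.1 0 ^ 2 + x.1 1 ^ 2 + x.1 2 ^ 2) := by rw [x.sum_sq_eq_one, mul_one]
    _ = 0 := by linear_combination (x.1 0 * hI + x.1 1 * hJ + x.1 2 * hK) / 2

theorem not_homotopic_id_neg :
    ¬ (ContinuousMap.id Sphere2).Homotopic (Homeomorph.neg Sphere2 : C(Sphere2, Sphere2)) := by
  intro h
  obtain ⟨Q, hQ⟩ := rotationEquivalent_of_homotopic h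
  have htan (x : Sphere2) := re_eq_zero_of_semiconjBy_neg (hQ x).2
  have hI := Quaternion.continuous_imI
  have hJ := Quaternion.continuous_imJ
  have hK := Quaternion.continuous_imK
  obtain ⟨x, hx⟩ := hairy_ball (V := fun x => !₂[(Q x).imI, (Q x).imJ, (Q x).imK])
    (by fun_prop) fun x => by simpa [PiLp.inner_apply, Fin.sum_univ_three] using (htan x).2
  have hcoord (i : Fin 3) := congrArg (fun v : EuclideanSpace ℝ (Fin 3) => v i) hx
  exact (hQ x).1 (Quaternion.ext _ _ (htan x).1 (hcoord 0) (hcoord 1) (hcoord 2))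

theorem not_homotopic_id_sphereReflection :
    ¬ (ContinuousMap.id Sphere2).Homotopic (sphereReflection : C(Sphere2, Sphere2)) := fun hrefl =>
  not_homotopic_id_neg <|
    (isotopic_one_or_sphereReflection (Homeomorph.neg Sphere2)).elim
      (fun h => h.homotopic.symm) fun h => hrefl.trans h.homotopic.symm

theorem isotopic_one_of_homotopic_id {h : Sphere2 ≃ₜ Sphere2}
    (hh : (h : C(Sphere2, Sphere2)).Homotopic (ContinuousMap.id Sphere2)) : Isotopic h 1 :=
  (isotopic_one_or_sphereReflection h).resolve_right fun hrefl =>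
    not_homotopic_id_sphereReflection (hh.symm.trans hrefl.homotopic)

end SphereIsotopy

/-- Every homeomorphism of the 2-sphere (the unit sphere in `ℝ³`) that is homotopic
to the identity is isotopic to the identity. -/
theorem homeomorph_sphere_homotopic_to_id_isotopic_to_id
    (h : Homeomorph (Metric.sphere (0 : EuclideanSpace ℝ (Fin 3)) 1)
      (Metric.sphere (0 : EuclideanSpace ℝ (Fin 3)) 1))
    (H : I × (Metric.sphere (0 : EuclideanSpace ℝ (Fin 3)) 1) →
      Metric.sphere (0 : EuclideanSpace ℝ (Fin 3)) 1)
    (Hcont : Continuous H)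
    (H0 : ∀ p, H (0, p) = h p)
    (H1 : ∀ p, H (1, p) = p) :
    ∃ F : I × (Metric.sphere (0 : EuclideanSpace ℝ (Fin 3)) 1) →
        Metric.sphere (0 : EuclideanSpace ℝ (Fin 3)) 1, Continuous F ∧
      (∀ p, F (0, p) = h p) ∧
      (∀ p, F (1, p) = p) ∧
      (∀ t : I, IsHomeomorph fun p => F (t, p)) := by
  obtain ⟨F⟩ := SphereIsotopy.isotopic_one_of_homotopic_id ⟨⟨⟨H, Hcont⟩, H0, H1⟩⟩
  exact ⟨F, F.continuous, F.apply_zero, F.apply_one, F.prop⟩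
end

section
/- Every homeomorphism of the half-open annulus that is homotopic to the identity is isotopic to the identity: let A = (ℝ/ℤ) × [0,∞) and let h : A → A be a homeomorphism homotopic to the identity map (as continuous maps). Then there exists a continuous map F : [0,1] × A → A such that F(0,·) = h, F(1,·) = id, and F(t,·) : A → A is a homeomorphism for every t ∈ [0,1]. -/
open unitInterval
open ContinuousMap Metric Set
open scoped NNReal ENNReal

/-!
Let `h` be a self-homeomorphism of the annulus `S¹ × [0,∞)` homotopic to the identity.

A point is *labile* if the identity map can be deformed so as to miss it at all positive times.
Boundary points are labile, since one can push inwards; interior points are not, since a map of a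
planar disc that fixes the bounding circle hits the centre. So `h` preserves the boundary circle.

Cut the annulus at height `τ`, use `h` above the cut, shifted up by `τ`, and below the cut the map
`(θ, s) ↦ (g θ, s)`, where `g` is the restriction of `h` to the boundary. Letting `τ` run from `0`
to `∞` is an isotopy from `h` to `g × id`.

The circle homeomorphism `g` is homotopic to the identity, so it has the form `θ ↦ θ + D θ` with
`D` real valued, and `θ ↦ θ + (1 - t) D θ` is an isotopy from `g` to the identity.
-/

section Labile

variable {X Y : Type*} [TopologicalSpace X] [TopologicalSpace Y]

/-- A point is (homotopically) *labile*, after Borsuk, if the identity map can be deformed so as to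
miss the point at every positive time. Unlike in Borsuk's definition, the deformation is not
required to be small. -/
def IsLabile (x : X) : Prop :=
  ∃ K : C(I × X, X), (∀ y, K (0, y) = y) ∧ ∀ t y, 0 < t → K (t, y) ≠ x

theorem IsLabile.map {x : X} (hx : IsLabile x) (h : X ≃ₜ Y) : IsLabile (h x) := by
  obtain ⟨K, hK₀, hK⟩ := hx
  refine ⟨⟨fun q ↦ h (K (q.1, h.symm q.2)), by fun_prop⟩, fun y ↦ by simp [hK₀], ?_⟩
  exact fun t y ht hy ↦ hK t _ ht (h.injective hy)

theorem isLabile_homeomorph_apply_iff (h : X ≃ₜ Y) {x : X} : IsLabile (h x) ↔ IsLabile x :=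
  ⟨fun hx ↦ by simpa using hx.map h.symm, fun hx ↦ hx.map h⟩

theorem isLabile_mk_zero (x : X) : IsLabile ((x, 0) : X × ℝ≥0) := by
  refine ⟨⟨fun q ↦ (q.2.1, q.2.2 + toNNReal q.1), by fun_prop⟩, fun y ↦ by simp, ?_⟩
  intro t y ht hy
  have ht' : toNNReal t = 0 := (add_eq_zero.1 (congrArg Prod.snd hy)).2
  exact ht.ne' (Subtype.ext (congrArg NNReal.toReal ht'))

end Labile

theorem not_forall_exp_eq_mul_coe_circle (a : ℂ) (L : C(Circle, ℂ)) :
    ¬ ∀ z : Circle, Complex.exp (L z) = a * z := by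
  intro hL
  have hlin : (fun x : ℝ ↦ L (Circle.exp x)) = fun x : ℝ ↦ x * Complex.I + L 1 := by
    refine Complex.isCoveringMap_exp.eq_of_comp_eq (by fun_prop) (by fun_prop) ?_ 0 (by simp)
    funext x
    simp [hL, Complex.exp_add, mul_comm]
  have hturn := congrFun hlin (2 * Real.pi)
  simp [Real.pi_ne_zero] at hturn

theorem exists_mem_closedBall_eq_center {G : ℂ → ℂ} {c : ℂ} {r : ℝ} (hr : 0 ≤ r)
    (hG : ContinuousOn G (closedBall c r)) (hfix : ∀ z ∈ sphere c r, G z = z) :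
    ∃ z ∈ closedBall c r, G z = c := by
  by_contra! hne
  let ray : C(I × Circle, ℂ) := ⟨fun q ↦ c + q.1 * r * q.2, by fun_prop⟩
  have hray : ∀ q, ray q ∈ closedBall c r := fun q ↦ by
    simpa [ray, Circle.norm_coe, abs_of_nonneg, q.1.2.1, hr] using mul_le_of_le_one_left hr q.1.2.2
  let M : C(I × Circle, {z : ℂ // z ≠ 0}) :=
    ⟨fun q ↦ ⟨G (ray q) - c, sub_ne_zero.2 (hne _ (hray q))⟩,
      ((hG.comp_continuous ray.continuous hray).sub continuous_const).subtype_mk _⟩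
  have hGc : G c - c ≠ 0 := sub_ne_zero.2 (hne c (mem_closedBall_self hr))
  let L₀ : C(Circle, ℂ) := .const Circle (Complex.log (G c - c))
  have hM : ∀ z, M (0, z) = ⟨Complex.exp (L₀ z), Complex.exp_ne_zero _⟩ := fun z ↦
    Subtype.ext <| by simp [M, L₀, ray, Complex.exp_log hGc]
  let L : C(I × Circle, ℂ) := Complex.isCoveringMap_exp.liftHomotopy M L₀ hM
  have hL : ∀ q, Complex.exp (L q) = G (ray q) - c := fun q ↦
    congrArg Subtype.val (congrFun (Complex.isCoveringMap_exp.liftHomotopy_lifts M L₀ hM) q)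
  refine not_forall_exp_eq_mul_coe_circle r ⟨fun z ↦ L (1, z), by fun_prop⟩ fun z ↦ ?_
  have hsphere : ray (1, z) ∈ sphere c r := by
    simp [ray, Circle.norm_coe, hr]
  calc
    Complex.exp (L (1, z)) = ray (1, z) - c := by rw [hL, hfix _ hsphere]
    _ = r * z := by simp [ray]

theorem not_isLabile_of_planar_section {X : Type*} [TopologicalSpace X] {E : X → ℂ} {f : ℂ → X}
    {x : X} {r : ℝ} (hr : 0 < r) (hE : Continuous E) (hEx : ∀ y, E y = E x → y = x)
    (hf : ContinuousOn f (closedBall (E x) r)) (hEf : ∀ z ∈ closedBall (E x) r, E (f z) = z) :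
    ¬ IsLabile x := by
  rintro ⟨K, hK₀, hK⟩
  let time : C(ℂ, I) := ⟨fun z ↦ projIcc 0 1 zero_le_one (r - dist z (E x)), by fun_prop⟩
  have htime {z : ℂ} : time z = 0 ↔ r ≤ dist z (E x) := projIcc_eq_zero.trans sub_nonpos
  obtain ⟨z, hz, hzx⟩ : ∃ z ∈ closedBall (E x) r, E (K (time z, f z)) = E x := by
    refine exists_mem_closedBall_eq_center hr.le ?_ fun z hz ↦ ?_
    · exact (hE.comp K.continuous).comp_continuousOn (time.continuous.continuousOn.prodMk hf)
    · rw [htime.2 (mem_sphere.1 hz).ge, hK₀, hEf z (sphere_subset_closedBall hz)]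
  have hKx : K (time z, f z) = x := hEx _ hzx
  have hz₀ : time z = 0 := by
    by_contra hpos
    exact hK _ _ (unitInterval.pos_iff_ne_zero.2 hpos) hKx
  have hzE : z = E x := by rw [← hEf z hz, ← hKx, hz₀, hK₀]
  exact hr.not_ge (by simpa [hzE] using htime.1 hz₀)

section Annulus

variable {p : ℝ}

/-- The embedding of the half-open annulus in the plane as `{z | 1 ≤ ‖z‖}`. -/
noncomputable def annulusToPlane (q : AddCircle p × ℝ≥0) : ℂ := (1 + q.2 : ℝ) * q.1.toCircle

theorem continuous_annulusToPlane : Continuous (annulusToPlane (p := p)) := by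
  have := AddCircle.continuous_toCircle (T := p)
  unfold annulusToPlane
  fun_prop

theorem norm_annulusToPlane (q : AddCircle p × ℝ≥0) : ‖annulusToPlane q‖ = 1 + q.2 := by
  rw [annulusToPlane, norm_mul, Circle.norm_coe, mul_one, Complex.norm_of_nonneg (by positivity)]

variable [Fact (0 < p)]

theorem annulusToPlane_injective : Function.Injective (annulusToPlane (p := p)) := by
  intro q q' h
  have hsnd : (q.2 : ℝ) = q'.2 := by
    simpa [norm_annulusToPlane] using congrArg norm h
  have hne : ((1 + q'.2 : ℝ) : ℂ) ≠ 0 := by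
    exact_mod_cast (by positivity : (0 : ℝ) < 1 + q'.2).ne'
  have hfst : q.1.toCircle = q'.1.toCircle := by
    rw [annulusToPlane, annulusToPlane, hsnd] at h
    exact Subtype.ext (mul_left_cancel₀ hne h)
  exact Prod.ext (AddCircle.injective_toCircle (Fact.out : 0 < p).ne' hfst) (NNReal.eq hsnd)

variable (p) in
/-- The inverse of `annulusToPlane` on `{z | 1 ≤ ‖z‖}`. It projects the points of the open unit disc
other than `0` radially to the boundary circle, and it is discontinuous at `0`. -/
noncomputable def planeToAnnulus (z : ℂ) : AddCircle p × ℝ≥0 :=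
  ((AddCircle.homeomorphCircle (Fact.out : 0 < p).ne').symm (Circle.exp z.arg),
    (‖z‖ - 1).toNNReal)

theorem continuousAt_planeToAnnulus {z : ℂ} (hz : z ≠ 0) : ContinuousAt (planeToAnnulus p) z := by
  have hexp : ContinuousAt (fun z : ℂ ↦ Circle.exp z.arg) z :=
    AddCircle.homeomorphCircle'.continuous.continuousAt.comp (Complex.continuousAt_arg_coe_angle hz)
  exact ((Homeomorph.continuous _).continuousAt.comp hexp).prodMk (by fun_prop)

theorem annulusToPlane_planeToAnnulus {z : ℂ} (hz : 1 ≤ ‖z‖) :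
    annulusToPlane (planeToAnnulus p z) = z := by
  have hp : p ≠ 0 := (Fact.out : 0 < p).ne'
  have hnorm : 1 + ((‖z‖ - 1).toNNReal : ℝ) = ‖z‖ := by
    rw [Real.coe_toNNReal _ (sub_nonneg.2 hz), add_sub_cancel]
  rw [annulusToPlane, planeToAnnulus, hnorm, ← AddCircle.homeomorphCircle_apply hp,
    Homeomorph.apply_symm_apply, Circle.coe_exp, Complex.norm_mul_exp_arg_mul_I]

theorem isLabile_annulus_iff {q : AddCircle p × ℝ≥0} : IsLabile q ↔ q.2 = 0 := by
  refine ⟨fun hq ↦ ?_, fun hq ↦ ?_⟩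
  · by_contra hne
    have hnorm : ∀ z ∈ closedBall (annulusToPlane q) q.2, 1 ≤ ‖z‖ := fun z hz ↦ by
      have := norm_sub_norm_le (annulusToPlane q) z
      rw [norm_annulusToPlane, ← dist_eq_norm'] at this
      linarith [mem_closedBall.1 hz]
    refine not_isLabile_of_planar_section (r := q.2) (f := planeToAnnulus p) (by positivity)
      continuous_annulusToPlane (fun _ h ↦ annulusToPlane_injective h) (fun z hz ↦ ?_)
      (fun z hz ↦ annulusToPlane_planeToAnnulus (hnorm z hz)) hq
    have hz₀ : z ≠ 0 := norm_pos_iff.1 (one_pos.trans_le (hnorm z hz))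
    exact (continuousAt_planeToAnnulus hz₀).continuousWithinAt
  · rw [← Prod.mk.eta (p := q), hq]
    exact isLabile_mk_zero q.1

end Annulus

section Collar

/-- The truncation `min s τ`. The level `τ = ∞` is allowed, and the result is again finite. -/
noncomputable def truncateAt (τ : ℝ≥0∞) (s : ℝ≥0) : ℝ≥0 := (min (s : ℝ≥0∞) τ).toNNReal

theorem coe_truncateAt (τ : ℝ≥0∞) (s : ℝ≥0) : (truncateAt τ s : ℝ≥0∞) = min (s : ℝ≥0∞) τ :=
  ENNReal.coe_toNNReal (min_lt_of_left_lt ENNReal.coe_lt_top).ne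

theorem continuous_truncateAt : Continuous fun q : ℝ≥0∞ × ℝ≥0 ↦ truncateAt q.1 q.2 := by
  refine ENNReal.continuousOn_toNNReal.comp_continuous (by fun_prop) fun q ↦ ?_
  exact (min_lt_of_left_lt ENNReal.coe_lt_top).ne

@[simp] theorem truncateAt_zero (s : ℝ≥0) : truncateAt 0 s = 0 := by simp [truncateAt]

@[simp] theorem truncateAt_top (s : ℝ≥0) : truncateAt ∞ s = s := by simp [truncateAt]

theorem truncateAt_le (τ : ℝ≥0∞) (s : ℝ≥0) : truncateAt τ s ≤ s := by
  rw [← ENNReal.coe_le_coe, coe_truncateAt]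
  exact min_le_left _ _

theorem truncateAt_add_truncateAt {τ : ℝ≥0∞} {s v : ℝ≥0} (hv : truncateAt τ s = s → v = 0) :
    truncateAt τ (v + truncateAt τ s) = truncateAt τ s := by
  rw [← ENNReal.coe_inj, coe_truncateAt, ENNReal.coe_add, coe_truncateAt]
  rcases le_total (s : ℝ≥0∞) τ with hs | hs
  · have : v = 0 := hv (by rw [← ENNReal.coe_inj, coe_truncateAt, min_eq_left hs])
    simp [this]
  · simp [hs]

section Push

variable {X Y Z : Type*}

/-- The stage `τ` of the Alexander trick for a map `h` of half-open cylinders: above height `τ` it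
is `h` conjugated by the upward shift by `τ`, and below height `τ` it is constant in the height,
equal to the boundary values of `h`, with the height added. Both cases are covered by shifting by
`min s τ` at a point of height `s`. -/
noncomputable def alexanderPush (h : X × ℝ≥0 → Y × ℝ≥0) (τ : ℝ≥0∞) (p : X × ℝ≥0) : Y × ℝ≥0 :=
  let q := h (p.1, p.2 - truncateAt τ p.2)
  (q.1, q.2 + truncateAt τ p.2)

@[simp] theorem alexanderPush_zero (h : X × ℝ≥0 → Y × ℝ≥0) : alexanderPush h 0 = h := by
  ext p <;> simp [alexanderPush]

theorem alexanderPush_top {h : X × ℝ≥0 → Y × ℝ≥0} (hb : ∀ x, (h (x, 0)).2 = 0) (p : X × ℝ≥0) :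
    alexanderPush h ∞ p = ((h (p.1, 0)).1, p.2) := by
  simp [alexanderPush, hb]

@[simp] theorem alexanderPush_id (τ : ℝ≥0∞) : alexanderPush (id : X × ℝ≥0 → X × ℝ≥0) τ = id := by
  ext p <;> simp [alexanderPush, tsub_add_cancel_of_le (truncateAt_le τ p.2)]

theorem alexanderPush_comp (k : Y × ℝ≥0 → Z × ℝ≥0) {h : X × ℝ≥0 → Y × ℝ≥0}
    (hb : ∀ x, (h (x, 0)).2 = 0) (τ : ℝ≥0∞) :
    alexanderPush k τ ∘ alexanderPush h τ = alexanderPush (k ∘ h) τ := by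
  funext ⟨x, s⟩
  have hdepth : truncateAt τ ((h (x, s - truncateAt τ s)).2 + truncateAt τ s) = truncateAt τ s :=
    truncateAt_add_truncateAt fun hs ↦ by rw [hs, tsub_self, hb]
  simp [alexanderPush, hdepth]

end Push

variable {X Y Z : Type*} [TopologicalSpace X] [TopologicalSpace Y] [TopologicalSpace Z]

theorem continuous_alexanderPush {h : X × ℝ≥0 → Y × ℝ≥0} (hh : Continuous h) :
    Continuous fun q : ℝ≥0∞ × (X × ℝ≥0) ↦ alexanderPush h q.1 q.2 := by
  have := continuous_truncateAt
  unfold alexanderPush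
  fun_prop

/-- The restriction of a boundary-preserving homeomorphism of half-open cylinders to a
homeomorphism between the boundaries `X × {0}` and `Y × {0}`, identified with `X` and `Y`. -/
def boundaryHomeomorph (h : X × ℝ≥0 ≃ₜ Y × ℝ≥0) (hb : ∀ p, (h p).2 = 0 ↔ p.2 = 0) :
    X ≃ₜ Y where
  toFun x := (h (x, 0)).1
  invFun y := (h.symm (y, 0)).1
  left_inv x := by
    have : ((h (x, 0)).1, (0 : ℝ≥0)) = h (x, 0) := Prod.ext rfl ((hb _).2 rfl).symm
    simp [this]
  right_inv y := by
    have : ((h.symm (y, 0)).1, (0 : ℝ≥0)) = h.symm (y, 0) :=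
      Prod.ext rfl ((hb (h.symm (y, 0))).1 (by simp)).symm
    simp [this]
  continuous_toFun := by fun_prop
  continuous_invFun := by fun_prop

theorem isHomeomorph_alexanderPush (h : X × ℝ≥0 ≃ₜ Y × ℝ≥0) (hb : ∀ p, (h p).2 = 0 ↔ p.2 = 0)
    (τ : ℝ≥0∞) : IsHomeomorph (alexanderPush h τ) := by
  refine isHomeomorph_iff_exists_inverse.2
    ⟨(continuous_alexanderPush h.continuous).comp (.prodMk_right τ), alexanderPush h.symm τ,
      fun p ↦ ?_, fun p ↦ ?_, (continuous_alexanderPush h.symm.continuous).comp (.prodMk_right τ)⟩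
  · have hcomp := alexanderPush_comp h.symm (fun x ↦ (hb (x, 0)).2 rfl) τ
    rw [h.symm_comp_self, alexanderPush_id] at hcomp
    exact congrFun hcomp p
  · have hcomp := alexanderPush_comp h (h := h.symm) (fun y ↦ (hb (h.symm (y, 0))).1 (by simp)) τ
    rw [h.self_comp_symm, alexanderPush_id] at hcomp
    exact congrFun hcomp p

theorem homotopicWith_boundaryHomeomorph_prodMap_id (h : X × ℝ≥0 ≃ₜ Y × ℝ≥0)
    (hb : ∀ p, (h p).2 = 0 ↔ p.2 = 0) :
    HomotopicWith (h : C(X × ℝ≥0, Y × ℝ≥0))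
      ((boundaryHomeomorph h hb : C(X, Y)).prodMap (.id ℝ≥0)) (fun f ↦ IsHomeomorph f) := by
  let depth : I ≃o ℝ≥0∞ := ENNReal.orderIsoUnitIntervalBirational.symm
  refine ⟨⟨⟨⟨fun q ↦ alexanderPush h (depth q.1) q.2, ?_⟩, fun p ↦ ?_, fun p ↦ ?_⟩,
    fun t ↦ isHomeomorph_alexanderPush h hb (depth t)⟩⟩
  · have := depth.continuous
    exact (continuous_alexanderPush h.continuous).comp
      ((this.comp continuous_fst).prodMk continuous_snd)
  · have : depth 0 = 0 := depth.map_bot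
    simp [this]
  · have : depth 1 = ∞ := depth.map_top
    simp only [this]
    exact alexanderPush_top (fun x ↦ (hb (x, 0)).2 rfl) p

theorem homotopicWith_prodMap_id {f g : C(X, Y)}
    (hfg : HomotopicWith f g (fun k ↦ IsHomeomorph k)) :
    HomotopicWith (f.prodMap (.id Z)) (g.prodMap (.id Z)) (fun k ↦ IsHomeomorph k) := by
  obtain ⟨F⟩ := hfg
  refine ⟨⟨⟨⟨fun q ↦ (F (q.1, q.2.1), q.2.2), by fun_prop⟩, fun p ↦ ?_, fun p ↦ ?_⟩,
    fun t ↦ (F.prop t).prodMap .id⟩⟩ <;> simp [Prod.ext_iff]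

end Collar

section Circle

variable {p : ℝ}

theorem exists_eq_add_coe_of_homotopic {X : Type*} [TopologicalSpace X] {f g : C(X, AddCircle p)}
    (hfg : Homotopic f g) : ∃ D : C(X, ℝ), ∀ x, f x = g x + (D x : AddCircle p) := by
  obtain ⟨H⟩ := hfg.symm
  let M : C(I × X, AddCircle p) := ⟨fun q ↦ H q - g q.2, by fun_prop⟩
  have cov : IsCoveringMap ((↑) : ℝ → AddCircle p) := AddCircle.isCoveringMap_coe p
  have hM : ∀ x, M (0, x) = ((ContinuousMap.const X (0 : ℝ) x : ℝ) : AddCircle p) := by simp [M]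
  let L : C(I × X, ℝ) := cov.liftHomotopy M (.const X 0) hM
  have hL : ∀ q, (L q : AddCircle p) = H q - g q.2 := congrFun (cov.liftHomotopy_lifts M _ hM)
  exact ⟨⟨fun x ↦ L (1, x), by fun_prop⟩, fun x ↦ by simp [hL]⟩

theorem surjective_add_coe [Fact (0 < p)] (D : C(AddCircle p, ℝ)) :
    Function.Surjective fun θ ↦ θ + (D θ : AddCircle p) := by
  intro b
  have hlift : Continuous fun x : ℝ ↦ x + D x := by fun_prop
  obtain ⟨y, hy, rfl⟩ : b ∈ ((↑) : ℝ → AddCircle p) '' Icc (D 0) (D 0 + p) := by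
    rw [AddCircle.coe_image_Icc_eq]
    trivial
  have hy' : y ∈ Icc (0 + D (0 : ℝ)) (p + D (p : ℝ)) := by
    simpa [add_comm, AddCircle.coe_period] using hy
  obtain ⟨x, hx⟩ := intermediate_value_univ 0 p hlift hy'
  exact ⟨x, by simp [← hx]⟩

theorem strictMono_add_of_injective_add_coe [Fact (0 < p)] {D : C(AddCircle p, ℝ)}
    (hD : Function.Injective fun θ ↦ θ + (D θ : AddCircle p)) :
    StrictMono fun x : ℝ ↦ x + D x := by
  have hlift : Continuous fun x : ℝ ↦ x + D x := by fun_prop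
  have hlift_inj : Function.Injective fun x : ℝ ↦ x + D x := by
    intro x y hxy
    have hcoe : (x : AddCircle p) = y := hD (by simpa using congrArg ((↑) : ℝ → AddCircle p) hxy)
    simpa [hcoe] using hxy
  refine (hlift.strictMono_of_inj hlift_inj).resolve_right fun hanti ↦ ?_
  have hp : 0 < p := Fact.out
  have hlt := hanti hp
  simp only [AddCircle.coe_period, AddCircle.coe_zero] at hlt
  linarith

theorem injective_add_coe_of_strictMono_add {D : AddCircle p → ℝ}
    (hD : StrictMono fun x : ℝ ↦ x + D x) :
    Function.Injective fun θ ↦ θ + (D θ : AddCircle p) := by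
  intro a b hab
  induction a using QuotientAddGroup.induction_on with | H x => ?_
  induction b using QuotientAddGroup.induction_on with | H y => ?_
  obtain ⟨n, hn⟩ : ∃ n : ℤ, n • p = x + D x - (y + D y) := by
    rw [← AddCircle.coe_eq_zero_iff, AddCircle.coe_sub, sub_eq_zero]
    simpa using hab
  have hy : ((y + n • p : ℝ) : AddCircle p) = y := by simp
  have hx : x = y + n • p := by
    apply hD.injective
    simp only [hy]
    linarith
  rw [hx]
  exact hy

theorem isHomeomorph_add_coe [Fact (0 < p)] {D : C(AddCircle p, ℝ)}
    (hD : StrictMono fun x : ℝ ↦ x + D x) : IsHomeomorph fun θ ↦ θ + (D θ : AddCircle p) := by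
  have := AddCircle.continuous_mk' p
  exact isHomeomorph_iff_continuous_bijective.2
    ⟨by fun_prop, injective_add_coe_of_strictMono_add hD, surjective_add_coe D⟩

theorem strictMono_add_mul {R : Type*} [CommRing R] [LinearOrder R] [IsStrictOrderedRing R]
    {u : R → R} (hu : StrictMono fun x ↦ x + u x) {c : R} (hc₀ : 0 ≤ c) (hc₁ : c ≤ 1) :
    StrictMono fun x ↦ x + c * u x := by
  rcases hc₁.eq_or_lt with rfl | hc
  · simpa using hu
  intro x y hxy
  calc
    x + c * u x = (1 - c) * x + c * (x + u x) := by ring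
    _ < (1 - c) * y + c * (y + u y) :=
      add_lt_add_of_lt_of_le (mul_lt_mul_of_pos_left hxy (sub_pos.2 hc))
        (mul_le_mul_of_nonneg_left (hu hxy).le hc₀)
    _ = y + c * u y := by ring

theorem homotopicWith_isHomeomorph_id_of_homotopic_id [Fact (0 < p)]
    {g : C(AddCircle p, AddCircle p)} (hg : Function.Injective g) (hid : Homotopic g (.id _)) :
    HomotopicWith g (.id _) (fun f ↦ IsHomeomorph f) := by
  obtain ⟨D, hD⟩ := exists_eq_add_coe_of_homotopic hid
  simp only [id_apply] at hD
  have hmono : StrictMono fun x : ℝ ↦ x + D x :=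
    strictMono_add_of_injective_add_coe (by simpa only [← hD] using hg)
  have := AddCircle.continuous_mk' p
  refine ⟨⟨⟨⟨fun q ↦ q.2 + (((σ q.1 : ℝ) * D q.2 : ℝ) : AddCircle p), by fun_prop⟩,
    fun θ ↦ by simp [hD], fun θ ↦ by simp⟩, fun t ↦ ?_⟩⟩
  exact isHomeomorph_add_coe (D := (σ t : ℝ) • D)
    (strictMono_add_mul hmono (σ t).2.1 (σ t).2.2)

end Circle

theorem homeomorph_half_open_annulus_homotopic_to_id_isotopic_to_id_general {p : ℝ} [Fact (0 < p)]
    (h : AddCircle p × ℝ≥0 ≃ₜ AddCircle p × ℝ≥0)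
    (hid : Homotopic (h : C(AddCircle p × ℝ≥0, AddCircle p × ℝ≥0)) (.id _)) :
    HomotopicWith (h : C(AddCircle p × ℝ≥0, AddCircle p × ℝ≥0)) (.id _)
      (fun f ↦ IsHomeomorph f) := by
  have hb (q : AddCircle p × ℝ≥0) : (h q).2 = 0 ↔ q.2 = 0 := by
    rw [← isLabile_annulus_iff, isLabile_homeomorph_apply_iff, isLabile_annulus_iff]
  let g : C(AddCircle p, AddCircle p) := boundaryHomeomorph h hb
  have hgid : Homotopic g (.id _) :=
    .comp (.refl .fst) (hid.comp (.refl ((ContinuousMap.id _).prodMk (.const _ 0))))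
  have hg : HomotopicWith g (.id _) (fun f ↦ IsHomeomorph f) :=
    homotopicWith_isHomeomorph_id_of_homotopic_id (boundaryHomeomorph h hb).injective hgid
  exact (homotopicWith_boundaryHomeomorph_prodMap_id h hb).trans (homotopicWith_prodMap_id hg)

/-- Every homeomorphism of the half-open annulus `(ℝ/ℤ) × [0,∞)` that is homotopic to
the identity is isotopic to the identity. -/
theorem homeomorph_half_open_annulus_homotopic_to_id_isotopic_to_id
    (h : Homeomorph (AddCircle (1 : ℝ) × Set.Ici (0 : ℝ))
      (AddCircle (1 : ℝ) × Set.Ici (0 : ℝ)))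
    (H : I × (AddCircle (1 : ℝ) × Set.Ici (0 : ℝ)) →
      AddCircle (1 : ℝ) × Set.Ici (0 : ℝ))
    (Hcont : Continuous H)
    (H0 : ∀ p, H (0, p) = h p)
    (H1 : ∀ p, H (1, p) = p) :
    ∃ F : I × (AddCircle (1 : ℝ) × Set.Ici (0 : ℝ)) →
        AddCircle (1 : ℝ) × Set.Ici (0 : ℝ), Continuous F ∧
      (∀ p, F (0, p) = h p) ∧
      (∀ p, F (1, p) = p) ∧
      (∀ t : I, IsHomeomorph fun p => F (t, p)) := by
  obtain ⟨F⟩ := homeomorph_half_open_annulus_homotopic_to_id_isotopic_to_id_general (p := 1) h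
    ⟨⟨⟨H, Hcont⟩, H0, H1⟩⟩
  exact ⟨F, F.continuous, F.apply_zero, F.apply_one, F.prop⟩
end

section
/- Let P = ℝ × [0,∞) be the closed half-plane and let h : P → P be a homeomorphism for which there exists a homotopy H : [0,1] × P → P from h to the identity (H(0,·) = h, H(1,·) = id) such that H is a proper map and H(t, ·) maps the boundary ℝ × {0} into ℝ × {0} for every t ∈ [0,1]. Then h is isotopic to the identity: there exists a continuous map F : [0,1] × P → P such that F(0,·) = h, F(1,·) = id, and F(t,·) : P → P is a homeomorphism for every t ∈ [0,1]. -/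
open unitInterval

open Filter Function Topology

open scoped NNReal

/-! By properness, the homotopy restricted to the boundary line avoids any given point near the
ends, so the boundary restriction `g` of `h` is an increasing homeomorphism of `ℝ`, and the
straight-line homotopy from `g` to the identity is an isotopy. Dividing `h` by `g × id` leaves a
homeomorphism `k` which fixes the boundary pointwise. Such a `k` is isotopic to the identity by a
version of Alexander's trick: conjugate `k` by the upward translation by `s`, put the identity below
height `s`, and let `s` tend to infinity. -/

/-- `f` and `g` are joined by an isotopy, that is, by a homotopy through homeomorphisms. As in the
usual notion for homeomorphisms, no continuity in `t` of the inverses is required. -/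
def Isotopic {X Y : Type*} [TopologicalSpace X] [TopologicalSpace Y] (f g : X → Y) : Prop :=
  ∃ F : I × X → Y, Continuous F ∧ (∀ p, F (0, p) = f p) ∧ (∀ p, F (1, p) = g p) ∧
    ∀ t : I, IsHomeomorph fun p => F (t, p)

namespace Isotopic

variable {X Y Z W : Type*} [TopologicalSpace X] [TopologicalSpace Y] [TopologicalSpace Z]
  [TopologicalSpace W]

theorem refl {f : X → Y} (hf : IsHomeomorph f) : Isotopic f f :=
  ⟨fun q => f q.2, hf.continuous.comp continuous_snd, fun _ => rfl, fun _ => rfl, fun _ => hf⟩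

theorem comp {f f' : Y → Z} {g g' : X → Y} (hf : Isotopic f f') (hg : Isotopic g g') :
    Isotopic (f ∘ g) (f' ∘ g') := by
  obtain ⟨F, F_cont, F_zero, F_one, F_homeo⟩ := hf
  obtain ⟨G, G_cont, G_zero, G_one, G_homeo⟩ := hg
  refine ⟨fun q => F (q.1, G q), by fun_prop, fun p => ?_, fun p => ?_,
    fun t => (F_homeo t).comp (G_homeo t)⟩
  · simp only [F_zero, G_zero, comp_apply]
  · simp only [F_one, G_one, comp_apply]

theorem prodMap {f f' : X → Y} {g g' : Z → W} (hf : Isotopic f f') (hg : Isotopic g g') :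
    Isotopic (Prod.map f g) (Prod.map f' g') := by
  obtain ⟨F, F_cont, F_zero, F_one, F_homeo⟩ := hf
  obtain ⟨G, G_cont, G_zero, G_one, G_homeo⟩ := hg
  refine ⟨fun q => (F (q.1, q.2.1), G (q.1, q.2.2)), by fun_prop, fun p => ?_, fun p => ?_,
    fun t => (F_homeo t).prodMap (G_homeo t)⟩
  · simp only [F_zero, G_zero, Prod.map]
  · simp only [F_one, G_one, Prod.map]

end Isotopic

section InfiniteTime

/-- The increasing homeomorphism `t ↦ t / (1 - t)` of `[0, 1)` onto `[0, ∞)`, by which an isotopy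
over `[0, ∞)` is reparametrized. The value at `t = 1` is the junk value `0`. -/
noncomputable def odds (t : I) : ℝ≥0 :=
  toNNReal t / toNNReal (σ t)

theorem odds_zero : odds 0 = 0 := by
  simp [odds]

theorem toNNReal_symm_pos {t : I} (ht : t ≠ 1) : 0 < toNNReal (σ t) :=
  unitInterval.pos_iff_ne_zero.2 fun h => ht (symm_eq_zero.1 h)

theorem continuousAt_odds {t : I} (ht : t ≠ 1) : ContinuousAt odds t :=
  toNNReal_continuous.continuousAt.div₀
    (toNNReal_continuous.comp continuous_symm).continuousAt (toNNReal_symm_pos ht).ne'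

theorem tendsto_odds : Tendsto odds (𝓝[≠] 1) atTop := by
  have h_one : Tendsto toNNReal (𝓝[≠] 1) (𝓝 1) :=
    toNNReal_continuous.continuousWithinAt.tendsto.trans_eq (by simp)
  have h_symm : Tendsto (fun t => toNNReal (σ t)) (𝓝[≠] 1) (𝓝[>] 0) := by
    refine tendsto_nhdsWithin_iff.2 ⟨?_, ?_⟩
    · refine ((toNNReal_continuous.comp continuous_symm).tendsto' 1 0 ?_).mono_left
        nhdsWithin_le_nhds
      simp
    · filter_upwards [self_mem_nhdsWithin] with t ht using toNNReal_symm_pos ht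
  unfold odds
  simp only [div_eq_mul_inv]
  exact h_one.pos_mul_atTop one_pos (tendsto_inv_nhdsGT_zero.comp h_symm)

variable {X Y : Type*} [TopologicalSpace X] [TopologicalSpace Y]

theorem Isotopic.of_tendsto {Φ : ℝ≥0 × X → Y} {g : X → Y} (hΦ : Continuous Φ)
    (hΦ_homeo : ∀ s, IsHomeomorph fun p => Φ (s, p)) (hg : IsHomeomorph g)
    (hlim : ∀ p, Tendsto Φ (atTop ×ˢ 𝓝 p) (𝓝 (g p))) :
    Isotopic (fun p => Φ (0, p)) g := by
  classical
  refine ⟨fun q => if q.1 = 1 then g q.2 else Φ (odds q.1, q.2), ?_, fun p => ?_,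
    fun p => if_pos rfl, fun t => ?_⟩
  · refine continuous_iff_continuousAt.2 fun ⟨t, p⟩ => ?_
    rcases eq_or_ne t 1 with rfl | ht
    · have hlim_one : Tendsto (fun q : I × X => g q.2) (𝓝 (1, p)) (𝓝 (g p)) :=
        (hg.continuous.comp continuous_snd).tendsto (1, p)
      have hlim_lt : Tendsto (fun q : I × X => Φ (odds q.1, q.2))
          (𝓝 (1, p) ⊓ 𝓟 {q | q.1 ≠ 1}) (𝓝 (g p)) :=
        (hlim p).comp <| Tendsto.prodMk
          (tendsto_odds.comp (continuousWithinAt_fst.tendsto_nhdsWithin fun _ => id))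
          (continuousAt_snd.mono_left inf_le_left)
      rw [ContinuousAt, if_pos rfl]
      exact (hlim_one.mono_left inf_le_left).if hlim_lt
    · have hne : ∀ᶠ q : I × X in 𝓝 (t, p), q.1 ≠ 1 :=
        continuousAt_fst.eventually_ne ht
      have hcont : ContinuousAt (fun q : I × X => Φ (odds q.1, q.2)) (t, p) :=
        hΦ.continuousAt.comp <|
          (ContinuousAt.comp (continuousAt_odds ht) continuousAt_fst).prodMk continuousAt_snd
      exact hcont.congr (hne.mono fun q hq => (if_neg hq).symm)
  · simp [odds_zero]
  · rcases eq_or_ne t 1 with rfl | ht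
    · simpa using hg
    · simpa [ht] using hΦ_homeo (odds t)

end InfiniteTime

section AlexanderTrick

variable {X : Type*}

/-- The conjugate of `k` by the upward translation by `s`, on the heights at least `s`. Below
height `s` it is the identity, provided that `k` fixes the boundary `X × {0}` pointwise;
truncated subtraction is what allows a single formula. -/
noncomputable def conjShift (k : X × ℝ≥0 → X × ℝ≥0) (s : ℝ≥0) (p : X × ℝ≥0) : X × ℝ≥0 :=
  ((k (p.1, p.2 - s)).1, (k (p.1, p.2 - s)).2 + min p.2 s)

theorem conjShift_zero (k : X × ℝ≥0 → X × ℝ≥0) : conjShift k 0 = k := by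
  ext p <;> simp [conjShift]

theorem conjShift_add (k : X × ℝ≥0 → X × ℝ≥0) (s : ℝ≥0) (x : X) (y : ℝ≥0) :
    conjShift k s (x, y + s) = ((k (x, y)).1, (k (x, y)).2 + s) := by
  simp [conjShift]

theorem conjShift_of_le {k : X × ℝ≥0 → X × ℝ≥0} (hk : ∀ x, k (x, 0) = (x, 0)) {s : ℝ≥0}
    {p : X × ℝ≥0} (hp : p.2 ≤ s) : conjShift k s p = p := by
  simp [conjShift, tsub_eq_zero_of_le hp, hk, hp]

theorem leftInverse_conjShift {k l : X × ℝ≥0 → X × ℝ≥0} (hlk : LeftInverse l k)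
    (hk : ∀ x, k (x, 0) = (x, 0)) (s : ℝ≥0) :
    LeftInverse (conjShift l s) (conjShift k s) := by
  have hl : ∀ x, l (x, 0) = (x, 0) := fun x => by simpa only [hk] using hlk (x, 0)
  rintro ⟨x, y⟩
  rcases le_total y s with hy | hy
  · rw [conjShift_of_le hk hy, conjShift_of_le hl hy]
  · obtain ⟨z, rfl⟩ : ∃ z, y = z + s := ⟨y - s, (tsub_add_cancel_of_le hy).symm⟩
    rw [conjShift_add, conjShift_add, Prod.mk.eta, hlk]

variable [TopologicalSpace X]

theorem continuous_conjShift {k : X × ℝ≥0 → X × ℝ≥0} (hk : Continuous k) :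
    Continuous fun q : ℝ≥0 × X × ℝ≥0 => conjShift k q.1 q.2 := by
  unfold conjShift
  fun_prop

theorem isHomeomorph_conjShift (k : X × ℝ≥0 ≃ₜ X × ℝ≥0) (hk : ∀ x, k (x, 0) = (x, 0)) (s : ℝ≥0) :
    IsHomeomorph (conjShift k s) := by
  have hk_symm : ∀ x, k.symm (x, 0) = (x, 0) := fun x => k.symm_apply_eq.2 (hk x).symm
  exact Homeomorph.isHomeomorph
    { toFun := conjShift k s
      invFun := conjShift k.symm s
      left_inv := leftInverse_conjShift k.left_inv hk s
      right_inv := leftInverse_conjShift k.right_inv hk_symm s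
      continuous_toFun := (continuous_conjShift k.continuous).comp (.prodMk_right s)
      continuous_invFun := (continuous_conjShift k.symm.continuous).comp (.prodMk_right s) }

theorem tendsto_conjShift {k : X × ℝ≥0 → X × ℝ≥0} (hk : ∀ x, k (x, 0) = (x, 0)) (p : X × ℝ≥0) :
    Tendsto (fun q : ℝ≥0 × X × ℝ≥0 => conjShift k q.1 q.2) (atTop ×ˢ 𝓝 p) (𝓝 p) := by
  have h_below : ∀ᶠ q : ℝ≥0 × X × ℝ≥0 in atTop ×ˢ 𝓝 p, q.2.2 ≤ q.1 := by
    filter_upwards [(eventually_ge_atTop (p.2 + 1)).prod_mk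
      (continuousAt_snd.eventually_lt_const (lt_add_one p.2))] with q hq
    exact hq.2.le.trans hq.1
  exact tendsto_snd.congr' (h_below.mono fun q hq => (conjShift_of_le hk hq).symm)

theorem isotopic_id_of_fixes_boundary (k : X × ℝ≥0 ≃ₜ X × ℝ≥0) (hk : ∀ x, k (x, 0) = (x, 0)) :
    Isotopic k id := by
  simpa only [conjShift_zero] using
    Isotopic.of_tendsto (continuous_conjShift k.continuous) (isHomeomorph_conjShift k hk) .id
      (tendsto_conjShift hk)

end AlexanderTrick

section HalfSpace

variable {X Y : Type*} [TopologicalSpace X] [TopologicalSpace Y]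

theorem isotopic_prodMap_of_boundary (h : X × ℝ≥0 ≃ₜ Y × ℝ≥0) (g : X ≃ₜ Y)
    (hg : ∀ x, h (x, 0) = (g x, 0)) {g' : X → Y} (hgg' : Isotopic g g') :
    Isotopic h (Prod.map g' id) := by
  let G : X × ℝ≥0 ≃ₜ Y × ℝ≥0 := g.prodCongr (.refl ℝ≥0)
  have quotient_isotopic : Isotopic (G.symm.trans h) id :=
    isotopic_id_of_fixes_boundary _ fun y => by simp [G, hg]
  have prod_isotopic : Isotopic G (Prod.map g' id) := hgg'.prodMap (.refl .id)
  have h_eq : h = G.symm.trans h ∘ G := funext fun p => by simp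
  rw [h_eq]
  exact quotient_isotopic.comp prod_isotopic

theorem isProperMap_boundary {T : Type*} [TopologicalSpace T] {H : T × X × ℝ≥0 → Y × ℝ≥0}
    (hH : IsProperMap H) (hbd : ∀ t x, (H (t, x, 0)).2 = 0) :
    IsProperMap fun q : T × X => (H (q.1, q.2, 0)).1 := by
  have h_incl : IsClosedEmbedding fun x : X => (x, (0 : ℝ≥0)) :=
    ⟨isEmbedding_prodMkLeft 0, by
      have range_eq : Set.range (fun x : X => (x, (0 : ℝ≥0))) = Set.univ ×ˢ {0} := by
        ext
        simp [Prod.ext_iff, eq_comm]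
      exact range_eq ▸ isClosed_univ.prod isClosed_singleton⟩
  have h_comp : IsProperMap fun q : T × X => H (q.1, q.2, 0) :=
    hH.comp (IsClosedEmbedding.id.prodMap h_incl).isProperMap
  refine isProperMap_of_comp_of_inj (g := fun y : Y => (y, (0 : ℝ≥0))) h_comp.continuous.fst
    (by fun_prop) ?_ (Prod.mk_left_injective 0)
  convert h_comp using 2 with q
  exact Prod.ext rfl (hbd q.1 q.2).symm

end HalfSpace

section Line

/-- Near the end of `α`, a proper homotopy `K` avoids any given value `c`, so that its slices stay
on the same side of `c`. -/
theorem tendsto_atTop_of_isProperMap {T α β : Type*} [TopologicalSpace T] [PreconnectedSpace T]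
    [LinearOrder α] [TopologicalSpace α] [ClosedIciTopology α] [Nonempty α] [NoMaxOrder α]
    [LinearOrder β] [TopologicalSpace β] [OrderClosedTopology β] {K : T × α → β}
    (hK : IsProperMap K) {t₁ : T} (h₁ : Tendsto (fun x => K (t₁, x)) atTop atTop) (t₀ : T) :
    Tendsto (fun x => K (t₀, x)) atTop atTop := by
  refine tendsto_atTop.2 fun c => ?_
  obtain ⟨R, hR⟩ : BddAbove (Prod.snd '' (K ⁻¹' {c})) :=
    ((hK.isCompact_preimage isCompact_singleton).image continuous_snd).bddAbove
  filter_upwards [eventually_gt_atTop R, h₁.eventually_ge_atTop c] with x hRx hcx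
  by_contra! hlt
  obtain ⟨t, ht⟩ : c ∈ Set.range fun t => K (t, x) :=
    mem_range_of_exists_le_of_exists_ge (hK.continuous.comp (.prodMk_left x)) ⟨t₀, hlt.le⟩ ⟨t₁, hcx⟩
  exact hRx.not_ge (hR ⟨(t, x), ht, rfl⟩)

theorem strictMono_of_injective_of_tendsto_atTop {α β : Type*} [ConditionallyCompleteLinearOrder α]
    [TopologicalSpace α] [OrderTopology α] [DenselyOrdered α] [Nonempty α] [LinearOrder β]
    [TopologicalSpace β] [OrderClosedTopology β] [NoMaxOrder β] {g : α → β} (hg : Continuous g)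
    (hinj : Injective g) (htop : Tendsto g atTop atTop) : StrictMono g := by
  refine (hg.strictMono_of_inj hinj).resolve_right fun hanti => ?_
  obtain ⟨a⟩ := ‹Nonempty α›
  obtain ⟨x, hx, hgx⟩ := ((eventually_ge_atTop a).and (htop.eventually_gt_atTop (g a))).exists
  exact hgx.not_ge (hanti.antitone hx)

theorem exists_orderIso_of_isProperMap {T : Type*} [TopologicalSpace T] [PreconnectedSpace T]
    {K : T × ℝ → ℝ} (hK : IsProperMap K) {t₀ t₁ : T}
    (hinj : Injective fun x => K (t₀, x)) (h₁ : ∀ x, K (t₁, x) = x) :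
    ∃ g : ℝ ≃o ℝ, ∀ x, g x = K (t₀, x) := by
  have hcont : Continuous fun x => K (t₀, x) := hK.continuous.comp (.prodMk_right t₀)
  have htop : Tendsto (fun x => K (t₀, x)) atTop atTop :=
    tendsto_atTop_of_isProperMap hK (t₁ := t₁) (tendsto_id.congr fun x => (h₁ x).symm) t₀
  have hbot : Tendsto (fun x => K (t₀, x)) atBot atBot :=
    tendsto_atTop_of_isProperMap (α := ℝᵒᵈ) (β := ℝᵒᵈ) hK (t₁ := t₁)
      (tendsto_id.congr fun x => (h₁ x).symm) t₀
  exact ⟨(strictMono_of_injective_of_tendsto_atTop hcont hinj htop).orderIsoOfSurjective _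
    (hcont.surjective htop hbot), fun _ => rfl⟩

theorem surjective_lineMap_of_orderIso (f g : ℝ ≃o ℝ) {t : ℝ} (ht : t ∈ I) :
    Surjective fun x => AffineMap.lineMap (f x) (g x) t := fun c => by
  have hcont : Continuous fun x => AffineMap.lineMap (f x) (g x) t :=
    f.continuous.lineMap g.continuous continuous_const
  refine mem_range_of_exists_le_of_exists_ge hcont ⟨min (f.symm c) (g.symm c), ?_⟩
    ⟨max (f.symm c) (g.symm c), ?_⟩
  · calc AffineMap.lineMap (f _) (g _) t
        ≤ AffineMap.lineMap c c t := lineMap_mono_endpoints (f.le_symm_apply.1 (min_le_left _ _))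
          (g.le_symm_apply.1 (min_le_right _ _)) ht.1 ht.2
      _ = c := AffineMap.lineMap_same_apply c t
  · calc c = AffineMap.lineMap c c t := (AffineMap.lineMap_same_apply c t).symm
      _ ≤ AffineMap.lineMap (f _) (g _) t :=
        lineMap_mono_endpoints (f.symm_apply_le.1 (le_max_left _ _))
          (g.symm_apply_le.1 (le_max_right _ _)) ht.1 ht.2

theorem isotopic_of_orderIso (f g : ℝ ≃o ℝ) : Isotopic f g := by
  refine ⟨fun q => AffineMap.lineMap (f q.2) (g q.2) (q.1 : ℝ), ?_, fun p => ?_, fun p => ?_,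
    fun t => ?_⟩
  · exact (f.continuous.comp continuous_snd).lineMap (g.continuous.comp continuous_snd)
      (continuous_subtype_val.comp continuous_fst)
  · simp
  · simp
  · have hmono : StrictMono fun x => AffineMap.lineMap (f x) (g x) (t : ℝ) := fun x y hxy =>
      lineMap_strict_mono_endpoints (f.strictMono hxy) (g.strictMono hxy) t.2.1 t.2.2
    exact (hmono.orderIsoOfSurjective _
      (surjective_lineMap_of_orderIso f g t.2)).toHomeomorph.isHomeomorph

end Line

theorem homeomorph_half_plane_properly_homotopic_to_id_isotopic_to_id_general
    (h : ℝ × ℝ≥0 ≃ₜ ℝ × ℝ≥0) (K : I × ℝ → ℝ) (Kproper : IsProperMap K)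
    (K0 : ∀ x, h (x, 0) = (K (0, x), 0)) (K1 : ∀ x, K (1, x) = x) : Isotopic h id := by
  have hinj : Injective fun x => K (0, x) := fun x y hxy =>
    Prod.mk_left_injective 0 (h.injective (by simpa only [K0, Prod.mk.injEq, and_true] using hxy))
  obtain ⟨g, hg⟩ := exists_orderIso_of_isProperMap Kproper hinj K1
  have hg_id : Isotopic g id := isotopic_of_orderIso g (.refl ℝ)
  simpa only [Prod.map_id] using
    isotopic_prodMap_of_boundary h g.toHomeomorph (fun x => by simp [K0, hg]) hg_id

/-- Every homeomorphism of the closed half-plane `ℝ × [0,∞)` that is properly homotopic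
to the identity rel boundary is isotopic to the identity. -/
theorem homeomorph_half_plane_properly_homotopic_to_id_isotopic_to_id
    (h : Homeomorph (ℝ × Set.Ici (0 : ℝ)) (ℝ × Set.Ici (0 : ℝ)))
    (H : I × (ℝ × Set.Ici (0 : ℝ)) → ℝ × Set.Ici (0 : ℝ))
    (Hcont : Continuous H)
    (H0 : ∀ p, H (0, p) = h p)
    (H1 : ∀ p, H (1, p) = p)
    (Hproper : IsProperMap H)
    (Hbd : ∀ (t : I) (p : ℝ × Set.Ici (0 : ℝ)),
      (p.2 : ℝ) = 0 → ((H (t, p)).2 : ℝ) = 0) :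
    ∃ F : I × (ℝ × Set.Ici (0 : ℝ)) → ℝ × Set.Ici (0 : ℝ), Continuous F ∧
      (∀ p, F (0, p) = h p) ∧
      (∀ p, F (1, p) = p) ∧
      (∀ t : I, IsHomeomorph fun p => F (t, p)) := by
  -- `ℝ≥0` unfolds to the subtype `Set.Ici 0`, so that the two half-planes agree definitionally.
  have hbd : ∀ t x, (H (t, x, (0 : ℝ≥0))).2 = (0 : ℝ≥0) := fun t x =>
    Subtype.ext (Hbd t (x, (0 : ℝ≥0)) rfl)
  exact homeomorph_half_plane_properly_homotopic_to_id_isotopic_to_id_general h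
    (fun q => (H (q.1, q.2, (0 : ℝ≥0))).1) (isProperMap_boundary Hproper hbd)
    (fun x => (H0 (x, (0 : ℝ≥0))).symm.trans (Prod.ext rfl (hbd 0 x)))
    (fun x => congrArg Prod.fst (H1 (x, (0 : ℝ≥0))))
end
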